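/- arXiv:1107.1077 — 6 statements merged into one kernel-verified Lean document; each statement's English description precedes it below -/
import Mathlib

section
/- Let D ≥ 1 be a natural number and set M = C(D + 3, 3) − 1. For any finite point sets U₁, …, U_M ⊆ ℝ³ there exists a nonzero polynomial f ∈ ℝ[x,y,z] of total degree at most D such that for every i = 1, …, M, at most |U_i|/2 points of U_i satisfy f > 0 and at most |U_i|/2 points of U_i satisfy f < 0. -/
/-!
The polynomial statement is the ham sandwich theorem for finite families of vectors in `ℝ^(M+1)` and
hyperplanes through the origin, applied to the vectors of all monomials of degree at most `D`
evaluated at the given points (`ham_sandwich_finset`, `exists_monomials`).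

The linear statement is proved without the Borsuk-Ulam theorem, by a parity count. Let `M` families
of odd sizes be given in `ℝ^(M+1)`. A transversal `T` picks one vector from each family; it spans a
hyperplane, with equation `x ↦ det (x, v_T)`, and it is *balanced* if every family has as many
vectors on one side of this hyperplane as on the other. The number of balanced transversals modulo 2
does not change when the vectors move generically. Indeed the only relevant events are that `M`
vectors of a transversal and one further vector `p`, in the same family as some `w ∈ T`, become
dependent; then only the transversals `T` and `T' = T - w + p` can change status. At the critical
time both hyperplanes coincide, so, up to a global sign, both see the same signs at all other
points, and hence either both change status or neither does (`count_eq_of_wall`). A generic straight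
move of one vector meets such walls one at a time (`count_eq_of_segment`, `exists_move`). On the
moment curve, with the families on consecutive arcs, exactly one transversal is balanced, the one
consisting of the medians (`count_moment`). So every configuration can be approximated by one with a
balanced transversal, and compactness of the sphere of linear forms gives the result in general.
-/

open scoped Classical

namespace HamSandwich

/-- The index set of all points, where the `i`-th family has `m i` points. -/
abbrev Pt {M : ℕ} (m : Fin M → ℕ) := Σ i, Fin (m i)

/-- A transversal: the choice of one point from each family. -/
abbrev Tr {M : ℕ} (m : Fin M → ℕ) := ∀ i, Fin (m i)

/-- A configuration of vectors in `ℝ^(M+1)` indexed by the points. -/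
abbrev Config {M : ℕ} (m : Fin M → ℕ) := Pt m → Fin (M + 1) → ℝ

/-! ### Transversals and orientations -/

variable {M : ℕ} {m : Fin M → ℕ}

/-- The `M + 1` points given by a transversal together with one further point `e.2`, which is put
in front. -/
def enc (e : Tr m × Pt m) : Fin (M + 1) → Pt m := Fin.cons e.2 (fun i => ⟨i, e.1 i⟩)

/-- The determinant of the vectors in `enc e`: the value at the point `e.2` of the equation of the
hyperplane spanned by the transversal `e.1`. -/
noncomputable def chi (v : Config m) (e : Tr m × Pt m) : ℝ :=
  Matrix.detRowAlternating (v ∘ enc e)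

/-- The further point does not belong to the transversal. -/
def Valid (e : Tr m × Pt m) : Prop := e.2.2 ≠ e.1 e.2.1

/-- Exchange the further point with the point of the transversal in the same family. This is the only
other way to write the set of points of `enc e` as a transversal and a further point. -/
def swapEnc (e : Tr m × Pt m) : Tr m × Pt m :=
  (Function.update e.1 e.2.1 e.2.2, ⟨e.2.1, e.1 e.2.1⟩)

/-- The transversal `T` is balanced: each family has as many points on the positive side of the
hyperplane spanned by `T` as on the negative side. -/
noncomputable def bal (v : Config m) (T : Tr m) : Prop :=
  ∀ i, ∑ j, (SignType.sign (chi v (T, ⟨i, j⟩)) : ℤ) = 0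

/-- The number of balanced transversals modulo 2. -/
noncomputable def count (v : Config m) : ZMod 2 := ∑ T : Tr m, if bal v T then 1 else 0

@[simp] lemma enc_zero (e : Tr m × Pt m) : enc e 0 = e.2 := rfl

@[simp] lemma enc_succ (e : Tr m × Pt m) (i : Fin M) : enc e i.succ = ⟨i, e.1 i⟩ := rfl

lemma Valid.enc_injective {e : Tr m × Pt m} (h : Valid e) : Function.Injective (enc e) := by
  intro a b
  refine Fin.cases ?_ (fun a => ?_) a <;> refine Fin.cases ?_ (fun b => ?_) b <;>
    simp only [enc_zero, enc_succ]
  · simp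
  · intro hh
    exfalso; apply h; rw [hh]
  · intro hh
    exfalso; apply h; rw [← hh]
  · intro hh
    rw [(Sigma.mk.inj_iff.1 hh).1]

lemma chi_of_not_valid (v : Config m) {e : Tr m × Pt m} (h : ¬ Valid e) : chi v e = 0 := by
  have h' : e.2.2 = e.1 e.2.1 := not_not.1 h
  refine AlternatingMap.map_eq_zero_of_eq _ _ (i := 0) (j := e.2.1.succ) ?_ (Fin.succ_ne_zero _).symm
  simp [← h']

lemma swapEnc_valid {e : Tr m × Pt m} (h : Valid e) : Valid (swapEnc e) := by
  simpa [Valid, swapEnc] using Ne.symm h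

@[simp] lemma swapEnc_swapEnc (e : Tr m × Pt m) : swapEnc (swapEnc e) = e := by
  obtain ⟨T, i, j⟩ := e
  simp [swapEnc]

lemma chi_swapEnc (v : Config m) (e : Tr m × Pt m) : chi v (swapEnc e) = - chi v e := by
  have : v ∘ enc (swapEnc e) = (v ∘ enc e) ∘ Equiv.swap 0 e.2.1.succ := by
    funext a
    obtain ⟨T, i, j⟩ := e
    refine Fin.cases ?_ (fun k => ?_) a
    · simp [swapEnc]
    · by_cases hk : k = i
      · subst hk; simp [swapEnc]
      · rw [Function.comp_apply, Function.comp_apply, Equiv.swap_apply_of_ne_of_ne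
          (Fin.succ_ne_zero _) (by simpa using hk)]
        simp [swapEnc, hk]
  rw [chi, this, AlternatingMap.map_swap _ _ (Fin.succ_ne_zero _).symm, chi]

lemma eq_or_eq_swapEnc {e e' : Tr m × Pt m} (h : Valid e) (h' : Valid e')
    (hr : Set.range (enc e) = Set.range (enc e')) : e' = e ∨ e' = swapEnc e := by
  obtain ⟨T, p⟩ := e
  obtain ⟨T', p'⟩ := e'
  have key : ∀ (T : Tr m) (p q : Pt m), q ∈ Set.range (enc (T, p)) ↔ q = p ∨ q.2 = T q.1 := by
    rintro T p ⟨k, l⟩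
    constructor
    · rintro ⟨a, ha⟩
      revert ha
      refine Fin.cases ?_ (fun b => ?_) a
      · intro ha; exact Or.inl ha.symm
      · intro ha
        right
        rw [← ha]; rfl
    · rintro (ha | ha)
      · exact ⟨0, ha.symm⟩
      · exact ⟨k.succ, by simp at ha; simp [ha]⟩
  have hk : ∀ q : Pt m, (q = p ∨ q.2 = T q.1) ↔ (q = p' ∨ q.2 = T' q.1) := fun q => by
    rw [← key, ← key, hr]
  have hT : ∀ k, (⟨k, T' k⟩ : Pt m) = p ∨ T' k = T k := fun k => (hk ⟨k, T' k⟩).2 (Or.inr rfl)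
  simp only [Valid] at h h'
  rcases (hk p').2 (Or.inl rfl) with h1 | h1
  · left
    subst h1
    congr 1
    funext k
    rcases hT k with h2 | h2
    · subst h2; simp at h'
    · exact h2
  · right
    have h2 : (⟨p'.1, T' p'.1⟩ : Pt m) = p := by
      refine (hT p'.1).resolve_right fun h3 => h' (h1.trans h3.symm)
    subst h2
    obtain ⟨i, j⟩ := p'
    simp only [swapEnc, Prod.mk.injEq] at *
    refine ⟨?_, by rw [h1]⟩
    funext k
    by_cases hki : k = i
    · subst hki; simp
    · rw [Function.update_of_ne hki]
      refine (hT k).resolve_left fun h3 => hki (Sigma.mk.inj_iff.1 h3).1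

/-! ### Crossing a wall -/

/-- The equation `x ↦ det (x, v_T)` of the hyperplane spanned by the transversal `T`. -/
noncomputable def trForm (v : Config m) (T : Tr m) : (Fin (M + 1) → ℝ) →ₗ[ℝ] ℝ :=
  (Matrix.detRowAlternating (n := Fin (M + 1)) (R := ℝ)).toMultilinearMap.toLinearMap
    (Fin.cons 0 fun i => v ⟨i, T i⟩) 0

lemma trForm_apply (v : Config m) (T : Tr m) (p : Pt m) : trForm v T (v p) = chi v (T, p) := by
  have : v ∘ enc (T, p) = Function.update (Fin.cons 0 fun i => v ⟨i, T i⟩) 0 (v p) := by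
    funext a
    refine Fin.cases ?_ (fun k => ?_) a <;> simp
  rw [chi, this]
  rfl

/-- On the wall `chi v e = 0` the two transversals in `enc e` span the same hyperplane. A third point
of the family, which exists since `3 ≤ m i`, shows that neither equation vanishes identically. -/
lemma proportional (hm : ∀ i, 3 ≤ m i) (v : Config m) (e : Tr m × Pt m)
    (h0 : chi v e = 0)
    (h : ∀ e', Valid e' → e' ≠ e → e' ≠ swapEnc e → chi v e' ≠ 0) :
    ∃ c : ℝ, c ≠ 0 ∧ ∀ q, chi v ((swapEnc e).1, q) = c * chi v (e.1, q) := by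
  obtain ⟨T, i, j⟩ := e
  obtain ⟨j', hj'⟩ : ∃ j' : Fin (m i), j' ∉ ({T i, j} : Finset (Fin (m i))) := by
    by_contra! hcon
    have h1 := Finset.card_le_card (fun x _ => hcon x : Finset.univ ⊆ ({T i, j} : Finset (Fin (m i))))
    have h2 := hm i
    have h3 : ({T i, j} : Finset (Fin (m i))).card ≤ 2 := Finset.card_le_two
    simp at h1
    omega
  simp only [Finset.mem_insert, Finset.mem_singleton, not_or] at hj'
  have hne : chi v (T, ⟨i, j'⟩) ≠ 0 := by
    apply h
    · simpa [Valid] using hj'.1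
    · simp [hj'.2]
    · simp [swapEnc, hj'.1]
  have hne' : chi v ((swapEnc (T, ⟨i, j⟩)).1, ⟨i, j'⟩) ≠ 0 := by
    apply h
    · simpa [Valid, swapEnc] using hj'.2
    · simp [hj'.2]
    · simp [swapEnc, hj'.1]
  set T' := (swapEnc (T, (⟨i, j⟩ : Pt m))).1 with hT'
  have hli : LinearIndependent ℝ (v ∘ enc (T, ⟨i, j'⟩)) :=
    Matrix.linearIndependent_rows_of_det_ne_zero (A := Matrix.of (v ∘ enc (T, ⟨i, j'⟩))) hne
  have hspan := hli.span_eq_top_of_card_eq_finrank' (by simp)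
  have hL : chi v (T, ⟨i, j'⟩) • trForm v T' = chi v (T', ⟨i, j'⟩) • trForm v T := by
    refine LinearMap.ext_on hspan ?_
    rintro _ ⟨a, rfl⟩
    refine Fin.cases ?_ (fun k => ?_) a
    · simp [trForm_apply, mul_comm]
    · have h1 : chi v (T, ⟨k, T k⟩) = 0 := chi_of_not_valid _ (by simp [Valid])
      have h2 : chi v (T', ⟨k, T k⟩) = 0 := by
        by_cases hk : k = i
        · subst hk
          have := chi_swapEnc v (T, ⟨k, j⟩)
          rw [h0, neg_zero] at this
          exact this
        · exact chi_of_not_valid _ (by simp [Valid, hT', swapEnc, hk])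
      simp [trForm_apply, h1, h2]
  refine ⟨chi v (T', ⟨i, j'⟩) / chi v (T, ⟨i, j'⟩), div_ne_zero hne' hne, fun q => ?_⟩
  have := congrArg (fun L => L (v q)) hL
  simp only [LinearMap.smul_apply, trForm_apply, smul_eq_mul] at this
  field_simp
  linarith

/-- If `v` has the same signs as the wall configuration `w` except at `e` and `swapEnc e`, then
whether `e.1` is balanced in `v` is decided by data of `w` and the sign of `chi v e`, which enters
only through the family of `e.2`. -/
lemma bal_iff_of_wall {v w : Config m} {e : Tr m × Pt m}
    (h : ∀ e', Valid e' → e' ≠ e → e' ≠ swapEnc e →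
      SignType.sign (chi v e') = SignType.sign (chi w e'))
    (hv : Valid e) (h0 : chi w e = 0) :
    bal v e.1 ↔ (∀ k ≠ e.2.1, ∑ j, (SignType.sign (chi w (e.1, ⟨k, j⟩)) : ℤ) = 0) ∧
      ∑ j, (SignType.sign (chi w (e.1, ⟨e.2.1, j⟩)) : ℤ) + SignType.sign (chi v e) = 0 := by
  obtain ⟨T, i, j⟩ := e
  have hs : ∀ q : Pt m, q ≠ ⟨i, j⟩ → 
      SignType.sign (chi v (T, q)) = SignType.sign (chi w (T, q)) := by
    intro q hq
    by_cases hval : Valid (T, q)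
    · refine h _ hval (by simpa using hq) ?_
      intro hh
      rw [hh] at hval
      have : T = Function.update T i j := congrArg Prod.fst hh
      have := congrFun this i
      simp [Valid] at this hv
      exact hv this.symm
    · rw [chi_of_not_valid _ hval, chi_of_not_valid _ hval]
  have h1 : ∀ k ≠ i, ∑ j, (SignType.sign (chi v (T, ⟨k, j⟩)) : ℤ) = 
      ∑ j, (SignType.sign (chi w (T, ⟨k, j⟩)) : ℤ) := by
    intro k hk
    refine Finset.sum_congr rfl fun l _ => ?_
    rw [hs]
    exact fun hh => hk (Sigma.mk.inj_iff.1 hh).1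
  have h2 : ∑ j, (SignType.sign (chi v (T, ⟨i, j⟩)) : ℤ) = 
      ∑ j, (SignType.sign (chi w (T, ⟨i, j⟩)) : ℤ) + SignType.sign (chi v (T, ⟨i, j⟩)) := by
    rw [← sub_eq_iff_eq_add', ← Finset.sum_sub_distrib, Finset.sum_eq_single j]
    · simp [h0]
    · intro l _ hl
      rw [hs, sub_self]
      simpa using hl
    · simp
  constructor
  · intro hb
    exact ⟨fun k hk => by rw [← h1 k hk]; exact hb k, by rw [← h2]; exact hb i⟩
  · rintro ⟨ha, hb⟩ k
    by_cases hk : k = i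
    · subst hk; rw [h2]; exact hb
    · rw [h1 k hk]; exact ha k hk

/-- If the signs at `v₀` and `v₁` agree with those on the wall `w`, except for `e` and `swapEnc e`,
where they are opposite for `v₀` and `v₁`, then the parity of the number of balanced transversals is
the same for `v₀` and `v₁`. -/
lemma count_eq_of_wall (hm : ∀ i, 3 ≤ m i) {v₀ v₁ w : Config m} {e : Tr m × Pt m} (hv : Valid e)
    (h0 : chi w e = 0)
    (hw : ∀ e', Valid e' → e' ≠ e → e' ≠ swapEnc e → chi w e' ≠ 0)
    (hs₀ : ∀ e', Valid e' → e' ≠ e → e' ≠ swapEnc e →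
      SignType.sign (chi v₀ e') = SignType.sign (chi w e'))
    (hs₁ : ∀ e', Valid e' → e' ≠ e → e' ≠ swapEnc e →
      SignType.sign (chi v₁ e') = SignType.sign (chi w e'))
    (hs : SignType.sign (chi v₁ e) = - SignType.sign (chi v₀ e)) :
    count v₀ = count v₁ := by
  have hne : e.1 ≠ (swapEnc e).1 := by
    intro hh
    have := congrFun hh e.2.1
    simp [swapEnc] at this
    exact hv this.symm
  -- only the two transversals contained in `enc e` can contribute to the difference
  rw [← sub_eq_zero, count, count, ← Finset.sum_sub_distrib,
    ← Finset.sum_subset (Finset.subset_univ {e.1, (swapEnc e).1}), Finset.sum_pair hne]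
  · have hcomm : ∀ e', (e' ≠ swapEnc e → e' ≠ swapEnc (swapEnc e) → e' ≠ e ∧ e' ≠ swapEnc e) := by
      intro e' h1 h2
      rw [swapEnc_swapEnc] at h2
      exact ⟨h2, h1⟩
    have a0 := bal_iff_of_wall hs₀ hv h0
    have a1 := bal_iff_of_wall hs₁ hv h0
    have h0' : chi w (swapEnc e) = 0 := by rw [chi_swapEnc, h0, neg_zero]
    have b0 := bal_iff_of_wall (e := swapEnc e) (fun e' hve h1 h2 => 
      hs₀ e' hve (hcomm e' h1 h2).1 h1) (swapEnc_valid hv) h0'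
    have b1 := bal_iff_of_wall (e := swapEnc e) (fun e' hve h1 h2 => 
      hs₁ e' hve (hcomm e' h1 h2).1 h1) (swapEnc_valid hv) h0'
    obtain ⟨c, hc, hprop⟩ := proportional hm w e h0 hw
    have hprop' : ∀ q, (SignType.sign (chi w ((swapEnc e).1, q)) : ℤ) = 
        (SignType.sign c : ℤ) * SignType.sign (chi w (e.1, q)) := by
      intro q
      rw [hprop, sign_mul]; push_cast; rfl
    simp only [hprop', ← Finset.mul_sum, chi_swapEnc, Left.sign_neg, hs] at a0 a1 b0 b1
    have hcs : (SignType.sign c : ℤ) = 1 ∨ (SignType.sign c : ℤ) = -1 := by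
      rcases lt_or_gt_of_ne hc with h | h
      · right; simp [h]
      · left; simp [h]
    have hfst : (swapEnc e).2.1 = e.2.1 := rfl
    rw [hfst] at b0 b1
    generalize (SignType.sign (chi v₀ e)) = s at *
    generalize (∑ j, (SignType.sign (chi w (e.1, ⟨e.2.1, j⟩)) : ℤ)) = A at *
    have hB : (∀ k ≠ e.2.1, (SignType.sign c : ℤ) * 
        ∑ j, (SignType.sign (chi w (e.1, ⟨k, j⟩)) : ℤ) = 0) ↔ 
        (∀ k ≠ e.2.1, ∑ j, (SignType.sign (chi w (e.1, ⟨k, j⟩)) : ℤ) = 0) := by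
      rcases hcs with h | h <;> simp [h]
    rw [hB] at b0 b1
    generalize (∀ k ≠ e.2.1, ∑ j, (SignType.sign (chi w (e.1, ⟨k, j⟩)) : ℤ) = 0) = B at *
    have hns : ((-s : SignType) : ℤ) = - (s : ℤ) := by cases s <;> rfl
    simp only [hns, neg_neg] at *
    generalize (s : ℤ) = s at *
    simp only [a0, a1, b0, b1]
    by_cases hB : B
    · simp only [hB, true_and]
      have hz' : ∀ x y : ZMod 2, x - y + (x - y) = 0 := by decide
      rcases hcs with h | h <;> rw [h]
      · simp only [one_mul]
        ring
      · have e1 : (-1 * A + -s = 0) ↔ (A + s = 0) := by omega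
        have e2 : (-1 * A + s = 0) ↔ (A + -s = 0) := by omega
        simp only [e1, e2]
        exact hz' _ _
    · simp [hB]
  · intro T _ hT
    simp only [Finset.mem_insert, Finset.mem_singleton, not_or] at hT
    have : ∀ q, SignType.sign (chi v₀ (T, q)) = SignType.sign (chi v₁ (T, q)) := by
      intro q
      by_cases hval : Valid (T, q)
      · have h1 : (T, q) ≠ e := fun hh => hT.1 (by rw [← hh])
        have h2 : (T, q) ≠ swapEnc e := fun hh => hT.2 (by rw [← hh])
        rw [hs₀ _ hval h1 h2, hs₁ _ hval h1 h2]
      · rw [chi_of_not_valid _ hval, chi_of_not_valid _ hval]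
    have hb : bal v₀ T ↔ bal v₁ T := by simp only [bal, this]
    simp only [hb, sub_self]

/-! ### Paths crossing one wall at a time -/

/-- An affine function with the same sign at `a` and `b` has this sign on `[a, b]`. -/
lemma sign_eq_of_affine {α β a b t : ℝ} (hat : a ≤ t) (htb : t ≤ b)
    (h : 0 < (α + β * a) * (α + β * b)) :
    SignType.sign (α + β * a) = SignType.sign (α + β * t) := by
  have key : (b - a) * (α + β * t) = (b - t) * (α + β * a) + (t - a) * (α + β * b) := by ring
  rcases pos_and_pos_or_neg_and_neg_of_mul_pos h with ⟨h1, h2⟩ | ⟨h1, h2⟩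
  · have : 0 < α + β * t := by
      by_contra! hc
      rcases eq_or_lt_of_le hat with rfl | hlt <;> nlinarith
    rw [sign_pos h1, sign_pos this]
  · have : α + β * t < 0 := by
      by_contra! hc
      rcases eq_or_lt_of_le hat with rfl | hlt <;> nlinarith
    rw [sign_neg h1, sign_neg this]

lemma affine_sign_change_right {α β a s b : ℝ} (h1 : a < s) (h2 : s < b)
    (h : (α + β * a) * (α + β * s) < 0) : (α + β * a) * (α + β * b) < 0 := by
  have h3 : (s - a) * ((α + β * a) * (α + β * b)) =
    (b - a) * ((α + β * a) * (α + β * s)) - (b - s) * (α + β * a) ^ 2 := by ring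
  have h4 : (s - a) * ((α + β * a) * (α + β * b)) < 0 := by
    rw [h3]
    nlinarith [mul_neg_of_pos_of_neg (sub_pos.2 (h1.trans h2)) h,
      mul_nonneg (sub_pos.2 h2).le (sq_nonneg (α + β * a))]
  exact (pos_iff_neg_of_mul_neg h4).1 (sub_pos.2 h1)

lemma affine_sign_change_left {α β a s b : ℝ} (h1 : a < s) (h2 : s < b)
    (h : (α + β * s) * (α + β * b) < 0) : (α + β * a) * (α + β * b) < 0 := by
  have := affine_sign_change_right (α := α) (β := -β) (neg_lt_neg h2) (neg_lt_neg h1)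
    (by linarith)
  linarith

/-- Along a path on which all determinants are affine functions of time, and which is never on two
different walls at once, the count modulo 2 is the same at any two times off the walls. The induction
is on the number of determinants that change sign between the two times. -/
lemma count_eq_of_segment (hm : ∀ i, 3 ≤ m i) {V : ℝ → Config m}
    (hV : ∀ e, ∃ α β : ℝ, ∀ t, chi (V t) e = α + β * t)
    (hgen : ∀ t e e', Valid e → Valid e' → chi (V t) e = 0 → chi (V t) e' = 0 →
      e' = e ∨ e' = swapEnc e) (n : ℕ) :
    ∀ a b, a < b → (∀ e, Valid e → chi (V a) e ≠ 0) → (∀ e, Valid e → chi (V b) e ≠ 0) →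
      (Finset.univ.filter fun e => chi (V a) e * chi (V b) e < 0).card < n →
      count (V a) = count (V b) := by
  choose α β hV using hV
  induction n with
  | zero => intro a b _ _ _ h; simp at h
  | succ n ih =>
  intro a b hab ha hb hcard
  have hval : ∀ {e s t}, chi (V s) e * chi (V t) e < 0 → Valid e := by
    intro e s t he
    by_contra hcon
    simp [chi_of_not_valid _ hcon] at he
  -- a sign change between `a` and `b` forces a root strictly in between
  have hroot : ∀ e, chi (V a) e * chi (V b) e < 0 → ∃ t, a < t ∧ t < b ∧ chi (V t) e = 0 := by
    intro e he
    rw [hV, hV] at he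
    have hβ : β e ≠ 0 := by
      intro h0
      rw [h0] at he
      nlinarith [sq_nonneg (α e)]
    refine ⟨-α e / β e, ?_, ?_, ?_⟩
    · by_contra! hcon
      have := mul_nonneg (sub_nonneg.2 hcon) (sub_nonneg.2 (hcon.trans hab.le))
      have h2 : (α e + β e * a) * (α e + β e * b) =
        β e ^ 2 * ((a - -α e / β e) * (b - -α e / β e)) := by field_simp; ring
      nlinarith [mul_nonneg (sq_nonneg (β e)) this]
    · by_contra! hcon
      have := mul_nonneg (sub_nonneg.2 hcon) (sub_nonneg.2 (hab.le.trans hcon))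
      have h2 : (α e + β e * a) * (α e + β e * b) =
        β e ^ 2 * ((-α e / β e - b) * (-α e / β e - a)) := by field_simp; ring
      nlinarith [mul_nonneg (sq_nonneg (β e)) this]
    · rw [hV]; field_simp; ring
  -- two sign changes at different times: cut the segment in between
  have hsplit : ∀ e₀ e₁ t₀ t₁, chi (V a) e₀ * chi (V b) e₀ < 0 → chi (V a) e₁ * chi (V b) e₁ < 0 →
      chi (V t₀) e₀ = 0 → chi (V t₁) e₁ = 0 → a < t₀ → t₀ < t₁ → t₁ < b →
      count (V a) = count (V b) := by
    intro e₀ e₁ t₀ t₁ hs₀ hs₁ hz₀ hz₁ hat htt htb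
    have hfin : {s | ∃ e, Valid e ∧ chi (V s) e = 0}.Finite := by
      have : {s | ∃ e, Valid e ∧ chi (V s) e = 0} ⊆
          ⋃ e : Tr m × Pt m, {s | Valid e ∧ chi (V s) e = 0} := by
        intro s hs; simpa using hs
      refine (Set.finite_iUnion fun e => Set.Subsingleton.finite ?_).subset this
      rintro x ⟨he, hx⟩ y ⟨_, hy⟩
      have h1 := ha e he
      rw [hV] at hx hy h1
      have h2 : β e * (x - y) = 0 := by linarith
      rcases mul_eq_zero.1 h2 with h3 | h3
      · rw [h3] at hx h1; exfalso; apply h1; linarith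
      · linarith
    obtain ⟨s, ⟨hs1, hs2⟩, hs3⟩ := ((Set.Ioo_infinite htt).sdiff hfin).nonempty
    have hgood : ∀ e, Valid e → chi (V s) e ≠ 0 := fun e he h0 => hs3 ⟨e, he, h0⟩
    trans count (V s)
    · refine ih a s (by linarith) ha hgood (lt_of_lt_of_le (Finset.card_lt_card ?_)
        (Nat.lt_succ_iff.1 hcard))
      refine (Finset.ssubset_iff_of_subset ?_).2 ⟨e₁, by simpa using hs₁, ?_⟩
      · intro e
        simp only [Finset.mem_filter, Finset.mem_univ, true_and, hV]
        exact affine_sign_change_right (by linarith) (by linarith)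
      · simp only [Finset.mem_filter, Finset.mem_univ, true_and, not_lt]
        rw [hV] at hz₁ ⊢
        rw [hV]
        have h2 : (α e₁ + β e₁ * a) * (α e₁ + β e₁ * s) = β e₁ ^ 2 * ((t₁ - a) * (t₁ - s)) := by
          linear_combination (α e₁ + β e₁ * (a + s - t₁)) * hz₁
        rw [h2]
        exact mul_nonneg (sq_nonneg _) (mul_nonneg (by linarith) (by linarith))
    · refine ih s b (by linarith) hgood hb (lt_of_lt_of_le (Finset.card_lt_card ?_)
        (Nat.lt_succ_iff.1 hcard))
      refine (Finset.ssubset_iff_of_subset ?_).2 ⟨e₀, by simpa using hs₀, ?_⟩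
      · intro e
        simp only [Finset.mem_filter, Finset.mem_univ, true_and, hV]
        exact affine_sign_change_left (by linarith) (by linarith)
      · simp only [Finset.mem_filter, Finset.mem_univ, true_and, not_lt]
        rw [hV] at hz₀ ⊢
        rw [hV]
        have h2 : (α e₀ + β e₀ * s) * (α e₀ + β e₀ * b) = β e₀ ^ 2 * ((s - t₀) * (b - t₀)) := by
          linear_combination (α e₀ + β e₀ * (s + b - t₀)) * hz₀
        rw [h2]
        exact mul_nonneg (sq_nonneg _) (mul_nonneg (by linarith) (by linarith))
  have hpos : ∀ e, Valid e → ¬ chi (V a) e * chi (V b) e < 0 →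
      0 < chi (V a) e * chi (V b) e := fun e he h =>
    lt_of_le_of_ne (not_lt.1 h) (mul_ne_zero (ha e he) (hb e he)).symm
  by_cases hex : ∃ e₀, chi (V a) e₀ * chi (V b) e₀ < 0
  · obtain ⟨e₀, he₀⟩ := hex
    obtain ⟨t₀, hat, htb, hz₀⟩ := hroot e₀ he₀
    by_cases hex' : ∃ e₁, chi (V a) e₁ * chi (V b) e₁ < 0 ∧ e₁ ≠ e₀ ∧ e₁ ≠ swapEnc e₀
    · obtain ⟨e₁, he₁, hne, hne'⟩ := hex'
      obtain ⟨t₁, hat', htb', hz₁⟩ := hroot e₁ he₁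
      rcases lt_trichotomy t₀ t₁ with h | h | h
      · exact hsplit e₀ e₁ t₀ t₁ he₀ he₁ hz₀ hz₁ hat h htb'
      · subst h
        rcases hgen _ e₀ e₁ (hval he₀) (hval he₁) hz₀ hz₁ with h | h
        · exact absurd h hne
        · exact absurd h hne'
      · exact hsplit e₁ e₀ t₁ t₀ he₁ he₀ hz₁ hz₀ hat' h htb
    · push Not at hex'
      have hp : ∀ e, Valid e → e ≠ e₀ → e ≠ swapEnc e₀ → 0 < chi (V a) e * chi (V b) e :=
        fun e he h1 h2 => hpos e he fun h => h2 (hex' e h h1)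
      refine count_eq_of_wall hm (w := V t₀) (hval he₀) hz₀ ?_ ?_ ?_ ?_
      · intro e he h1 h2 h0
        rcases hgen _ e₀ e (hval he₀) he hz₀ h0 with h | h
        · exact h1 h
        · exact h2 h
      · intro e he h1 h2
        have := hp e he h1 h2
        rw [hV, hV] at this ⊢
        exact sign_eq_of_affine hat.le htb.le this
      · intro e he h1 h2
        have := hp e he h1 h2
        rw [hV, hV] at this ⊢
        rw [← sign_eq_of_affine hat.le htb.le this]
        exact (sign_eq_of_affine hab.le le_rfl this).symm
      · rcases mul_neg_iff.1 he₀ with ⟨h1, h2⟩ | ⟨h1, h2⟩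
        · rw [sign_pos h1, sign_neg h2]
        · rw [sign_neg h1, sign_pos h2]; rfl
  · push Not at hex
    have : ∀ e, SignType.sign (chi (V a) e) = SignType.sign (chi (V b) e) := by
      intro e
      by_cases he : Valid e
      · have := hpos e he (not_lt.2 (hex e))
        rw [hV, hV] at this ⊢
        exact sign_eq_of_affine hab.le le_rfl this
      · rw [chi_of_not_valid _ he, chi_of_not_valid _ he]
    have hbal : ∀ T, bal (V a) T ↔ bal (V b) T := fun T => by simp only [bal, this]
    simp only [count, hbal]

/-! ### Moving one point -/

/-- General position: any `M + 1` vectors at different points are linearly independent. -/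
def GenPos (v : Config m) : Prop :=
  ∀ g : Fin (M + 1) → Pt m, Function.Injective g → Matrix.detRowAlternating (v ∘ g) ≠ 0

/-- Finitely many proper hyperplanes do not cover a nonempty open set. -/
lemma exists_forall_ne_zero {ι : Type*} [Finite ι] {n : ℕ} (L : ι → (Fin n → ℝ) →ₗ[ℝ] ℝ)
    (hL : ∀ i, L i ≠ 0) {O : Set (Fin n → ℝ)} (hO : IsOpen O) (hne : O.Nonempty) :
    ∃ y ∈ O, ∀ i, L i y ≠ 0 := by
  have hd : Dense (⋂ i, {y | L i y ≠ 0}) := by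
    refine dense_iInter_of_isOpen (fun i => ?_) fun i => ?_
    · exact isOpen_ne_fun (L i).continuous_of_finiteDimensional continuous_const
    · have h1 : (LinearMap.ker (L i)) ≠ ⊤ := by
        rw [Ne, LinearMap.ker_eq_top]; exact hL i
      have h2 : interior ((LinearMap.ker (L i) : Submodule ℝ (Fin n → ℝ)) : Set (Fin n → ℝ)) = ∅ := by
        by_contra hcon
        exact h1 (Submodule.eq_top_of_nonempty_interior' _ (Set.nonempty_iff_ne_empty.2 hcon))
      have h3 := interior_eq_empty_iff_dense_compl.1 h2
      exact h3
  obtain ⟨y, hy, hy'⟩ := hd.exists_mem_open hO hne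
  exact ⟨y, hy', fun i => by simpa using Set.mem_iInter.1 hy i⟩

/-- In general position, a point can be moved into any nonempty open set, keeping general position and
the count modulo 2. The new position `y` has to avoid the hyperplanes spanned by the other vectors,
and, for any two of these, their intersection with the segment from `v p` to `y` has to be empty. -/
lemma exists_move (hm : ∀ i, 3 ≤ m i) {v : Config m} (hv : GenPos v) (p : Pt m)
    {O : Set (Fin (M + 1) → ℝ)} (hO : IsOpen O) (hne : O.Nonempty) :
    ∃ y ∈ O, GenPos (Function.update v p y) ∧ count (Function.update v p y) = count v := by
  let G := {g : Fin (M + 1) → Pt m // Function.Injective g ∧ p ∈ Set.range g}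
  have hLex : ∀ g : G, ∃ L : (Fin (M + 1) → ℝ) →ₗ[ℝ] ℝ, ∀ y,
      L y = Matrix.detRowAlternating (Function.update v p y ∘ g.1) := by
    rintro ⟨g, hg, k, rfl⟩
    refine ⟨(Matrix.detRowAlternating (n := Fin (M + 1)) (R := ℝ)).toMultilinearMap.toLinearMap
      (v ∘ g) k, fun y => ?_⟩
    simp only [Function.update_comp_eq_of_injective _ hg]
    rfl
  choose L hL using hLex
  have hLv : ∀ g, L g (v p) ≠ 0 := by
    intro g
    rw [hL, Function.update_eq_self]
    exact hv g.1 g.2.1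
  -- `L g` is the equation of the hyperplane spanned by the points of `g` other than `p`; two of these
  -- have a common zero on the line through `v p` and `y` only if `K` vanishes at `y`
  let Q := {q : G × G // Set.range q.1.1 ≠ Set.range q.2.1}
  let K : Q → (Fin (M + 1) → ℝ) →ₗ[ℝ] ℝ := fun q =>
    L q.1.1 (v p) • L q.1.2 - L q.1.2 (v p) • L q.1.1
  have hK : ∀ q, K q ≠ 0 := by
    rintro ⟨⟨g₁, g₂⟩, hq⟩ h0
    obtain ⟨_, ⟨k₂, rfl⟩, hx⟩ : ∃ x ∈ Set.range g₂.1, x ∉ Set.range g₁.1 := by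
      by_contra! hcon
      refine hq (Set.eq_of_subset_of_ncard_le hcon ?_ (Set.toFinite _)).symm
      rw [← Set.image_univ, ← Set.image_univ, Set.ncard_image_of_injective _ g₁.2.1,
        Set.ncard_image_of_injective _ g₂.2.1]
    obtain ⟨kp, hkp⟩ := g₂.2.2
    obtain ⟨k₁, hk₁⟩ := g₁.2.2
    have hxp : g₂.1 k₂ ≠ p := fun h => hx (by rw [h]; exact g₁.2.2)
    have e2 : L g₂ (v (g₂.1 k₂)) = 0 := by
      rw [hL]
      refine AlternatingMap.map_eq_zero_of_eq _ _ (i := kp) (j := k₂) ?_ ?_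
      · simp [hkp, hxp]
      · rintro rfl; exact hxp hkp
    have e1 : L g₁ (v (g₂.1 k₂)) ≠ 0 := by
      rw [hL]
      have : Function.update v p (v (g₂.1 k₂)) ∘ g₁.1 =
          v ∘ Function.update g₁.1 k₁ (g₂.1 k₂) := by
        have := Function.update_comp_eq_of_injective v g₁.2.1 k₁ (v (g₂.1 k₂))
        rw [hk₁] at this
        rw [this, Function.comp_update]
      rw [this]
      refine hv _ fun a b hab => ?_
      by_cases ha : a = k₁ <;> by_cases hb : b = k₁
      · rw [ha, hb]
      · subst ha
        rw [Function.update_self, Function.update_of_ne hb] at hab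
        exact absurd ⟨b, hab.symm⟩ hx
      · subst hb
        rw [Function.update_self, Function.update_of_ne ha] at hab
        exact absurd ⟨a, hab⟩ hx
      · rw [Function.update_of_ne ha, Function.update_of_ne hb] at hab
        exact g₁.2.1 hab
    have := congrArg (fun l => l (v (g₂.1 k₂))) h0
    simp [K, e2, e1, hLv] at this
  obtain ⟨y, hyO, hy⟩ := exists_forall_ne_zero (Sum.elim L K)
    (by
      rintro (g | q)
      · intro h0
        apply hLv g
        rw [show L g = 0 from h0]; rfl
      · exact hK q) hO hne
  have hy1 : ∀ g, L g y ≠ 0 := fun g => hy (Sum.inl g)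
  have hy2 : ∀ q, K q y ≠ 0 := fun q => hy (Sum.inr q)
  have hnot : ∀ (g : Fin (M + 1) → Pt m) z, p ∉ Set.range g → Function.update v p z ∘ g = v ∘ g := by
    intro g z hg
    exact Function.update_comp_eq_of_notMem_range _ _ hg
  have hGP : GenPos (Function.update v p y) := by
    intro g hg
    by_cases hp : p ∈ Set.range g
    · rw [← hL ⟨g, hg, hp⟩]
      exact hy1 _
    · rw [hnot g y hp]
      exact hv g hg
  refine ⟨y, hyO, hGP, ?_⟩
  let V : ℝ → Config m := fun t => Function.update v p (v p + t • (y - v p))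
  have hV0 : V 0 = v := by simp [V]
  have hV1 : V 1 = Function.update v p y := by simp [V]
  have haff : ∀ e (he : Valid e) (hp : p ∈ Set.range (enc e)) t,
      chi (V t) e = L ⟨enc e, he.enc_injective, hp⟩ (v p) +
        (L ⟨enc e, he.enc_injective, hp⟩ y - L ⟨enc e, he.enc_injective, hp⟩ (v p)) * t := by
    intro e he hp t
    rw [chi, ← hL ⟨enc e, he.enc_injective, hp⟩]
    simp
    ring
  have hconst : ∀ e t, p ∉ Set.range (enc e) → chi (V t) e = chi v e := by
    intro e t hp
    rw [chi, hnot _ _ hp, chi]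
  have hmem : ∀ e t, Valid e → chi (V t) e = 0 → p ∈ Set.range (enc e) := by
    intro e t he h0
    by_contra hp
    rw [hconst e t hp] at h0
    exact hv _ he.enc_injective h0
  rw [← hV1, ← hV0]
  symm
  refine count_eq_of_segment hm (V := V) ?_ ?_ _ 0 1 one_pos ?_ ?_ (Nat.lt_succ_self _)
  · intro e
    by_cases he : Valid e
    · by_cases hp : p ∈ Set.range (enc e)
      · exact ⟨_, _, haff e he hp⟩
      · exact ⟨chi v e, 0, fun t => by rw [hconst e t hp]; ring⟩
    · exact ⟨0, 0, fun t => by rw [chi_of_not_valid _ he]; ring⟩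
  · intro t e e' he he' h h'
    have hp := hmem e t he h
    have hp' := hmem e' t he' h'
    by_cases hr : Set.range (enc e) = Set.range (enc e')
    · exact eq_or_eq_swapEnc he he' hr
    · exfalso
      refine hy2 ⟨(⟨enc e, he.enc_injective, hp⟩, ⟨enc e', he'.enc_injective, hp'⟩), hr⟩ ?_
      rw [haff e he hp] at h
      rw [haff e' he' hp'] at h'
      simp only [K, LinearMap.sub_apply, LinearMap.smul_apply, smul_eq_mul]
      generalize L ⟨enc e, he.enc_injective, hp⟩ y = b1 at *
      generalize L ⟨enc e, he.enc_injective, hp⟩ (v p) = a1 at *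
      generalize L ⟨enc e', he'.enc_injective, hp'⟩ y = b2 at *
      generalize L ⟨enc e', he'.enc_injective, hp'⟩ (v p) = a2 at *
      linear_combination (b2 - a2) * h + (a1 - b1) * h'
  · intro e he
    rw [hV0]
    exact hv _ he.enc_injective
  · intro e he
    rw [hV1]
    exact hGP _ he.enc_injective

/-- All points of `s` can be moved into prescribed nonempty open sets. -/
lemma exists_near (hm : ∀ i, 3 ≤ m i) {v : Config m} (hv : GenPos v)
    {O : Pt m → Set (Fin (M + 1) → ℝ)} (hO : ∀ p, IsOpen (O p)) (hne : ∀ p, (O p).Nonempty)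
    (s : Finset (Pt m)) :
    ∃ v' : Config m, GenPos v' ∧ count v' = count v ∧ ∀ p ∈ s, v' p ∈ O p := by
  induction s using Finset.induction_on with
  | empty => exact ⟨v, hv, rfl, by simp⟩
  | insert p s hp ih =>
    obtain ⟨v', h1, h2, h3⟩ := ih
    obtain ⟨y, hy, h4, h5⟩ := exists_move hm h1 p (hO p) (hne p)
    refine ⟨_, h4, h5.trans h2, fun q hq => ?_⟩
    rcases Finset.mem_insert.1 hq with rfl | hqs
    · simpa using hy
    · rw [Function.update_of_ne (fun h => hp (by rw [← h]; exact hqs))]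
      exact h3 q hqs

/-! ### The configuration on the moment curve -/

/-- The parameter of a point on the moment curve: the families occupy consecutive intervals
`[i, i + 1)`. -/
noncomputable def tau (p : Pt m) : ℝ := p.1 + p.2 / m p.1

lemma tau_lt_of_fst {p q : Pt m} (h : p.1 < q.1) : tau p < tau q := by
  have hp : 0 < (m p.1 : ℝ) := by
    have := p.2.pos
    exact_mod_cast this
  have h1 : (p.2 : ℝ) / m p.1 < 1 := by
    rw [div_lt_one hp]
    exact_mod_cast p.2.is_lt
  have h2 : (0 : ℝ) ≤ (q.2 : ℝ) / m q.1 := by positivity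
  have h3 : ((p.1 : ℕ) : ℝ) + 1 ≤ (q.1 : ℕ) := by exact_mod_cast h
  unfold tau
  linarith

lemma tau_lt_of_snd {i : Fin M} {j k : Fin (m i)} (h : j < k) :
    tau (⟨i, j⟩ : Pt m) < tau ⟨i, k⟩ := by
  have hp : 0 < (m i : ℝ) := by
    have := j.pos
    exact_mod_cast this
  have h3 : ((j : ℕ) : ℝ) < (k : ℕ) := by exact_mod_cast h
  unfold tau
  simp only
  gcongr

lemma tau_injective : Function.Injective (tau : Pt m → ℝ) := by
  rintro ⟨i, j⟩ ⟨i', j'⟩ h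
  rcases lt_trichotomy i i' with h1 | h1 | h1
  · exact absurd h (tau_lt_of_fst (p := ⟨i, j⟩) (q := ⟨i', j'⟩) h1).ne
  · subst h1
    rcases lt_trichotomy j j' with h2 | h2 | h2
    · exact absurd h (tau_lt_of_snd h2).ne
    · rw [h2]
    · exact absurd h (tau_lt_of_snd h2).ne'
  · exact absurd h.symm (tau_lt_of_fst (q := ⟨i, j⟩) (p := ⟨i', j'⟩) h1).ne

/-- The configuration on the moment curve `t ↦ (1, t, …, t ^ M)`. -/
noncomputable def moment (m : Fin M → ℕ) : Config m := fun p k => tau p ^ (k : ℕ)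

lemma moment_comp (g : Fin (M + 1) → Pt m) :
    Matrix.detRowAlternating (moment m ∘ g) = (Matrix.vandermonde (tau ∘ g)).det := rfl

lemma moment_genPos : GenPos (moment m) := by
  intro g hg
  rw [moment_comp]
  exact Matrix.det_vandermonde_ne_zero_iff.2 (tau_injective.comp hg)

lemma sign_tau_sub (i : Fin M) (j k : Fin (m i)) :
    SignType.sign (tau (⟨i, j⟩ : Pt m) - tau ⟨i, k⟩) = SignType.sign ((j : ℤ) - k) := by
  rcases lt_trichotomy j k with h | h | h
  · rw [sign_neg (sub_neg.2 (tau_lt_of_snd h)), sign_neg]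
    have : (j : ℕ) < k := h
    omega
  · subst h; simp
  · rw [sign_pos (sub_pos.2 (tau_lt_of_snd h)), sign_pos]
    have : (k : ℕ) < j := h
    omega

/-- The polynomial of degree `M` with roots at the points of `T` has exactly one root on the arc of
the `i`-th family, so there its sign only depends on the position relative to `T i`. -/
lemma sign_chi_moment (T : Tr m) (i : Fin M) :
    ∃ κ : SignType, κ ≠ 0 ∧ ∀ j, SignType.sign (chi (moment m) (T, ⟨i, j⟩)) =
      κ * SignType.sign ((T i : ℤ) - j) := by
  refine ⟨∏ k ∈ Finset.univ.erase i, (if i < k then 1 else -1), ?_, fun j => ?_⟩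
  · rw [Finset.prod_ne_zero_iff]
    intro k _
    split_ifs <;> decide
  · have h1 : chi (moment m) (T, ⟨i, j⟩) = (∏ k, (tau ⟨k, T k⟩ - tau ⟨i, j⟩)) *
        ∏ a : Fin M, ∏ b ∈ Finset.Ioi a, (tau ⟨b, T b⟩ - tau ⟨a, T a⟩) := by
      rw [chi, moment_comp, Matrix.det_vandermonde, Fin.prod_univ_succ, Fin.prod_Ioi_zero]
      simp only [Fin.prod_Ioi_succ]
      rfl
    have h2 : 0 < ∏ a : Fin M, ∏ b ∈ Finset.Ioi a, (tau ⟨b, T b⟩ - tau ⟨a, T a⟩) := by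
      refine Finset.prod_pos fun a _ => Finset.prod_pos fun b hb => ?_
      exact sub_pos.2 (tau_lt_of_fst (Finset.mem_Ioi.1 hb))
    have h3 : SignType.sign (∏ k, (tau ⟨k, T k⟩ - tau ⟨i, j⟩)) =
        ∏ k, SignType.sign (tau ⟨k, T k⟩ - tau ⟨i, j⟩) := map_prod signHom _ _
    rw [h1, sign_mul, sign_pos h2, mul_one, h3, ← Finset.prod_erase_mul _ _ (Finset.mem_univ i),
      sign_tau_sub]
    congr 1
    refine Finset.prod_congr rfl fun k hk => ?_
    rcases lt_or_gt_of_ne (Finset.ne_of_mem_erase hk) with h | h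
    · rw [sign_neg (sub_neg.2 (tau_lt_of_fst h)), if_neg (not_lt.2 h.le)]
    · rw [sign_pos (sub_pos.2 (tau_lt_of_fst h)), if_pos h]

lemma sum_sign_sub (a n : ℕ) :
    ∑ j ∈ Finset.range n, (SignType.sign ((a : ℤ) - j) : ℤ) =
      if n ≤ a then (n : ℤ) else 2 * a + 1 - n := by
  induction n with
  | zero => simp
  | succ n ih =>
    rw [Finset.sum_range_succ, ih]
    rcases lt_trichotomy n a with h | h | h
    · rw [sign_pos (by omega), if_pos h.le, if_pos (by omega)]; simp
    · subst h; simp; ring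
    · rw [sign_neg (by omega), if_neg (by omega), if_neg (by omega)]; simp; ring

/-- On the moment curve a transversal is balanced iff it consists of the medians. -/
lemma bal_moment (T : Tr m) : bal (moment m) T ↔ ∀ i, 2 * (T i : ℕ) + 1 = m i := by
  refine forall_congr' fun i => ?_
  obtain ⟨κ, hκ, h⟩ := sign_chi_moment T i
  have hκ' : (κ : ℤ) ≠ 0 := by
    cases κ <;> first | exact absurd rfl hκ | decide
  simp only [h, SignType.coe_mul, ← Finset.mul_sum]
  rw [Fin.sum_univ_eq_sum_range (fun j => (SignType.sign ((T i : ℤ) - j) : ℤ)), sum_sign_sub,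
    if_neg (by have := (T i).is_lt; omega), mul_eq_zero, or_iff_right hκ']
  omega

lemma count_moment (hodd : ∀ i, Odd (m i)) : count (moment m) = 1 := by
  choose k hk using hodd
  rw [count, Finset.sum_eq_single (fun i => ⟨k i, by have := hk i; omega⟩)]
  · rw [if_pos]
    rw [bal_moment]
    intro i
    exact (hk i).symm
  · intro T _ hT
    rw [if_neg]
    rw [bal_moment]
    intro h
    apply hT
    funext i
    ext
    have := h i
    have := hk i
    simp only
    omega
  · simp

/-! ### The linear ham sandwich theorem -/

/-- Arbitrarily close to any configuration there is one that can be bisected. -/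
lemma exists_bisect_near (hM : 0 < M) (hm : ∀ i, 3 ≤ m i) (hodd : ∀ i, Odd (m i)) (w : Config m)
    {ε : ℝ} (hε : 0 < ε) :
    ∃ v : Config m, (∀ p, dist (v p) (w p) < ε) ∧ ∃ c : Fin (M + 1) → ℝ, ‖c‖ = 1 ∧
      ∀ i, 2 * (Finset.univ.filter fun j => 0 < c ⬝ᵥ v ⟨i, j⟩).card ≤ m i ∧
        2 * (Finset.univ.filter fun j => c ⬝ᵥ v ⟨i, j⟩ < 0).card ≤ m i := by
  obtain ⟨v, hv, hcount, hnear⟩ := exists_near hm (moment_genPos (m := m))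
    (O := fun p => Metric.ball (w p) ε) (fun _ => Metric.isOpen_ball)
    (fun p => ⟨w p, Metric.mem_ball_self hε⟩) Finset.univ
  refine ⟨v, fun p => hnear p (Finset.mem_univ p), ?_⟩
  rw [count_moment hodd] at hcount
  obtain ⟨T, hT⟩ : ∃ T, bal v T := by
    by_contra! hcon
    simp [count, hcon] at hcount
  let c₀ : Fin (M + 1) → ℝ := fun k => trForm v T (Pi.single k 1)
  have hc₀ : ∀ x, c₀ ⬝ᵥ x = trForm v T x := by
    intro x
    conv_rhs => rw [← Finset.univ_sum_single x]
    rw [map_sum]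
    refine Finset.sum_congr rfl fun k _ => ?_
    have : Pi.single k (x k) = x k • (Pi.single k 1 : Fin (M + 1) → ℝ) := by
      rw [← Pi.single_smul]; simp
    rw [this, map_smul, smul_eq_mul, mul_comm]
  have hne : c₀ ≠ 0 := by
    let i : Fin M := ⟨0, hM⟩
    intro h0
    have hz : trForm v T = 0 := by
      ext x
      rw [LinearMap.comp_apply, ← hc₀, h0]; simp
    have : Nontrivial (Fin (m i)) := Fin.nontrivial_iff_two_le.2 (by have := hm i; omega)
    obtain ⟨j, hj⟩ := exists_ne (T i)
    apply hv _ (Valid.enc_injective (e := (T, ⟨i, j⟩)) hj)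
    have h2 := trForm_apply v T ⟨i, j⟩
    rw [hz] at h2
    exact h2.symm
  have hpos : 0 < ‖c₀‖⁻¹ := inv_pos.2 (norm_pos_iff.2 hne)
  refine ⟨‖c₀‖⁻¹ • c₀, by rw [norm_smul, norm_inv, norm_norm, inv_mul_cancel₀ (norm_ne_zero_iff.2 hne)],
    fun i => ?_⟩
  have h1 : ∀ j, (SignType.sign (chi v (T, ⟨i, j⟩)) : ℤ) =
      (if 0 < chi v (T, ⟨i, j⟩) then 1 else 0) - (if chi v (T, ⟨i, j⟩) < 0 then 1 else 0) := by
    intro j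
    rcases lt_trichotomy (chi v (T, ⟨i, j⟩)) 0 with h | h | h
    · simp [h, h.not_gt]
    · simp [h]
    · simp [h, h.not_gt]
  have h2 := hT i
  simp only [h1, Finset.sum_sub_distrib, Finset.sum_boole] at h2
  have h3 : (Finset.univ.filter fun j => 0 < chi v (T, ⟨i, j⟩)).card +
      (Finset.univ.filter fun j => chi v (T, ⟨i, j⟩) < 0).card ≤ m i := by
    rw [← Finset.card_union_of_disjoint]
    · exact (Finset.card_le_univ _).trans (by simp)
    · rw [Finset.disjoint_filter]
      intro j _ h h'
      exact lt_asymm h h'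
  have h4 : ∀ x : ℝ, ‖c₀‖⁻¹ * x < 0 ↔ x < 0 := fun x => by
    simp only [mul_neg_iff, hpos, hpos.not_gt, true_and, false_and, or_false]
  simp only [smul_dotProduct, hc₀, trForm_apply, smul_eq_mul, mul_pos_iff_of_pos_left hpos, h4]
  omega

/-- The ham sandwich theorem for families of odd sizes, as a limit of `exists_bisect_near`. Points
strictly on one side of the limit hyperplane are on the same side for close configurations. -/
theorem ham_sandwich (hM : 0 < M) (hm : ∀ i, 3 ≤ m i) (hodd : ∀ i, Odd (m i)) (w : Config m) :
    ∃ c : Fin (M + 1) → ℝ, c ≠ 0 ∧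
      ∀ i, 2 * (Finset.univ.filter fun j => 0 < c ⬝ᵥ w ⟨i, j⟩).card ≤ m i ∧
        2 * (Finset.univ.filter fun j => c ⬝ᵥ w ⟨i, j⟩ < 0).card ≤ m i := by
  choose v hv c hc hb using fun n : ℕ =>
    exists_bisect_near hM hm hodd w (ε := 1 / ((n : ℝ) + 1)) (by positivity)
  obtain ⟨c', hc', φ, hφ, hlim⟩ := (isCompact_sphere (0 : Fin (M + 1) → ℝ) 1).tendsto_subseq
    (x := c) (fun n => by simp [hc])
  have hvlim : ∀ p, Filter.Tendsto (fun n => v (φ n) p) Filter.atTop (nhds (w p)) := by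
    intro p
    refine Filter.Tendsto.comp (g := fun n => v n p) ?_ hφ.tendsto_atTop
    rw [tendsto_iff_dist_tendsto_zero]
    exact squeeze_zero (fun _ => dist_nonneg) (fun n => (hv n p).le)
      tendsto_one_div_add_atTop_nhds_zero_nat
  have hdot : ∀ p, Filter.Tendsto (fun n => c (φ n) ⬝ᵥ v (φ n) p) Filter.atTop
      (nhds (c' ⬝ᵥ w p)) := by
    intro p
    refine tendsto_finsetSum _ fun k _ => ?_
    exact ((tendsto_pi_nhds.1 hlim k)).mul (tendsto_pi_nhds.1 (hvlim p) k)
  have hev : ∀ᶠ n in Filter.atTop, ∀ p, (0 < c' ⬝ᵥ w p → 0 < c (φ n) ⬝ᵥ v (φ n) p) ∧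
      (c' ⬝ᵥ w p < 0 → c (φ n) ⬝ᵥ v (φ n) p < 0) := by
    rw [Filter.eventually_all]
    intro p
    rw [Filter.eventually_and]
    constructor
    · by_cases h : 0 < c' ⬝ᵥ w p
      · filter_upwards [(hdot p).eventually (lt_mem_nhds h)] with n hn _ using hn
      · exact Filter.Eventually.of_forall fun n h' => absurd h' h
    · by_cases h : c' ⬝ᵥ w p < 0
      · filter_upwards [(hdot p).eventually (gt_mem_nhds h)] with n hn _ using hn
      · exact Filter.Eventually.of_forall fun n h' => absurd h' h
  obtain ⟨n, hn⟩ := hev.exists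
  refine ⟨c', ?_, fun i => ⟨?_, ?_⟩⟩
  · rintro rfl
    simp at hc'
  · refine le_trans ?_ (hb (φ n) i).1
    exact Nat.mul_le_mul_left 2 (Finset.card_le_card
      (Finset.monotone_filter_right _ fun j _ => (hn ⟨i, j⟩).1))
  · refine le_trans ?_ (hb (φ n) i).2
    exact Nat.mul_le_mul_left 2 (Finset.card_le_card
      (Finset.monotone_filter_right _ fun j _ => (hn ⟨i, j⟩).2))

/-- The ham sandwich theorem for finite sets of arbitrary sizes, mapped to `ℝ^(M+1)` by `ν`. -/
theorem ham_sandwich_finset {α : Type*} {M : ℕ} (hM : 0 < M) (U : Fin M → Finset α)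
    (ν : α → Fin (M + 1) → ℝ) :
    ∃ c : Fin (M + 1) → ℝ, c ≠ 0 ∧
      ∀ i, 2 * ((U i).filter fun p => 0 < c ⬝ᵥ ν p).card ≤ (U i).card ∧
        2 * ((U i).filter fun p => c ⬝ᵥ ν p < 0).card ≤ (U i).card := by
  -- Four copies of each point and three zero vectors make the sizes odd and at least 3. Bisecting
  -- gives `4 k ≤ (4 |U i| + 3) / 2` for the number `k` of points on one side, so `2 k ≤ |U i|`.
  let m : Fin M → ℕ := fun i => 4 * (U i).card + 3
  have E : ∀ i, Fin (m i) ≃ (Fin 4 × U i) ⊕ Fin 3 := fun i =>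
    Fintype.equivOfCardEq (by simp [m])
  let w : Config m := fun p => Sum.elim (fun x => ν x.2) (fun _ => 0) (E p.1 p.2)
  obtain ⟨c, hc, h⟩ := ham_sandwich (m := m) hM (fun i => by simp only [m]; omega)
    (fun i => ⟨2 * (U i).card + 1, by simp only [m]; ring⟩) w
  have key : ∀ (P : ℝ → Prop) i, 4 * ((U i).filter fun p => P (c ⬝ᵥ ν p)).card ≤
      (Finset.univ.filter fun j => P (c ⬝ᵥ w ⟨i, j⟩)).card := by
    intro P i
    have h1 : 4 * ((U i).filter fun p => P (c ⬝ᵥ ν p)).card =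
        ((Finset.univ : Finset (Fin 4)) ×ˢ ((U i).attach.filter fun p : {x // x ∈ U i} => P (c ⬝ᵥ ν p))).card := by
      rw [Finset.card_product, Finset.card_univ, Fintype.card_fin]
      congr 1
      rw [← Finset.card_map (Function.Embedding.subtype _)]
      congr 1
      ext x
      simp [and_comm]
    rw [h1]
    refine Finset.card_le_card_of_injOn (fun x => (E i).symm (Sum.inl x)) ?_ ?_
    · rintro ⟨a, x⟩ hx
      simp only [Finset.coe_product, Set.mem_prod, Finset.mem_coe, Finset.mem_filter] at hx
      simpa [w] using hx.2.2
    · intro x _ y _ hxy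
      exact Sum.inl_injective ((E i).symm.injective hxy)
  refine ⟨c, hc, fun i => ⟨?_, ?_⟩⟩
  · have h1 := key (fun x => 0 < x) i
    have h2 := (h i).1
    simp only [m] at h1 h2
    omega
  · have h1 := key (fun x => x < 0) i
    have h2 := (h i).2
    simp only [m] at h1 h2
    omega

/-! ### Monomials of bounded degree -/

/-- There are `C(D + 3, 3)` monomials of degree at most `D` in three variables, obtained from those of
degree exactly `D` in four variables by dropping the first one. -/
lemma exists_monomials (D : ℕ) : ∃ s : Fin (Nat.choose (D + 3) 3) → (Fin 3 →₀ ℕ),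
    Function.Injective s ∧ ∀ a, (s a).degree ≤ D := by
  have hcard : (Finset.finsuppAntidiag (Finset.univ : Finset (Fin 4)) D).card =
      Nat.choose (D + 3) 3 := by
    rw [Finset.card_finsuppAntidiag_nat_eq_choose]
    simp only [Finset.card_univ, Fintype.card_fin]
    rw [show 4 + D - 1 = D + 3 by omega, ← Nat.choose_symm (by omega)]
    simp
  let e := (Finset.equivFinOfCardEq hcard).symm
  have hsum : ∀ a, (e a).1 0 + (Finsupp.tail (e a).1).degree = D := by
    intro a
    have := (Finset.mem_finsuppAntidiag.1 (e a).2).1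
    rw [Fin.sum_univ_succ] at this
    rw [Finsupp.degree_eq_sum]
    simpa [Finsupp.tail_apply] using this
  refine ⟨fun a => Finsupp.tail (e a).1, fun a b hab => ?_, fun a => ?_⟩
  · have ha := hsum a
    have hb := hsum b
    simp only at hab
    rw [hab] at ha
    apply e.injective
    apply Subtype.ext
    rw [← Finsupp.cons_tail (e a).1, ← Finsupp.cons_tail (e b).1, hab]
    congr 1
    omega
  · have := hsum a
    simp only
    omega

end HamSandwich

theorem polynomial_ham_sandwich_R3
    (D : ℕ) (hD : 1 ≤ D)
    (U : Fin (Nat.choose (D + 3) 3 - 1) → Finset (EuclideanSpace ℝ (Fin 3))) :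
    ∃ f : MvPolynomial (Fin 3) ℝ, f ≠ 0 ∧ f.totalDegree ≤ D ∧
      ∀ i, 2 * ((U i).filter fun p => 0 < MvPolynomial.eval (fun t => p t) f).card
              ≤ (U i).card ∧
           2 * ((U i).filter fun p => MvPolynomial.eval (fun t => p t) f < 0).card
              ≤ (U i).card := by
  obtain ⟨s', hs', hdeg'⟩ := HamSandwich.exists_monomials D
  have hM : Nat.choose (D + 3) 3 - 1 + 1 = Nat.choose (D + 3) 3 :=
    Nat.sub_add_cancel (Nat.choose_pos (by omega))
  have hMpos : 0 < Nat.choose (D + 3) 3 - 1 := by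
    have : Nat.choose 4 3 ≤ Nat.choose (D + 3) 3 := Nat.choose_le_choose 3 (by omega)
    rw [show Nat.choose 4 3 = 4 from rfl] at this
    omega
  obtain ⟨s, hs, hdeg⟩ : ∃ s : Fin (Nat.choose (D + 3) 3 - 1 + 1) → (Fin 3 →₀ ℕ),
      Function.Injective s ∧ ∀ a, (s a).degree ≤ D := by
    rw [hM]; exact ⟨s', hs', hdeg'⟩
  obtain ⟨c, hc, h⟩ := HamSandwich.ham_sandwich_finset hMpos U
    (fun p a => MvPolynomial.eval (fun t => p t) (MvPolynomial.monomial (s a) (1 : ℝ)))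
  let f : MvPolynomial (Fin 3) ℝ := ∑ a, MvPolynomial.monomial (s a) (c a)
  have hf : ∀ x : Fin 3 → ℝ, MvPolynomial.eval x f =
      c ⬝ᵥ fun a => MvPolynomial.eval x (MvPolynomial.monomial (s a) (1 : ℝ)) := by
    intro x
    simp [f, dotProduct, MvPolynomial.eval_monomial]
  refine ⟨f, ?_, ?_, ?_⟩
  · intro h0
    apply hc
    funext a
    have := congrArg (MvPolynomial.coeff (s a)) h0
    simpa [f, MvPolynomial.coeff_sum, MvPolynomial.coeff_monomial, hs.eq_iff] using this
  · refine (MvPolynomial.totalDegree_finsetSum _ _).trans (Finset.sup_le fun a _ => ?_)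
    refine (MvPolynomial.totalDegree_monomial_le _ _).trans ?_
    exact hdeg a
  · simp only [hf]
    exact h
end

section
/- There exists an absolute constant C > 0 such that the following holds. Let f ∈ ℝ[x,y,z] be an irreducible polynomial of total degree D ≥ 1, let s ≥ 1, and let U₁, …, U_s ⊆ ℝ³ be finite point sets. Then there exists a nonzero polynomial h ∈ ℝ[x,y,z], not divisible by f, of total degree at most C · max(s^{1/3}, (s/D)^{1/2}), such that for every i = 1, …, s, at most |U_i|/2 points of U_i satisfy h > 0 and at most |U_i|/2 points of U_i satisfy h < 0. -/
/-!
The search space is the span of the monomials of a box of exponents: each exponent is at most `q`,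
and the exponent of one variable is less than its exponent `a` in the leading monomial of `f` for
the degree-lexicographic order. Leading exponents add under multiplication, so no nonzero
polynomial in this span is divisible by `f` (`not_dvd_of_support_subset`). Choosing the variable
so that `3 * a ≥ D`, the span has dimension `min a (q + 1) * (q + 1) ^ 2`, which exceeds `s` as
soon as `q` is of order `max (s ^ (1/3)) ((s / D) ^ (1/2))`.

A space of dimension at least `s + 1` contains a nonzero bisecting polynomial. If evaluation at the
points is not injective this is trivial; otherwise the values form a subspace `V` of `ℝ^ι` of
dimension at least `s + 1`, where `ι` indexes the points, and `exists_bisecting_vector` applies.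
That theorem is a discrete form of Borsuk-Ulam, deduced from Tucker's lemma for sign vectors on `ι`.
Let `π : ℝ^ι → ℝ^k` have kernel `V`, so `k + s + 1 ≤ |ι|`. For a nonzero sign vector `A` consider
the open convex cone of functionals on `ℝ^k` that are positive on the images under `π` of the
signed unit vectors of `A`; this cone shrinks as `A` grows.

* If the cone is nonempty, let `t` be the first index for which it meets the space of functionals
  supported on the coordinates up to `t`. By convexity and minimality it does so on one side of the
  hyperplane where the coordinate `t` vanishes, which gives a label `±t`. Two comparable sign
  vectors never receive opposite labels of this kind (`coneMeets_both`).
* If the cone is empty, Gordan's alternative yields a nonzero vector of `V` whose signs conform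
  to `A`. If it does not bisect the classes, then `A` is positive, or negative, on more than half of
  some class `i`, which gives a label `±i`; again comparable sign vectors do not get opposite labels.

So `k + s < |ι|` labels would suffice for an antipodal labelling without complementary pairs,
contradicting the octahedral Tucker lemma (`octahedral_tucker_rel`). The latter is a parity count of
pairs (word of signed elements, deleted member of its flag of prefixes) for which the labels of the
remaining prefixes are exactly the letters of the word: the number of such pairs is odd for every
word length (`odd_card_happyFacets`), although no words are longer than `|ι|`.
-/

open scoped Classical

/-! ### The octahedral Tucker lemma -/

theorem even_card_of_involution {α : Type*} (s : Finset α) (g : α → α)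
    (hmem : ∀ a ∈ s, g a ∈ s) (hne : ∀ a ∈ s, g a ≠ a) (hinv : ∀ a ∈ s, g (g a) = a) :
    Even s.card := by
  have h : ∑ _a ∈ s, (1 : ZMod 2) = 0 :=
    Finset.sum_involution (fun a _ => g a) (fun _ _ => by decide) (fun a ha _ => hne a ha)
      (fun a ha => hmem a ha) (fun a ha => hinv a ha)
  rw [Finset.sum_const, nsmul_one] at h
  exact (ZMod.natCast_eq_zero_iff_even).1 h

section Tucker

variable {ι : Type*}

/-- The antipode of a signed element: same element, opposite sign. -/
def flipSign (x : ι × Bool) : ι × Bool := (x.1, !x.2)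

@[simp] theorem flipSign_flipSign (x : ι × Bool) : flipSign (flipSign x) = x := by
  simp [flipSign]

theorem flipSign_ne (x : ι × Bool) : flipSign x ≠ x := by
  intro h
  have := congrArg Prod.snd h
  simp [flipSign] at this

theorem eq_or_eq_flipSign {x y : ι × Bool} (h : x.1 = y.1) : x = y ∨ x = flipSign y := by
  rcases x with ⟨i, b⟩; rcases y with ⟨j, c⟩
  simp only at h
  subst h
  cases b <;> cases c <;> simp [flipSign]

/-- A finite set of signed elements is a sign vector if it never contains an element with both
signs. Sign vectors with entries in `{+, -, 0}` are encoded by their signed support, so that the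
usual order on sign vectors becomes inclusion. -/
def IsSignVector (A : Finset (ι × Bool)) : Prop := ∀ x ∈ A, flipSign x ∉ A

/-- The set of the first `j` letters of a word. -/
noncomputable def prefixSet {k : ℕ} (w : Fin k → ι × Bool) (j : ℕ) : Finset (ι × Bool) :=
  (Finset.univ.filter fun t : Fin k => t.val < j).image w

theorem mem_prefixSet {k : ℕ} {w : Fin k → ι × Bool} {j : ℕ} {x : ι × Bool} :
    x ∈ prefixSet w j ↔ ∃ t : Fin k, t.val < j ∧ w t = x := by
  simp [prefixSet]

theorem prefixSet_mono {k : ℕ} (w : Fin k → ι × Bool) {i j : ℕ} (h : i ≤ j) :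
    prefixSet w i ⊆ prefixSet w j := by
  intro x hx
  obtain ⟨t, ht, rfl⟩ := mem_prefixSet.1 hx
  exact mem_prefixSet.2 ⟨t, ht.trans_le h, rfl⟩

theorem isSignVector_prefixSet {k : ℕ} {w : Fin k → ι × Bool}
    (hw : Function.Injective fun t => (w t).1) (j : ℕ) : IsSignVector (prefixSet w j) := by
  intro x hx hx'
  obtain ⟨t, -, rfl⟩ := mem_prefixSet.1 hx
  obtain ⟨t', -, h⟩ := mem_prefixSet.1 hx'
  have : t' = t := hw (by simp [h, flipSign])
  subst this
  exact flipSign_ne _ h.symm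

/-- The `k + 1` labels of the full flag of sign vectors (starting with the zero vector) built by
adding the letters of a word one at a time. -/
noncomputable def flagLabel (lam : Finset (ι × Bool) → ι × Bool) {k : ℕ} (w : Fin k → ι × Bool)
    (j : Fin (k + 1)) : ι × Bool := lam (prefixSet w j)

/-- The word `w` has letters with pairwise distinct underlying elements, and after deleting its
`j`-th member the flag of `w` carries as labels exactly the letters of `w`. -/
def IsHappyFacet (lam : Finset (ι × Bool) → ι × Bool) {k : ℕ} (w : Fin k → ι × Bool)
    (j : Fin (k + 1)) : Prop :=
  Function.Injective (fun t => (w t).1) ∧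
    (Finset.univ.erase j).image (flagLabel lam w) = Finset.univ.image w

theorem injOn_flagLabel {lam : Finset (ι × Bool) → ι × Bool} {k : ℕ} {w : Fin k → ι × Bool}
    {j : Fin (k + 1)} (h : IsHappyFacet lam w j) :
    Set.InjOn (flagLabel lam w) (Finset.univ.erase j : Finset (Fin (k + 1))) := by
  apply Finset.injOn_of_card_image_eq
  have hw : Function.Injective w := fun a b hab => h.1 (by simp [hab])
  rw [h.2, Finset.card_image_of_injective _ hw]
  simp

variable [Fintype ι]

/-- Negating a word pairs off the facets obtained by deleting the zero vector. -/
theorem even_card_happyFacet_zero (lam : Finset (ι × Bool) → ι × Bool)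
    (hodd : ∀ A, A.Nonempty → IsSignVector A → lam (A.image flipSign) = flipSign (lam A)) (n : ℕ) :
    Even (Finset.univ.filter fun w : Fin (n + 1) → ι × Bool => IsHappyFacet lam w 0).card := by
  refine even_card_of_involution _ (fun w => flipSign ∘ w) ?_ ?_ ?_
  · intro w hw
    simp only [Finset.mem_filter, Finset.mem_univ, true_and] at hw ⊢
    refine ⟨hw.1, ?_⟩
    have : ∀ j ∈ Finset.univ.erase (0 : Fin (n + 2)),
        flagLabel lam (flipSign ∘ w) j = flipSign (flagLabel lam w j) := by
      intro j hj
      have hj0 : j ≠ 0 := by simpa using hj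
      unfold flagLabel
      rw [← hodd]
      · simp [prefixSet, Finset.image_image]
      · exact ⟨w 0, mem_prefixSet.2 ⟨0, by simpa [Fin.pos_iff_ne_zero] using hj0, rfl⟩⟩
      · exact isSignVector_prefixSet hw.1 _
    rw [Finset.image_congr (g := flipSign ∘ flagLabel lam w) (fun j hj => this j hj),
      ← Finset.image_image, hw.2, Finset.image_image]
  · intro w _ h
    exact flipSign_ne _ (congrFun h 0)
  · intro w _
    funext t
    simp

/-- Transposing two adjacent letters pairs off the facets obtained by deleting a member of the
flag which is neither the zero vector nor the top one. -/
theorem even_card_happyFacet_mid (lam : Finset (ι × Bool) → ι × Bool) (n : ℕ) (t : Fin n) :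
    Even (Finset.univ.filter fun w : Fin (n + 1) → ι × Bool =>
      IsHappyFacet lam w t.succ.castSucc).card := by
  have hts : t.castSucc ≠ t.succ := by simp [Fin.ext_iff]
  refine even_card_of_involution _ (fun w => w ∘ Equiv.swap t.castSucc t.succ) ?_ ?_ ?_
  · intro w hw
    simp only [Finset.mem_filter, Finset.mem_univ, true_and] at hw ⊢
    refine ⟨hw.1.comp (Equiv.injective _), ?_⟩
    have : ∀ j ∈ Finset.univ.erase (t.succ.castSucc : Fin (n + 2)),
        flagLabel lam (w ∘ Equiv.swap t.castSucc t.succ) j = flagLabel lam w j := by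
      intro j hj
      have hj0 : j.val ≠ t.val + 1 := by simpa [Fin.ext_iff] using hj
      unfold flagLabel
      congr 1
      have key : ∀ r : Fin (n + 1),
          (Equiv.swap t.castSucc t.succ r).val < j.val ↔ r.val < j.val := by
        intro r
        rw [Equiv.swap_apply_def]
        split_ifs with h1 h2
        · subst h1; simp; omega
        · subst h2; simp; omega
        · rfl
      ext x
      simp only [mem_prefixSet, Function.comp]
      constructor
      · rintro ⟨r, hr, rfl⟩
        exact ⟨_, (key r).2 hr, rfl⟩
      · rintro ⟨r, hr, rfl⟩
        exact ⟨Equiv.swap t.castSucc t.succ r, (key r).2 hr, by simp⟩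
    rw [Finset.image_congr (g := flagLabel lam w) (fun j hj => this j hj), hw.2]
    ext x
    simp only [Finset.mem_image, Finset.mem_univ, true_and, Function.comp]
    exact ((Equiv.swap t.castSucc t.succ).surjective.exists (p := fun r => w r = x))
  · intro w hw h
    simp only [Finset.mem_filter, Finset.mem_univ, true_and] at hw
    have h1 := congrFun h t.castSucc
    simp only [Function.comp, Equiv.swap_apply_left] at h1
    exact hts (hw.1 (by simp [h1]))
  · intro w _
    funext r
    simp

/-- All happy facets of words of length `k`. -/
noncomputable def happyFacets (lam : Finset (ι × Bool) → ι × Bool) (k : ℕ) :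
    Finset ((Fin k → ι × Bool) × Fin (k + 1)) :=
  Finset.univ.filter fun p => IsHappyFacet lam p.1 p.2

theorem card_happyFacets (lam : Finset (ι × Bool) → ι × Bool) (k : ℕ) :
    (happyFacets lam k).card =
      ∑ j, (Finset.univ.filter fun w : Fin k → ι × Bool => IsHappyFacet lam w j).card := by
  simp only [happyFacets, Finset.card_filter, Fintype.sum_prod_type_right]

/-- Modulo two, only the facets obtained by deleting the top member of the flag count. -/
theorem card_happyFacets_mod (lam : Finset (ι × Bool) → ι × Bool)
    (hodd : ∀ A, A.Nonempty → IsSignVector A → lam (A.image flipSign) = flipSign (lam A)) (n : ℕ) :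
    Odd (happyFacets lam (n + 1)).card ↔
      Odd (Finset.univ.filter fun w : Fin (n + 1) → ι × Bool =>
        IsHappyFacet lam w (Fin.last _)).card := by
  rw [card_happyFacets, Fin.sum_univ_castSucc, Fin.sum_univ_succ, Nat.odd_add]
  have h0 := even_card_happyFacet_zero lam hodd n
  have h1 : Even (∑ t : Fin n, (Finset.univ.filter fun w : Fin (n + 1) → ι × Bool =>
      IsHappyFacet lam w t.succ.castSucc).card) :=
    Finset.even_sum _ fun t _ => even_card_happyFacet_mid lam n t
  have h2 := h0.add h1
  rw [Fin.castSucc_zero, ← Nat.not_even_iff_odd, ← Nat.not_even_iff_odd]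
  tauto

/-- If the label of the deleted member is a letter of the word, then it occurs exactly twice among
all labels of the flag, and deleting either occurrence gives a happy facet. -/
theorem even_card_happyFacets_inner (lam : Finset (ι × Bool) → ι × Bool) (k : ℕ) :
    Even ((happyFacets lam k).filter fun p =>
      flagLabel lam p.1 p.2 ∈ Finset.univ.image p.1).card := by
  have ex : ∀ p : (Fin k → ι × Bool) × Fin (k + 1), ∃ j : Fin (k + 1),
      p ∈ ((happyFacets lam k).filter fun p => flagLabel lam p.1 p.2 ∈ Finset.univ.image p.1) →
        j ≠ p.2 ∧ flagLabel lam p.1 j = flagLabel lam p.1 p.2 := by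
    intro p
    by_cases hp : p ∈ ((happyFacets lam k).filter fun p =>
      flagLabel lam p.1 p.2 ∈ Finset.univ.image p.1)
    · have hp' := hp
      simp only [happyFacets, Finset.mem_filter, Finset.mem_univ, true_and] at hp'
      have h := hp'.2
      rw [← hp'.1.2] at h
      obtain ⟨j, hj, h⟩ := Finset.mem_image.1 h
      exact ⟨j, fun _ => ⟨by simpa using hj, h⟩⟩
    · exact ⟨0, fun h => absurd h hp⟩
  choose g hg using ex
  have hmem : ∀ p ∈ ((happyFacets lam k).filter fun p =>
      flagLabel lam p.1 p.2 ∈ Finset.univ.image p.1), (p.1, g p) ∈ ((happyFacets lam k).filter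
        fun p => flagLabel lam p.1 p.2 ∈ Finset.univ.image p.1) := by
    rintro ⟨w, j⟩ hp
    obtain ⟨h1, h2⟩ := hg _ hp
    simp only [happyFacets, Finset.mem_filter, Finset.mem_univ, true_and] at hp h1 h2 ⊢
    refine ⟨⟨hp.1.1, ?_⟩, by rw [h2]; exact hp.2⟩
    rw [← hp.1.2]
    ext x
    simp only [Finset.mem_image, Finset.mem_erase, Finset.mem_univ, and_true]
    constructor
    · rintro ⟨r, hr, rfl⟩
      by_cases hrj : r = j
      · exact ⟨g (w, j), h1, by rw [h2, hrj]⟩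
      · exact ⟨r, hrj, rfl⟩
    · rintro ⟨r, hr, rfl⟩
      by_cases hrj : r = g (w, j)
      · exact ⟨j, Ne.symm h1, by rw [← h2, hrj]⟩
      · exact ⟨r, hrj, rfl⟩
  refine even_card_of_involution _ (fun p => (p.1, g p)) hmem ?_ ?_
  · intro p hp h
    exact (hg p hp).1 (congrArg Prod.snd h)
  · rintro ⟨w, j⟩ hp
    obtain ⟨h1, h2⟩ := hg _ hp
    have hp2 := hmem _ hp
    obtain ⟨h3, h4⟩ := hg _ hp2
    simp only [happyFacets, Finset.mem_filter, Finset.mem_univ, true_and] at hp hp2 h1 h2 h3 h4 ⊢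
    rw [Prod.mk.injEq]
    refine ⟨rfl, injOn_flagLabel hp2.1 ?_ ?_ ?_⟩
    · simpa using h3
    · simpa using Ne.symm h1
    · rw [h4, h2]

omit [Fintype ι] in
theorem prefixSet_snoc {k : ℕ} (w : Fin k → ι × Bool) (x : ι × Bool) {j : ℕ} (hj : j ≤ k) :
    prefixSet (Fin.snoc w x : Fin (k + 1) → ι × Bool) j = prefixSet w j := by
  ext y
  simp only [mem_prefixSet, Fin.exists_fin_succ']
  simp only [Fin.snoc_castSucc, Fin.snoc_last, Fin.val_castSucc, Fin.val_last]
  constructor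
  · rintro (h | h)
    · exact h
    · omega
  · exact Or.inl

omit [Fintype ι] in
theorem flagLabel_snoc (lam : Finset (ι × Bool) → ι × Bool) {k : ℕ} (w : Fin k → ι × Bool)
    (x : ι × Bool) (j : Fin (k + 1)) :
    flagLabel lam (Fin.snoc w x : Fin (k + 1) → ι × Bool) j.castSucc = flagLabel lam w j := by
  unfold flagLabel
  rw [Fin.val_castSucc, prefixSet_snoc w x (by omega)]

omit [Fintype ι] in
theorem image_snoc {k : ℕ} (w : Fin k → ι × Bool) (x : ι × Bool) :
    Finset.univ.image (Fin.snoc w x : Fin (k + 1) → ι × Bool) =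
      insert x (Finset.univ.image w) := by
  ext y
  simp only [Finset.mem_image, Finset.mem_univ, true_and, Fin.exists_fin_succ', Finset.mem_insert,
    Fin.snoc_castSucc, Fin.snoc_last]
  rw [or_comm, eq_comm]

omit [Fintype ι] in
theorem image_erase_last (lam : Finset (ι × Bool) → ι × Bool) {k : ℕ} (w : Fin k → ι × Bool)
    (x : ι × Bool) :
    (Finset.univ.erase (Fin.last (k + 1))).image
      (flagLabel lam (Fin.snoc w x : Fin (k + 1) → ι × Bool)) =
      Finset.univ.image (flagLabel lam w) := by
  ext y
  simp only [Finset.mem_image, Finset.mem_erase, Finset.mem_univ, and_true, true_and]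
  rw [Fin.exists_fin_succ']
  simp [flagLabel_snoc, Fin.castSucc_ne_last]

/-- If the label of the deleted member is not a letter of the word, appending that label to the
word yields a word all of whose letters label the flag without its top member; every such word
arises exactly once. Absence of complementary labels guarantees that the new letter is supported
on a new element. -/
theorem card_happyFacets_outer (lam : Finset (ι × Bool) → ι × Bool)
    (hcomp : ∀ A B, IsSignVector B → A ⊆ B → lam B ≠ flipSign (lam A)) (k : ℕ) :
    ((happyFacets lam k).filter fun p =>
      flagLabel lam p.1 p.2 ∉ Finset.univ.image p.1).card =
    (Finset.univ.filter fun w : Fin (k + 1) → ι × Bool =>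
        IsHappyFacet lam w (Fin.last _)).card := by
  refine Finset.card_bij (fun p _ => Fin.snoc p.1 (flagLabel lam p.1 p.2)) ?_ ?_ ?_
  · rintro ⟨w, j⟩ hp
    simp only [happyFacets, Finset.mem_filter, Finset.mem_univ, true_and] at hp ⊢
    obtain ⟨hp, hout⟩ := hp
    have hall : Finset.univ.image (flagLabel lam w) =
        insert (flagLabel lam w j) (Finset.univ.image w) := by
      rw [← hp.2, ← Finset.image_insert, Finset.insert_erase (Finset.mem_univ _)]
    refine ⟨?_, ?_⟩
    · have hnew : ∀ t, (w t).1 ≠ (flagLabel lam w j).1 := by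
        intro t ht
        have hwt : w t ∈ Finset.univ.image w := Finset.mem_image_of_mem _ (Finset.mem_univ _)
        rcases eq_or_eq_flipSign ht with h | h
        · rw [h] at hwt; exact hout hwt
        · rw [← hp.2] at hwt
          obtain ⟨r, -, hr⟩ := Finset.mem_image.1 hwt
          have hr' : flagLabel lam w r = flipSign (flagLabel lam w j) := hr.trans h
          rcases le_total j.val r.val with hjr | hjr
          · exact hcomp _ _ (isSignVector_prefixSet hp.1 _) (prefixSet_mono w hjr) hr'
          · refine hcomp _ _ (isSignVector_prefixSet hp.1 _) (prefixSet_mono w hjr) ?_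
            change flagLabel lam w j = flipSign (flagLabel lam w r)
            rw [hr', flipSign_flipSign]
      intro a b
      induction a using Fin.lastCases with
      | last =>
        induction b using Fin.lastCases with
        | last => simp
        | cast b =>
          intro h
          simp only [Fin.snoc_castSucc, Fin.snoc_last] at h
          exact absurd h.symm (hnew b)
      | cast a =>
        induction b using Fin.lastCases with
        | last =>
          intro h
          simp only [Fin.snoc_castSucc, Fin.snoc_last] at h
          exact absurd h (hnew a)
        | cast b => intro h; simp only [Fin.snoc_castSucc] at h; rw [hp.1 h]
    · rw [image_erase_last, image_snoc, hall]
  · rintro ⟨w, j⟩ hp ⟨w', j'⟩ hp' h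
    simp only [happyFacets, Finset.mem_filter, Finset.mem_univ, true_and] at hp hp' h
    obtain ⟨h1, h2⟩ := Fin.snoc_injective2 h
    subst h1
    by_contra hne
    have hjj : j' ≠ j := by rintro rfl; exact hne rfl
    apply hp.2
    rw [← hp.1.2, h2]
    exact Finset.mem_image_of_mem _ (by simpa using hjj)
  · intro u hu
    simp only [Finset.mem_filter, Finset.mem_univ, true_and] at hu
    obtain ⟨w, x, rfl⟩ : ∃ w x, u = (Fin.snoc w x : Fin (k + 1) → ι × Bool) :=
      ⟨Fin.init u, u (Fin.last k), (Fin.snoc_init_self u).symm⟩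
    have huinj : Function.Injective (Fin.snoc w x : Fin (k + 1) → ι × Bool) :=
      fun a b hab => hu.1 (by simp only [hab])
    have hx : x ∉ Finset.univ.image w := by
      intro hx
      obtain ⟨t, -, ht⟩ := Finset.mem_image.1 hx
      have := @huinj t.castSucc (Fin.last k) (by simp [ht])
      exact Fin.castSucc_ne_last t this
    have hlab : Finset.univ.image (flagLabel lam w) = insert x (Finset.univ.image w) := by
      rw [← image_erase_last lam w x, hu.2, image_snoc]
    have hlabinj : Function.Injective (flagLabel lam w) := by
      rw [← Set.injOn_univ, ← Finset.coe_univ]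
      apply Finset.injOn_of_card_image_eq
      rw [hlab, ← image_snoc, Finset.card_image_of_injective _ huinj]
    have hwinj : Function.Injective fun t => (w t).1 := by
      intro a b hab
      have := @hu.1 a.castSucc b.castSucc (by simpa using hab)
      exact Fin.castSucc_injective _ this
    obtain ⟨j, -, hj⟩ := Finset.mem_image.1 (hlab ▸ Finset.mem_insert_self x _)
    refine ⟨(w, j), ?_, by simp only [hj]⟩
    simp only [happyFacets, Finset.mem_filter, Finset.mem_univ, true_and]
    refine ⟨⟨hwinj, ?_⟩, by rw [hj]; exact hx⟩
    rw [Finset.image_erase hlabinj, hlab, hj, Finset.erase_insert hx]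

/-- By induction on the word length: the facets of length `k` whose deleted label is new correspond
to those of length `k + 1` obtained by deleting the top member, and all others pair off. -/
theorem odd_card_happyFacets (lam : Finset (ι × Bool) → ι × Bool)
    (hodd : ∀ A, A.Nonempty → IsSignVector A → lam (A.image flipSign) = flipSign (lam A))
    (hcomp : ∀ A B, IsSignVector B → A ⊆ B → lam B ≠ flipSign (lam A)) (k : ℕ) :
    Odd (happyFacets lam k).card := by
  induction k with
  | zero =>
    have : happyFacets lam 0 = Finset.univ := by
      refine Finset.filter_true_of_mem fun p _ => ⟨fun a => a.elim0, ?_⟩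
      have : Finset.univ.erase p.2 = ∅ := by
        ext j
        simp only [Finset.mem_erase, Finset.mem_univ, and_true, Finset.notMem_empty, iff_false,
          not_not]
        exact Fin.ext (by omega)
      rw [this]
      simp
    rw [this]
    simp
  | succ k ih =>
    rw [card_happyFacets_mod lam hodd, ← card_happyFacets_outer lam hcomp]
    rw [← Finset.card_filter_add_card_filter_not (s := happyFacets lam k)
      (fun p => flagLabel lam p.1 p.2 ∈ Finset.univ.image p.1), Nat.odd_add'] at ih
    exact ih.2 (even_card_happyFacets_inner lam k)

/-- **Octahedral Tucker lemma**, with as many labels (up to sign) as coordinates and with the zero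
vector labelled too, without any condition there. The two sign vectors are distinct because a label
is never its own antipode. -/
theorem octahedral_tucker (lam : Finset (ι × Bool) → ι × Bool)
    (hodd : ∀ A, A.Nonempty → IsSignVector A → lam (A.image flipSign) = flipSign (lam A)) :
    ∃ A B, IsSignVector B ∧ A ⊆ B ∧ lam B = flipSign (lam A) := by
  by_contra! hcomp
  obtain ⟨p, hp⟩ := Finset.card_pos.1
    (odd_card_happyFacets lam hodd hcomp (Fintype.card ι + 1)).pos
  simp only [happyFacets, Finset.mem_filter, Finset.mem_univ, true_and] at hp
  have := Fintype.card_le_of_injective _ hp.1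
  simp at this

end Tucker

/-! ### Bisecting vectors in a subspace -/

section HamSandwich

variable {ι : Type*} [Fintype ι]

omit [Fintype ι] in
theorem flipSign_image_image (A : Finset (ι × Bool)) : (A.image flipSign).image flipSign = A := by
  simp [Finset.image_image, Function.comp_def]

omit [Fintype ι] in
theorem mem_image_flipSign {A : Finset (ι × Bool)} {x : ι × Bool} :
    x ∈ A.image flipSign ↔ flipSign x ∈ A := by
  simp only [Finset.mem_image]
  constructor
  · rintro ⟨y, hy, rfl⟩; simpa using hy
  · intro h; exact ⟨_, h, by simp⟩

/-- Relational form of the octahedral Tucker lemma on nonzero sign vectors: if there are fewer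
labels (up to sign) than coordinates, a total antipodal labelling has a complementary pair. The
label that is left over serves for the zero vector. -/
theorem octahedral_tucker_rel {L : Type*} [Fintype L] (hL : Fintype.card L + 1 ≤ Fintype.card ι)
    (R : Finset (ι × Bool) → L → Bool → Prop)
    (htotal : ∀ A, A.Nonempty → IsSignVector A → ∃ l b, R A l b)
    (hodd : ∀ A l b, R (A.image flipSign) l b ↔ R A l (!b)) :
    ∃ A B l b, A.Nonempty ∧ IsSignVector B ∧ A ⊆ B ∧ R A l b ∧ R B l (!b) := by
  by_contra! hno
  obtain ⟨e⟩ : Nonempty (Option L ↪ ι) :=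
    Function.Embedding.nonempty_of_card_le (by simpa using hL)
  have hne : ∀ A : Finset (ι × Bool), A.Nonempty → IsSignVector A → Nonempty L :=
    fun A h1 h2 => ⟨(htotal A h1 h2).choose⟩
  rcases isEmpty_or_nonempty L with hLe | hLn
  · obtain ⟨i⟩ : Nonempty ι := ⟨e none⟩
    refine hLe.elim (hne {(i, true)} (by simp) ?_).some
    intro x hx
    simp only [Finset.mem_singleton] at hx ⊢
    rw [hx]
    exact flipSign_ne _
  let l : Finset (ι × Bool) → L := fun A => Classical.epsilon fun l => ∃ b, R A l b
  -- `l A` depends only on the predicate `∃ b, R A l b`, which is the same for `A` and its antipode.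
  let lam : Finset (ι × Bool) → ι × Bool := fun A =>
    if A = ∅ then (e none, true) else (e (some (l A)), decide (R A (l A) true))
  have hl : ∀ A, A.Nonempty → IsSignVector A → ∃ b, R A (l A) b := fun A h1 h2 =>
    Classical.epsilon_spec (p := fun l => ∃ b, R A l b) (htotal A h1 h2)
  have hnot : ∀ A, A.Nonempty → IsSignVector A → (R A (l A) false ↔ ¬ R A (l A) true) := by
    intro A h1 h2
    constructor
    · intro h h'
      exact hno A A _ _ h1 h2 subset_rfl h h'
    · intro h
      obtain ⟨b, hb⟩ := hl A h1 h2
      cases b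
      · exact hb
      · exact absurd hb h
  have hRb : ∀ A, A.Nonempty → IsSignVector A → R A (l A) (decide (R A (l A) true)) := by
    intro A h1 h2
    by_cases h : R A (l A) true
    · simp [h]
    · simpa [h] using (hnot A h1 h2).2 h
  have hlflip : ∀ A : Finset (ι × Bool), l (A.image flipSign) = l A := by
    intro A
    have : (fun l => ∃ b, R (A.image flipSign) l b) = fun l => ∃ b, R A l b := by
      funext l
      simp only [hodd, Bool.exists_bool, Bool.not_false, Bool.not_true]
      exact propext or_comm
    simp only [l, this]
  obtain ⟨A, B, hB, hAB, hlam⟩ := octahedral_tucker lam (by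
    intro A h1 h2
    have h1' : A.image flipSign ≠ ∅ := by simpa using h1.ne_empty
    simp only [lam, h1.ne_empty, h1', if_false, hlflip, flipSign, hodd, Bool.not_true,
      hnot A h1 h2]
    simp)
  rcases A.eq_empty_or_nonempty with rfl | hA
  · rcases B.eq_empty_or_nonempty with rfl | hB'
    · exact flipSign_ne _ hlam.symm
    · have := congrArg Prod.fst hlam
      simp [lam, hB'.ne_empty, flipSign] at this
  · have hB' := hA.mono hAB
    have h1 := hRb A hA (fun x hx hx' => hB x (hAB hx) (hAB hx'))
    have h2 := hRb B hB' hB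
    simp only [lam, hA.ne_empty, hB'.ne_empty, if_false, flipSign, Prod.mk.injEq,
      EmbeddingLike.apply_eq_iff_eq, Option.some.injEq] at hlam
    rw [hlam.1] at h2
    rw [hlam.1] at hlam
    rw [hlam.2] at h2
    exact hno A B _ _ hA hB hAB h1 h2

/-- The signed unit vector of `ℝ^ι` attached to a signed element. -/
noncomputable def signedUnit (x : ι × Bool) : ι → ℝ := Pi.single x.1 (if x.2 then 1 else -1)

omit [Fintype ι] in
theorem signedUnit_flipSign (x : ι × Bool) : signedUnit (flipSign x) = -signedUnit x := by
  rcases x with ⟨i, b⟩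
  unfold signedUnit flipSign
  rw [← Pi.single_neg]
  cases b <;> simp

/-- Gordan's alternative: either some functional is positive on the images of all signed unit
vectors of `A`, or the kernel of `π` contains a nonzero vector conformal to `A`. -/
theorem gordan_alternative {E : Type*} [NormedAddCommGroup E] [NormedSpace ℝ E]
    (π : (ι → ℝ) →ₗ[ℝ] E) (A : Finset (ι × Bool))
    (hA : IsSignVector A) (hno : ¬ ∃ f : E →ₗ[ℝ] ℝ, ∀ x ∈ A, 0 < f (π (signedUnit x))) :
    ∃ v : ι → ℝ, π v = 0 ∧ v ≠ 0 ∧ ∀ i, (0 < v i → (i, true) ∈ A) ∧ (v i < 0 → (i, false) ∈ A) := by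
  let S : Set (ι → ℝ) := signedUnit '' (A : Set (ι × Bool))
  have hSfin : S.Finite := A.finite_toSet.image _
  have h0 : (0 : E) ∈ convexHull ℝ (π '' S) := by
    by_contra h0
    obtain ⟨f, u, hu, hf⟩ := geometric_hahn_banach_point_closed (convex_convexHull ℝ (π '' S))
      ((hSfin.image π).isClosed_convexHull ℝ) h0
    refine hno ⟨f.toLinearMap, fun x hx => ?_⟩
    have := hf _ (subset_convexHull ℝ _ ⟨_, ⟨x, hx, rfl⟩, rfl⟩)
    rw [map_zero] at hu
    exact hu.trans this
  rw [← LinearMap.image_convexHull π S] at h0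
  obtain ⟨v, hv, hπ⟩ := h0
  let c : ι → ℝ := fun i => if (i, true) ∈ A then 1 else -1
  -- The functional `c` equals `1` on all signed unit vectors of `A`, so the hull avoids `0`.
  let K : Set (ι → ℝ) := {v | ∑ i, c i * v i = 1 ∧
    ∀ i, ((i, true) ∉ A → v i ≤ 0) ∧ ((i, false) ∉ A → 0 ≤ v i)}
  have hK : Convex ℝ K := by
    intro v hv w hw a b ha hb hab
    refine ⟨?_, fun i => ⟨fun h => ?_, fun h => ?_⟩⟩
    · have : ∑ i, c i * (a • v + b • w) i = a * ∑ i, c i * v i + b * ∑ i, c i * w i := by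
        rw [Finset.mul_sum, Finset.mul_sum, ← Finset.sum_add_distrib]
        refine Finset.sum_congr rfl fun i _ => ?_
        simp only [Pi.add_apply, Pi.smul_apply, smul_eq_mul]
        ring
      rw [this, hv.1, hw.1]
      linarith
    · have h1 := (hv.2 i).1 h
      have h2 := (hw.2 i).1 h
      simp only [Pi.add_apply, Pi.smul_apply, smul_eq_mul]
      nlinarith
    · have h1 := (hv.2 i).2 h
      have h2 := (hw.2 i).2 h
      simp only [Pi.add_apply, Pi.smul_apply, smul_eq_mul]
      positivity
  have hSK : S ⊆ K := by
    rintro _ ⟨⟨i, b⟩, hx, rfl⟩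
    have hx : (i, b) ∈ A := hx
    have hx' := hA _ hx
    refine ⟨?_, fun j => ?_⟩
    · rw [Finset.sum_eq_single i]
      · cases b <;> simp_all [signedUnit, flipSign, c]
      · intro j _ hj
        simp [signedUnit, hj]
      · simp
    · by_cases hj : j = i
      · subst hj
        cases b <;> simp_all [signedUnit, flipSign]
      · simp [signedUnit, hj]
  have hvK := convexHull_min hSK hK hv
  refine ⟨v, hπ, ?_, fun i => ⟨fun h => ?_, fun h => ?_⟩⟩
  · rintro rfl
    simpa using hvK.1
  · by_contra h'
    exact absurd ((hvK.2 i).1 h') (not_le.2 h)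
  · by_contra h'
    exact absurd ((hvK.2 i).2 h') (not_le.2 h)

/-- The real `x` has the strict sign encoded by `b`. -/
def HasSign (b : Bool) (x : ℝ) : Prop := if b then 0 < x else x < 0

theorem hasSign_neg (b : Bool) (x : ℝ) : HasSign b (-x) ↔ HasSign (!b) x := by
  cases b <;> simp [HasSign]

/-- Some functional on `ℝ^k` positive on all images of signed unit vectors of `A` has its last
nonzero coordinate at position `t`, with sign `b`. -/
def ConeMeets {k : ℕ} (π : (ι → ℝ) →ₗ[ℝ] (Fin k → ℝ)) (A : Finset (ι × Bool)) (t : Fin k)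
    (b : Bool) : Prop :=
  ∃ f : (Fin k → ℝ) →ₗ[ℝ] ℝ, (∀ x ∈ A, 0 < f (π (signedUnit x))) ∧
    HasSign b (f (Pi.single t 1)) ∧ ∀ t', t < t' → f (Pi.single t' 1) = 0

omit [Fintype ι] in
theorem coneMeets_mono {k : ℕ} {π : (ι → ℝ) →ₗ[ℝ] (Fin k → ℝ)} {A B : Finset (ι × Bool)}
    (h : A ⊆ B) {t : Fin k} {b : Bool} (hB : ConeMeets π B t b) : ConeMeets π A t b := by
  obtain ⟨f, h1, h2⟩ := hB
  exact ⟨f, fun x hx => h1 x (h hx), h2⟩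

omit [Fintype ι] in
theorem coneMeets_flip {k : ℕ} (π : (ι → ℝ) →ₗ[ℝ] (Fin k → ℝ)) (A : Finset (ι × Bool))
    (t : Fin k) (b : Bool) : ConeMeets π (A.image flipSign) t b ↔ ConeMeets π A t (!b) := by
  have key : ∀ (A : Finset (ι × Bool)) b, ConeMeets π (A.image flipSign) t b →
      ConeMeets π A t (!b) := by
    rintro A b ⟨f, h1, h2, h3⟩
    refine ⟨-f, fun x hx => ?_, ?_, fun t' ht' => ?_⟩
    · have := h1 (flipSign x) (Finset.mem_image_of_mem _ hx)
      simpa [signedUnit_flipSign] using this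
    · rw [LinearMap.neg_apply, hasSign_neg]
      simpa using h2
    · simp [h3 t' ht']
  refine ⟨key A b, fun h => ?_⟩
  have := key (A.image flipSign) (!b)
  rw [flipSign_image_image, Bool.not_not] at this
  exact this h

omit [Fintype ι] in
/-- A functional that is positive somewhere and vanishes on the coordinates beyond `n` has a last
nonzero coordinate, at a position before `n`. -/
theorem exists_coneMeets {k : ℕ} {π : (ι → ℝ) →ₗ[ℝ] (Fin k → ℝ)} {A : Finset (ι × Bool)}
    (hA : A.Nonempty) (f : (Fin k → ℝ) →ₗ[ℝ] ℝ) (hf : ∀ x ∈ A, 0 < f (π (signedUnit x))) (n : ℕ)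
    (hn : ∀ t : Fin k, n ≤ t.val → f (Pi.single t 1) = 0) :
    ∃ t : Fin k, t.val < n ∧ ∃ b, ConeMeets π A t b := by
  have hne : (Finset.univ.filter fun t : Fin k => f (Pi.single t 1) ≠ 0).Nonempty := by
    by_contra h
    rw [Finset.not_nonempty_iff_eq_empty, Finset.filter_eq_empty_iff] at h
    have h0 : f = 0 := by
      refine LinearMap.pi_ext' fun t => LinearMap.ext_ring ?_
      simpa using h (Finset.mem_univ t)
    obtain ⟨x, hx⟩ := hA
    have := hf x hx
    simp [h0] at this
  obtain ⟨t, ht, hmax⟩ := Finset.exists_max_image _ id hne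
  simp only [Finset.mem_filter, Finset.mem_univ, true_and, id] at ht hmax
  refine ⟨t, ?_, ?_⟩
  · by_contra h
    exact ht (hn t (not_lt.1 h))
  · have hlast : ∀ t', t < t' → f (Pi.single t' 1) = 0 := by
      intro t' h
      by_contra h'
      exact absurd (hmax t' h') (not_le.2 h)
    rcases lt_or_gt_of_ne ht with h | h
    · exact ⟨false, f, hf, by simpa [HasSign] using h, hlast⟩
    · exact ⟨true, f, hf, by simpa [HasSign] using h, hlast⟩

omit [Fintype ι] in
/-- By convexity, meeting both open half-spaces at position `t` forces an earlier position. -/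
theorem coneMeets_both {k : ℕ} {π : (ι → ℝ) →ₗ[ℝ] (Fin k → ℝ)} {A : Finset (ι × Bool)}
    (hA : A.Nonempty) {t : Fin k} {b : Bool} (h : ConeMeets π A t b) (h' : ConeMeets π A t (!b)) :
    ∃ t' < t, ∃ b', ConeMeets π A t' b' := by
  wlog hb : b = true generalizing b
  · have hb : b = false := by simpa using hb
    subst hb
    exact this h' (by simpa using h) rfl
  subst hb
  obtain ⟨f, f1, f2, f3⟩ := h
  obtain ⟨g, g1, g2, g3⟩ := h'
  simp only [HasSign, Bool.not_true, if_true, Bool.false_eq_true, if_false] at f2 g2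
  -- This positive combination of `f` and `g` vanishes at position `t`.
  obtain ⟨t', ht', hh⟩ := exists_coneMeets (π := π) hA
    ((-g (Pi.single t 1)) • f + f (Pi.single t 1) • g) (by
      intro x hx
      have := f1 x hx
      have := g1 x hx
      have := neg_pos.2 g2
      simp only [LinearMap.add_apply, LinearMap.smul_apply, smul_eq_mul]
      positivity) t.val (by
      intro r hr
      rcases hr.eq_or_lt with hr | hr
      · have : t = r := Fin.ext hr
        subst this
        simp only [LinearMap.add_apply, LinearMap.smul_apply, smul_eq_mul]
        ring
      · simp [f3 r hr, g3 r hr])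
  exact ⟨t', ht', hh⟩

/-- Ham sandwich theorem for a subspace `V` of `ℝ^ι`, with `s` colour classes of coordinates. -/
theorem exists_bisecting_vector {s : ℕ} (V : Submodule ℝ (ι → ℝ))
    (hV : s + 1 ≤ Module.finrank ℝ V) (c : ι → Fin s) :
    ∃ v ∈ V, v ≠ 0 ∧ ∀ i,
      2 * (Finset.univ.filter fun p => c p = i ∧ 0 < v p).card ≤
        (Finset.univ.filter fun p => c p = i).card ∧
      2 * (Finset.univ.filter fun p => c p = i ∧ v p < 0).card ≤
        (Finset.univ.filter fun p => c p = i).card := by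
  by_contra! hbis
  set k := Module.finrank ℝ ((ι → ℝ) ⧸ V) with hk
  have hkV : k + Module.finrank ℝ V = Fintype.card ι := by
    rw [hk, Submodule.finrank_quotient_add_finrank, Module.finrank_fintype_fun_eq_card]
  let e : ((ι → ℝ) ⧸ V) ≃ₗ[ℝ] (Fin k → ℝ) :=
    LinearEquiv.ofFinrankEq _ _ (by simp [hk])
  let π : (ι → ℝ) →ₗ[ℝ] (Fin k → ℝ) := e.toLinearMap ∘ₗ V.mkQ
  have hπ : ∀ v, π v = 0 → v ∈ V := by
    intro v hv
    simpa [π] using hv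
  let maj : Finset (ι × Bool) → Fin s → Bool → Prop := fun A i b =>
    (Finset.univ.filter fun p => c p = i).card <
      2 * (Finset.univ.filter fun p => c p = i ∧ (p, b) ∈ A).card
  let R : Finset (ι × Bool) → Fin k ⊕ Fin s → Bool → Prop := fun A l b =>
    match l with
    | Sum.inl t => ConeMeets π A t b ∧ ∀ t' < t, ∀ b', ¬ ConeMeets π A t' b'
    | Sum.inr i => maj A i b
  have htotal : ∀ A : Finset (ι × Bool), A.Nonempty → IsSignVector A → ∃ l b, R A l b := by
    intro A hA hA'
    by_cases hf : ∃ f : (Fin k → ℝ) →ₗ[ℝ] ℝ, ∀ x ∈ A, 0 < f (π (signedUnit x))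
    · obtain ⟨f, hf⟩ := hf
      obtain ⟨t, -, ht⟩ := exists_coneMeets hA f hf k (fun t ht => absurd t.2 (not_lt.2 ht))
      obtain ⟨t₀, ht₀, hmin⟩ := Finset.exists_min_image
        (Finset.univ.filter fun t => ∃ b, ConeMeets π A t b) id ⟨t, by simpa using ht⟩
      simp only [Finset.mem_filter, Finset.mem_univ, true_and, id] at ht₀ hmin
      obtain ⟨b, hb⟩ := ht₀
      exact ⟨Sum.inl t₀, b, hb, fun t' ht' b' h => absurd (hmin t' ⟨b', h⟩) (not_le.2 ht')⟩
    · obtain ⟨v, hv, hv0, hvA⟩ := gordan_alternative π A hA' hf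
      obtain ⟨i, hi⟩ := hbis v (hπ v hv) hv0
      by_cases hp : 2 * (Finset.univ.filter fun p => c p = i ∧ 0 < v p).card ≤
        (Finset.univ.filter fun p => c p = i).card
      · refine ⟨Sum.inr i, false, (hi hp).trans_le (Nat.mul_le_mul_left 2 (Finset.card_le_card ?_))⟩
        exact Finset.monotone_filter_right _ fun p _ hp => ⟨hp.1, (hvA p).2 hp.2⟩
      · refine ⟨Sum.inr i, true,
          (not_le.1 hp).trans_le (Nat.mul_le_mul_left 2 (Finset.card_le_card ?_))⟩
        exact Finset.monotone_filter_right _ fun p _ hp => ⟨hp.1, (hvA p).1 hp.2⟩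
  obtain ⟨A, B, l, b, hA, hB, hAB, h1, h2⟩ := octahedral_tucker_rel (L := Fin k ⊕ Fin s)
    (by simp; omega) R htotal (by
      intro A l b
      cases l with
      | inl t => simp only [R, coneMeets_flip, Bool.forall_bool, Bool.not_true, Bool.not_false,
          and_comm]
      | inr i => simp only [R, maj, mem_image_flipSign, flipSign])
  cases l with
  | inl t =>
    obtain ⟨t', ht', b', h⟩ := coneMeets_both hA h1.1 (coneMeets_mono hAB h2.1)
    exact h1.2 t' ht' b' h
  | inr i =>
    simp only [R, maj] at h1 h2
    have h3 : (Finset.univ.filter fun p => c p = i ∧ (p, b) ∈ A).card ≤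
        (Finset.univ.filter fun p => c p = i ∧ (p, b) ∈ B).card :=
      Finset.card_le_card (Finset.monotone_filter_right _ fun p _ hp => ⟨hp.1, hAB hp.2⟩)
    have h4 : (Finset.univ.filter fun p => c p = i ∧ (p, b) ∈ B).card +
        (Finset.univ.filter fun p => c p = i ∧ (p, !b) ∈ B).card ≤
        (Finset.univ.filter fun p => c p = i).card := by
      rw [← Finset.card_union_of_disjoint]
      · refine Finset.card_le_card fun p hp => ?_
        simp only [Finset.mem_union, Finset.mem_filter, Finset.mem_univ, true_and] at hp ⊢
        tauto
      · rw [Finset.disjoint_filter]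
        intro p _ hp hp'
        exact hB _ hp.2 hp'.2
    omega

end HamSandwich

/-! ### Bisecting polynomials and divisibility -/

section Polynomials

/-- Exponents of the monomials spanning the search space: the exponent of the variable `i₀` is
less than `a`, and all exponents are at most `q`. -/
noncomputable def boxExponents (i₀ : Fin 3) (a q : ℕ) : Finset (Fin 3 →₀ ℕ) :=
  (Fintype.piFinset fun j => Finset.range (if j = i₀ then min a (q + 1) else q + 1)).map
    Finsupp.equivFunOnFinite.symm.toEmbedding

theorem mem_boxExponents {i₀ : Fin 3} {a q : ℕ} {e : Fin 3 →₀ ℕ} :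
    e ∈ boxExponents i₀ a q ↔ ∀ j, e j < if j = i₀ then min a (q + 1) else q + 1 := by
  unfold boxExponents
  rw [Finset.mem_map_equiv]
  simp [Fintype.mem_piFinset]

theorem card_boxExponents (i₀ : Fin 3) (a q : ℕ) :
    (boxExponents i₀ a q).card = min a (q + 1) * (q + 1) ^ 2 := by
  unfold boxExponents
  rw [Finset.card_map, Fintype.card_piFinset, Fin.prod_univ_three]
  fin_cases i₀ <;> simp <;> ring

/-- A nonzero polynomial with exponents in the box is not divisible by `f` once the leading
exponent of `f` lies outside the box: leading exponents add under multiplication. -/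
theorem not_dvd_of_support_subset {f h : MvPolynomial (Fin 3) ℝ} (hh : h ≠ 0) {i₀ : Fin 3}
    {a q : ℕ} (ha : a ≤ MonomialOrder.degLex.degree f i₀)
    (hsupp : h.support ⊆ boxExponents i₀ a q) : ¬ f ∣ h := by
  rintro ⟨g, rfl⟩
  have h1 := mem_boxExponents.1 (hsupp (MonomialOrder.degLex.degree_mem_support hh)) i₀
  rw [MonomialOrder.degLex.degree_mul' hh, if_pos rfl, Finsupp.add_apply] at h1
  omega

theorem totalDegree_le_of_support_subset {h : MvPolynomial (Fin 3) ℝ} {i₀ : Fin 3} {a q : ℕ}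
    (hsupp : h.support ⊆ boxExponents i₀ a q) : h.totalDegree ≤ 3 * q := by
  refine Finset.sup_le fun e he => ?_
  have h1 : ∀ j, e j ≤ q := by
    intro j
    have := mem_boxExponents.1 (hsupp he) j
    split_ifs at this <;> omega
  rw [Finsupp.sum_fintype _ _ (fun _ => rfl), Fin.sum_univ_three]
  have := h1 0
  have := h1 1
  have := h1 2
  omega

/-- Polynomial ham sandwich theorem within the span of a set of more than `s` monomials. -/
theorem exists_bisecting_polynomial {s : ℕ} (G : Finset (Fin 3 →₀ ℕ)) (hG : s + 1 ≤ G.card)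
    (U : Fin s → Finset (EuclideanSpace ℝ (Fin 3))) :
    ∃ h : MvPolynomial (Fin 3) ℝ, h ≠ 0 ∧ h.support ⊆ G ∧
      ∀ i, 2 * ((U i).filter fun p => 0 < MvPolynomial.eval (fun t => p t) h).card
                  ≤ (U i).card ∧
               2 * ((U i).filter fun p => MvPolynomial.eval (fun t => p t) h < 0).card
                  ≤ (U i).card := by
  let W := MvPolynomial.restrictSupport ℝ (G : Set (Fin 3 →₀ ℕ))
  have hWfin : Module.finrank ℝ W = G.card := by
    rw [Module.finrank_eq_card_basis (MvPolynomial.basisRestrictSupport ℝ _)]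
    simp
  let ι := Σ i : Fin s, U i
  let ev : W →ₗ[ℝ] (ι → ℝ) := LinearMap.pi fun x =>
    (MvPolynomial.aeval (R := ℝ) (fun t => x.2.1 t)).toLinearMap ∘ₗ W.subtype
  have hev : ∀ (h : W) (x : ι), ev h x = MvPolynomial.eval (fun t => x.2.1 t) h.1 := by
    intro h x
    simp [ev, MvPolynomial.aeval_eq_eval]
  -- If the evaluation map is not injective, some polynomial vanishes at all the points.
  by_cases hinj : LinearMap.ker ev = ⊥
  swap
  · obtain ⟨h, hker, h0⟩ := Submodule.exists_mem_ne_zero_of_ne_bot hinj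
    refine ⟨h.1, by simpa using h0, by simpa using (MvPolynomial.mem_restrictSupport_iff ℝ).1 h.2, ?_⟩
    intro i
    have hz : ∀ p ∈ U i, MvPolynomial.eval (fun t => p t) h.1 = 0 := by
      intro p hp
      rw [← hev h ⟨i, p, hp⟩, LinearMap.mem_ker.1 hker]
      rfl
    rw [Finset.filter_false_of_mem (fun p hp => by simp [hz p hp]),
      Finset.filter_false_of_mem (fun p hp => by simp [hz p hp])]
    simp
  · obtain ⟨v, ⟨h, rfl⟩, hv0, hv⟩ := exists_bisecting_vector (LinearMap.range ev) (by
      rw [LinearMap.finrank_range_of_inj (LinearMap.ker_eq_bot.1 hinj), hWfin]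
      exact hG) (fun x : ι => x.1)
    refine ⟨h.1, ?_, by simpa using (MvPolynomial.mem_restrictSupport_iff ℝ).1 h.2, ?_⟩
    · intro h0
      apply hv0
      have : h = 0 := Subtype.ext h0
      rw [this, map_zero]
    have hcard : ∀ (i : Fin s) (P : ℝ → Prop),
        (Finset.univ.filter fun x : ι => x.1 = i ∧ P (ev h x)).card =
          ((U i).filter fun p => P (MvPolynomial.eval (fun t => p t) h.1)).card := by
      intro i P
      symm
      refine Finset.card_bij (fun p hp => ⟨i, p, (Finset.mem_filter.1 hp).1⟩) ?_ ?_ ?_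
      · intro p hp
        simp only [Finset.mem_filter, Finset.mem_univ, true_and, hev] at hp ⊢
        exact hp.2
      · intro p hp p' hp' hpp
        exact congrArg Subtype.val (eq_of_heq (Sigma.mk.inj hpp).2)
      · rintro ⟨j, p, hp⟩ hx
        simp only [Finset.mem_filter, Finset.mem_univ, true_and, hev] at hx
        obtain ⟨rfl, hx⟩ := hx
        exact ⟨p, by simpa using ⟨hp, hx⟩, rfl⟩
    intro i
    have h1 := hcard i (fun y => 0 < y)
    have h2 := hcard i (fun y => y < 0)
    have h3 := hcard i (fun _ => True)
    simp only [and_true, Finset.filter_true] at h3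
    rw [← h1, ← h2, ← h3]
    exact hv i

end Polynomials

theorem ham_sandwich_avoiding_irreducible_factor :
    ∃ C : ℝ, 0 < C ∧
      ∀ (f : MvPolynomial (Fin 3) ℝ) (D : ℕ),
        Irreducible f → f.totalDegree = D → 1 ≤ D →
      ∀ (s : ℕ), 1 ≤ s →
      ∀ U : Fin s → Finset (EuclideanSpace ℝ (Fin 3)),
        ∃ h : MvPolynomial (Fin 3) ℝ, h ≠ 0 ∧ ¬ f ∣ h ∧
          (h.totalDegree : ℝ)
            ≤ C * max ((s : ℝ) ^ ((1 : ℝ) / 3)) (((s : ℝ) / (D : ℝ)) ^ ((1 : ℝ) / 2)) ∧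
          ∀ i, 2 * ((U i).filter fun p => 0 < MvPolynomial.eval (fun t => p t) h).card
                  ≤ (U i).card ∧
               2 * ((U i).filter fun p => MvPolynomial.eval (fun t => p t) h < 0).card
                  ≤ (U i).card := by
  refine ⟨6, by norm_num, fun f D _ hD hD1 s _ U => ?_⟩
  set M : ℝ := max ((s : ℝ) ^ ((1 : ℝ) / 3)) (((s : ℝ) / (D : ℝ)) ^ ((1 : ℝ) / 2)) with hM
  have hDpos : (0 : ℝ) < D := by exact_mod_cast hD1
  have hM0 : 0 ≤ M := le_max_of_le_left (by positivity)
  have hM3 : (s : ℝ) ≤ M ^ 3 := by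
    have : (s : ℝ) = ((s : ℝ) ^ ((1 : ℝ) / 3)) ^ 3 := by
      rw [← Real.rpow_mul_natCast (by positivity)]; norm_num
    rw [this]
    exact pow_le_pow_left₀ (by positivity) (le_max_left _ _) 3
  have hM2 : (s : ℝ) ≤ D * M ^ 2 := by
    have : (s : ℝ) / D = (((s : ℝ) / D) ^ ((1 : ℝ) / 2)) ^ 2 := by
      rw [← Real.rpow_mul_natCast (by positivity)]; norm_num
    rw [← div_le_iff₀' hDpos, this]
    exact pow_le_pow_left₀ (by positivity) (le_max_right _ _) 2
  -- Some variable carries at least a third of the total degree of the leading monomial of `f`.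
  obtain ⟨i₀, hi₀⟩ : ∃ i₀, D ≤ 3 * MonomialOrder.degLex.degree f i₀ := by
    by_contra! hlt
    have := MvPolynomial.degree_degLexDegree (f := f)
    rw [hD, Finsupp.degree_eq_sum, Fin.sum_univ_three] at this
    have := hlt 0
    have := hlt 1
    have := hlt 2
    omega
  set a := MonomialOrder.degLex.degree f i₀ with ha
  -- The factor `2 ≥ √3` makes up for the loss of `3` in `D ≤ 3 * a`.
  set q := ⌊2 * M⌋₊ with hq
  have hq1 : 2 * M < q + 1 := Nat.lt_floor_add_one _
  have hq2 : (q : ℝ) ≤ 2 * M := Nat.floor_le (by positivity)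
  have hcard : s + 1 ≤ (boxExponents i₀ a q).card := by
    rw [card_boxExponents, Nat.succ_le_iff]
    rcases min_cases a (q + 1) with ⟨h, _⟩ | ⟨h, _⟩
    · rw [h]
      have h3a : (D : ℝ) ≤ 3 * a := by exact_mod_cast hi₀
      have h4 : (2 * M) ^ 2 < ((q : ℝ) + 1) ^ 2 := pow_lt_pow_left₀ hq1 (by positivity) two_ne_zero
      have hapos : (0 : ℝ) < a := by linarith
      have h5 : (a : ℝ) * (2 * M) ^ 2 < a * ((q : ℝ) + 1) ^ 2 := mul_lt_mul_of_pos_left h4 hapos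
      have h6 : (D : ℝ) * M ^ 2 ≤ 3 * a * M ^ 2 := mul_le_mul_of_nonneg_right h3a (by positivity)
      have h7 : 0 ≤ (a : ℝ) * M ^ 2 := by positivity
      have : (s : ℝ) < a * ((q : ℝ) + 1) ^ 2 := by nlinarith
      exact_mod_cast this
    · rw [h, ← pow_succ']
      have h4 : M ^ 3 < ((q : ℝ) + 1) ^ 3 := pow_lt_pow_left₀ (by linarith) hM0 three_ne_zero
      have : (s : ℝ) < ((q : ℝ) + 1) ^ 3 := by linarith
      exact_mod_cast this
  obtain ⟨h, h0, hsupp, hbis⟩ := exists_bisecting_polynomial _ hcard U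
  refine ⟨h, h0, not_dvd_of_support_subset h0 ha.le hsupp, ?_, hbis⟩
  have : (h.totalDegree : ℝ) ≤ 3 * q := by
    exact_mod_cast totalDegree_le_of_support_subset hsupp
  linarith
end

section
/- Let f ∈ ℝ[x,y,z] be an irreducible polynomial and let a ∈ ℝ³. If the unit sphere σ = {x ∈ ℝ³ : ‖x − a‖ = 1} is contained in Z(f), then Z(f) = σ. -/
/-!
Write `f` as a univariate polynomial in its first variable `x₀` over `ℝ[x₁, x₂]`. There the sphere
polynomial `S = (x₀ - a₀)² + ((x₁ - a₁)² + (x₂ - a₂)² - 1)` is monic of degree two, so `f` can be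
divided by it with a remainder of degree at most one. Over every `(x₁, x₂)` in the open unit disc
around `(a₁, a₂)` the sphere has two distinct points, and the remainder vanishes at both; hence
its coefficients vanish at every point of a nonempty open box, and the remainder is zero
(`spherePoly_dvd`). So `S ∣ f`; as `S` has a real zero it is not a unit, and irreducibility of `f`
makes `f` a unit multiple of `S`, which gives the equality of the zero sets.
-/

open MvPolynomial in
/-- The unit sphere polynomial centered at `a`, as a univariate polynomial in the coordinate `x₀`
over `ℝ[x₁, x₂]` (these are `X 0` and `X 1` of the coefficient ring). -/
noncomputable def spherePoly (a : Fin 3 → ℝ) : Polynomial (MvPolynomial (Fin 2) ℝ) :=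
  (Polynomial.X - Polynomial.C (C (a 0))) ^ 2
    + Polynomial.C ((X 0 - C (a 1)) ^ 2 + (X 1 - C (a 2)) ^ 2 - 1)

theorem degree_spherePoly_aux (a : Fin 3 → ℝ) :
    ((Polynomial.X - Polynomial.C (MvPolynomial.C (a 0))) ^ 2 :
      Polynomial (MvPolynomial (Fin 2) ℝ)).degree = 2 := by
  rw [Polynomial.degree_pow, Polynomial.degree_X_sub_C]; rfl

theorem spherePoly_monic (a : Fin 3 → ℝ) : (spherePoly a).Monic := by
  refine Polynomial.Monic.add_of_left ((Polynomial.monic_X_sub_C _).pow 2) ?_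
  rw [degree_spherePoly_aux]
  exact Polynomial.degree_C_le.trans_lt (by norm_num)

theorem degree_spherePoly (a : Fin 3 → ℝ) : (spherePoly a).degree = 2 := by
  rw [spherePoly, Polynomial.degree_add_eq_left_of_degree_lt, degree_spherePoly_aux]
  rw [degree_spherePoly_aux]
  exact Polynomial.degree_C_le.trans_lt (by norm_num)

theorem eval_spherePoly (a : Fin 3 → ℝ) (t : ℝ) (s : Fin 2 → ℝ) :
    ((spherePoly a).map (MvPolynomial.eval s)).eval t
      = (t - a 0) ^ 2 + ((s 0 - a 1) ^ 2 + (s 1 - a 2) ^ 2 - 1) := by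
  simp [spherePoly]

/-- If `F` vanishes on the unit sphere centered at `a`, then the sphere polynomial divides `F`. -/
theorem spherePoly_dvd (a : Fin 3 → ℝ) (F : Polynomial (MvPolynomial (Fin 2) ℝ))
    (hF : ∀ (t : ℝ) (s : Fin 2 → ℝ),
      (t - a 0) ^ 2 + ((s 0 - a 1) ^ 2 + (s 1 - a 2) ^ 2 - 1) = 0 →
        (F.map (MvPolynomial.eval s)).eval t = 0) :
    spherePoly a ∣ F := by
  have hm := spherePoly_monic a
  rw [← Polynomial.modByMonic_eq_zero_iff_dvd hm]
  have hdeg : (F %ₘ spherePoly a).degree < 2 :=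
    degree_spherePoly a ▸ Polynomial.degree_modByMonic_lt F hm
  have hdiv := Polynomial.modByMonic_add_div F (spherePoly a)
  set R := F %ₘ spherePoly a
  have hR : ∀ (t : ℝ) (s : Fin 2 → ℝ),
      (t - a 0) ^ 2 + ((s 0 - a 1) ^ 2 + (s 1 - a 2) ^ 2 - 1) = 0 →
        (R.map (MvPolynomial.eval s)).eval t = 0 := by
    intro t s h
    have h1 := hF t s h
    rw [← hdiv, Polynomial.map_add, Polynomial.map_mul, Polynomial.eval_add, Polynomial.eval_mul,
      eval_spherePoly, h, zero_mul, add_zero] at h1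
    exact h1
  -- A linear polynomial with the two distinct roots `a 0 ± √(1 - …)` is zero.
  have hzero : ∀ s : Fin 2 → ℝ, (s 0 - a 1) ^ 2 + (s 1 - a 2) ^ 2 < 1 →
      R.map (MvPolynomial.eval s) = 0 := by
    intro s hs
    set d := 1 - ((s 0 - a 1) ^ 2 + (s 1 - a 2) ^ 2) with hd
    have hdpos : 0 < d := by linarith
    have hsq := Real.sq_sqrt hdpos.le
    have hpos := Real.sqrt_pos.2 hdpos
    refine Polynomial.eq_zero_of_degree_lt_of_eval_finset_eq_zero
      ({a 0 + √d, a 0 - √d} : Finset ℝ) ?_ ?_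
    · rw [Finset.card_pair (by intro h; linarith)]
      exact Polynomial.degree_map_le.trans_lt hdeg
    · intro t ht
      apply hR
      simp only [Finset.mem_insert, Finset.mem_singleton] at ht
      rcases ht with rfl | rfl <;> ring_nf <;> rw [hsq, hd] <;> ring
  ext1 n
  rw [Polynomial.coeff_zero]
  -- A box of side one inscribed in the open disc is a product of infinite sets.
  refine MvPolynomial.funext_set
    (fun i : Fin 2 => Set.Ioo (a i.succ - 1 / 2) (a i.succ + 1 / 2))
    (fun i => Set.Ioo_infinite (by linarith)) ?_
  intro s hs
  have h0 := hs 0 trivial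
  have h1 := hs 1 trivial
  simp only [Fin.succ_zero_eq_one, Fin.succ_one_eq_two, Set.mem_Ioo] at h0 h1
  have := hzero s (by nlinarith)
  rw [← Polynomial.coeff_map, this]
  simp

theorem irreducible_zero_set_containing_sphere_is_sphere
    (f : MvPolynomial (Fin 3) ℝ) (hf : Irreducible f)
    (a : EuclideanSpace ℝ (Fin 3))
    (hsub : {x : EuclideanSpace ℝ (Fin 3) | ‖x - a‖ = 1}
      ⊆ {p : EuclideanSpace ℝ (Fin 3) | MvPolynomial.eval (fun i => p i) f = 0}) :
    {p : EuclideanSpace ℝ (Fin 3) | MvPolynomial.eval (fun i => p i) f = 0}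
      = {x : EuclideanSpace ℝ (Fin 3) | ‖x - a‖ = 1} := by
  have hnorm : ∀ x : EuclideanSpace ℝ (Fin 3), ‖x - a‖ = 1 ↔
      (x 0 - a 0) ^ 2 + ((x 1 - a 1) ^ 2 + (x 2 - a 2) ^ 2 - 1) = 0 := by
    intro x
    rw [← sq_eq_sq₀ (norm_nonneg _) zero_le_one, EuclideanSpace.norm_sq_eq, Fin.sum_univ_three]
    simp only [PiLp.sub_apply, Real.norm_eq_abs, sq_abs]
    constructor <;> intro h <;> linarith
  have hcons : ∀ p : Fin 3 → ℝ, p = Fin.cons (p 0) ![p 1, p 2] := by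
    intro p; ext i; fin_cases i <;> rfl
  have hdvd : spherePoly a ∣ MvPolynomial.finSuccEquiv ℝ 2 f := by
    apply spherePoly_dvd
    intro t s h
    rw [← MvPolynomial.eval_eq_eval_mv_eval']
    have hmem : ‖(!₂[t, s 0, s 1] : EuclideanSpace ℝ (Fin 3)) - a‖ = 1 := by
      rw [hnorm]; simpa using h
    have h2 := hsub hmem
    rw [Set.mem_ofPred_eq] at h2
    convert h2 using 2
    congr 1
    ext i; fin_cases i <;> rfl
  obtain ⟨Q, hQ⟩ := hdvd
  have hirr : Irreducible (MvPolynomial.finSuccEquiv ℝ 2 f) :=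
    (MulEquiv.irreducible_iff (MvPolynomial.finSuccEquiv ℝ 2)).2 hf
  -- `a + (1, 0, 0)` lies on the sphere, and a unit has no zeros.
  have hnu : ¬ IsUnit (spherePoly a) := by
    intro hu
    have h := (hu.map (Polynomial.mapRingHom (MvPolynomial.eval ![a 1, a 2]))).map
      (Polynomial.evalRingHom (a 0 + 1))
    simp only [Polynomial.coe_mapRingHom, Polynomial.coe_evalRingHom] at h
    rw [eval_spherePoly] at h
    simp at h
  have hQu : IsUnit Q := (hirr.isUnit_or_isUnit hQ).resolve_left hnu
  refine Set.Subset.antisymm (fun p hp => ?_) hsub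
  rw [Set.mem_ofPred_eq] at hp ⊢
  rw [hcons (fun i => p i), MvPolynomial.eval_eq_eval_mv_eval', hQ, Polynomial.map_mul,
    Polynomial.eval_mul, eval_spherePoly] at hp
  have hQ0 := (hQu.map (Polynomial.mapRingHom (MvPolynomial.eval ![p 1, p 2]))).map
    (Polynomial.evalRingHom (p 0))
  rw [hnorm]
  simpa using (mul_eq_zero.1 hp).resolve_right hQ0.ne_zero
end

section
/- Let g ∈ ℝ[x,y,z] be a nonzero polynomial of total degree E. Then the set of points a ∈ ℝ³ such that the unit sphere {x ∈ ℝ³ : ‖x − a‖ = 1} is contained in Z(g) is finite, and its cardinality is at most E/2. -/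
/-!
View `ℝ[x,y,z]` as `R[X]` with `R = ℝ[y,z]`. The equation of the unit sphere centred at `a` becomes
a monic quadratic `sphereEq a` in `R[X]`. It is irreducible, since evaluating a root in `R` at
`(y,z) = (a₁ + 2, a₂)` would give a real number of square `-3` (`sphereEq_irreducible`). If a polynomial
vanishes on the sphere, its remainder modulo `sphereEq a` is linear in `X` and has two distinct
roots over every `(y,z)` in a small square about the centre, so it is zero and `sphereEq a` divides
the polynomial (`sphereEq_dvd`). Distinct centres give non-associated irreducibles, so for `n`
spheres the product of their equations, of degree `2n` in `X`, divides `g`; hence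
`2n ≤ deg_x g ≤ E`.
-/

open Polynomial in
/-- The equation `(X - a₀)² + ((y - a₁)² + (z - a₂)² - 1)` of the unit sphere centred at `a`, as a
polynomial in the first coordinate `X` with coefficients in `ℝ[y,z]`. -/
noncomputable def sphereEq (a : EuclideanSpace ℝ (Fin 3)) : (MvPolynomial (Fin 2) ℝ)[X] :=
  (X - C (MvPolynomial.C (a 0))) ^ 2 +
    C ((MvPolynomial.X 0 - MvPolynomial.C (a 1)) ^ 2 +
      (MvPolynomial.X 1 - MvPolynomial.C (a 2)) ^ 2 - 1)

lemma sphereEq_natDegree (a : EuclideanSpace ℝ (Fin 3)) : (sphereEq a).natDegree = 2 := by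
  unfold sphereEq
  rw [Polynomial.natDegree_add_C, Polynomial.natDegree_pow, Polynomial.natDegree_X_sub_C]

lemma sphereEq_monic (a : EuclideanSpace ℝ (Fin 3)) : (sphereEq a).Monic := by
  unfold sphereEq
  apply ((Polynomial.monic_X_sub_C _).pow 2).add_of_left
  refine lt_of_le_of_lt Polynomial.degree_C_le ?_
  rw [Polynomial.degree_pow, Polynomial.degree_X_sub_C]
  norm_num

lemma eval_map_sphereEq (a : EuclideanSpace ℝ (Fin 3)) (s : Fin 2 → ℝ) (t : ℝ) :
    ((sphereEq a).map (MvPolynomial.eval s)).eval t =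
      (t - a 0) ^ 2 + ((s 0 - a 1) ^ 2 + (s 1 - a 2) ^ 2 - 1) := by
  simp [sphereEq]

lemma sphereEq_irreducible (a : EuclideanSpace ℝ (Fin 3)) : Irreducible (sphereEq a) := by
  rw [(sphereEq_monic a).irreducible_iff_roots_eq_zero_of_degree_le_three
    (sphereEq_natDegree a).ge (by rw [sphereEq_natDegree]; norm_num)]
  refine Multiset.eq_zero_of_forall_notMem fun r hr => ?_
  have h := Polynomial.isRoot_of_mem_roots hr
  -- Over `(y, z) = (a₁ + 2, a₂)` the equation of the sphere has no real solution.
  have h2 := congrArg (MvPolynomial.eval ![a 1 + 2, a 2]) h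
  simp [sphereEq] at h2
  nlinarith [sq_nonneg ((MvPolynomial.eval ![a 1 + 2, a 2]) r - a 0)]

lemma sphereEq_injective : Function.Injective sphereEq := by
  intro a b h
  have key : ∀ t y z : ℝ, (t - a 0) ^ 2 + ((y - a 1) ^ 2 + (z - a 2) ^ 2 - 1) =
      (t - b 0) ^ 2 + ((y - b 1) ^ 2 + (z - b 2) ^ 2 - 1) := by
    intro t y z
    have := eval_map_sphereEq a ![y, z] t
    rw [h, eval_map_sphereEq b] at this
    simpa using this.symm
  have k0 := key 0 0 0
  have k1 := key 1 0 0
  have k2 := key 0 1 0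
  have k3 := key 0 0 1
  ext i
  fin_cases i <;> simp <;> linarith

lemma sphereEq_isRelPrime {a b : EuclideanSpace ℝ (Fin 3)} (hab : a ≠ b) :
    IsRelPrime (sphereEq a) (sphereEq b) := by
  rw [(sphereEq_irreducible a).isRelPrime_iff_not_dvd]
  intro h
  have h1 := (sphereEq_irreducible a).associated_of_dvd (sphereEq_irreducible b) h
  exact hab (sphereEq_injective
    (Polynomial.eq_of_monic_of_associated (sphereEq_monic a) (sphereEq_monic b) h1))

/-- Nullstellensatz for a real sphere: its equation divides every polynomial vanishing on it. -/
lemma sphereEq_dvd (g : MvPolynomial (Fin 3) ℝ) (a : EuclideanSpace ℝ (Fin 3))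
    (ha : ∀ x : EuclideanSpace ℝ (Fin 3), ‖x - a‖ = 1 → MvPolynomial.eval (fun i => x i) g = 0) :
    sphereEq a ∣ MvPolynomial.finSuccEquiv ℝ 2 g := by
  set p := MvPolynomial.finSuccEquiv ℝ 2 g with hp
  rw [← Polynomial.modByMonic_eq_zero_iff_dvd (sphereEq_monic a)]
  set r := p %ₘ sphereEq a with hr
  have hdeg : r.natDegree < 2 := by
    refine (Polynomial.natDegree_modByMonic_lt p (sphereEq_monic a) ?_).trans_eq
      (sphereEq_natDegree a)
    intro h
    have := sphereEq_natDegree a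
    rw [h] at this
    simp at this
  have hroot : ∀ (s : Fin 2 → ℝ) (t : ℝ),
      (t - a 0) ^ 2 + ((s 0 - a 1) ^ 2 + (s 1 - a 2) ^ 2 - 1) = 0 →
      (r.map (MvPolynomial.eval s)).eval t = 0 := by
    intro s t hst
    have h1 : (p.map (MvPolynomial.eval s)).eval t = 0 := by
      rw [hp, ← MvPolynomial.eval_eq_eval_mv_eval']
      have := ha (WithLp.toLp 2 (Fin.cons t s)) (by
        rw [EuclideanSpace.norm_eq, Real.sqrt_eq_one]
        simp only [Fin.sum_univ_three, Real.norm_eq_abs, sq_abs]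
        change (t - a 0) ^ 2 + (s 0 - a 1) ^ 2 + (s 1 - a 2) ^ 2 = 1
        linarith)
      simpa using this
    have h2 := Polynomial.modByMonic_add_div p (sphereEq a)
    rw [← h2, Polynomial.map_add, Polynomial.map_mul, Polynomial.eval_add, Polynomial.eval_mul,
      eval_map_sphereEq, hst, zero_mul, add_zero] at h1
    exact h1
  -- Over the open unit disc about `(a₁, a₂)` the line meets the sphere twice, so the linear
  -- polynomial `r` specializes to zero there.
  have hzero : ∀ s : Fin 2 → ℝ, (s 0 - a 1) ^ 2 + (s 1 - a 2) ^ 2 < 1 →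
      r.map (MvPolynomial.eval s) = 0 := by
    intro s hs
    set w := Real.sqrt (1 - ((s 0 - a 1) ^ 2 + (s 1 - a 2) ^ 2)) with hw
    have hwpos : 0 < w := Real.sqrt_pos.mpr (by linarith)
    have hw2 : w ^ 2 = 1 - ((s 0 - a 1) ^ 2 + (s 1 - a 2) ^ 2) := Real.sq_sqrt (by linarith)
    have hne : a 0 + w ≠ a 0 - w := by intro h; linarith
    refine Polynomial.eq_zero_of_natDegree_lt_card_of_eval_eq_zero' _ {a 0 + w, a 0 - w} ?_ ?_
    · intro t ht
      apply hroot
      rcases Finset.mem_insert.mp ht with rfl | ht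
      · linear_combination hw2
      · rw [Finset.mem_singleton.mp ht]
        linear_combination hw2
    · rw [Finset.card_pair hne]
      exact lt_of_le_of_lt Polynomial.natDegree_map_le hdeg
  -- The coefficients of `r` vanish on a product of intervals inside the disc.
  ext1 n
  rw [Polynomial.coeff_zero]
  refine MvPolynomial.funext_set
    (fun i : Fin 2 => Set.Ioo (a i.succ - 1 / 2) (a i.succ + 1 / 2))
    (fun i => Set.Ioo_infinite (by linarith)) fun s hs => ?_
  have b0 := hs 0 (Set.mem_univ _)
  have b1 := hs 1 (Set.mem_univ _)
  change a 1 - 1 / 2 < s 0 ∧ s 0 < a 1 + 1 / 2 at b0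
  change a 2 - 1 / 2 < s 1 ∧ s 1 < a 2 + 1 / 2 at b1
  have h := hzero s (by nlinarith)
  have := congrArg (fun q => q.coeff n) h
  simpa [Polynomial.coeff_map] using this

theorem few_spheres_in_zero_set
    (g : MvPolynomial (Fin 3) ℝ) (hg : g ≠ 0) (E : ℕ) (hE : g.totalDegree = E) :
    {a : EuclideanSpace ℝ (Fin 3) |
        ∀ x : EuclideanSpace ℝ (Fin 3), ‖x - a‖ = 1 →
          MvPolynomial.eval (fun i => x i) g = 0}.Finite ∧
    2 * {a : EuclideanSpace ℝ (Fin 3) |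
        ∀ x : EuclideanSpace ℝ (Fin 3), ‖x - a‖ = 1 →
          MvPolynomial.eval (fun i => x i) g = 0}.ncard ≤ E := by
  set S := {a : EuclideanSpace ℝ (Fin 3) |
        ∀ x : EuclideanSpace ℝ (Fin 3), ‖x - a‖ = 1 →
          MvPolynomial.eval (fun i => x i) g = 0} with hS
  have key : ∀ T : Finset (EuclideanSpace ℝ (Fin 3)), (T : Set _) ⊆ S → 2 * T.card ≤ E := by
    intro T hT
    have hdvd : ∏ a ∈ T, sphereEq a ∣ MvPolynomial.finSuccEquiv ℝ 2 g :=
      Finset.prod_dvd_of_isRelPrime (fun a _ b _ hab => sphereEq_isRelPrime hab)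
        (fun a haT => sphereEq_dvd g a (hT haT))
    have hne : MvPolynomial.finSuccEquiv ℝ 2 g ≠ 0 := by simpa using hg
    have h := Polynomial.natDegree_le_of_dvd hdvd hne
    rw [Polynomial.natDegree_prod_of_monic _ _ (fun a _ => sphereEq_monic a),
      MvPolynomial.natDegree_finSuccEquiv] at h
    simp only [sphereEq_natDegree, Finset.sum_const, smul_eq_mul] at h
    have := MvPolynomial.degreeOf_le_totalDegree g 0
    omega
  have hfin : S.Finite := by
    by_contra hinf
    obtain ⟨T, hTS, hT⟩ := Set.Infinite.exists_subset_card_eq hinf (E + 1)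
    have := key T hTS
    omega
  refine ⟨hfin, ?_⟩
  rw [Set.ncard_eq_toFinset_card S hfin]
  exact key _ (by simp)
end

section
/- There exists an absolute constant C > 0 such that for every nonzero bivariate real polynomial f ∈ ℝ[x,y] of total degree d ≥ 1, the set of connected components of Z(f) ⊆ ℝ² is finite and has cardinality at most C · d². -/
/-!
The bound holds with `C = 1`: a set of at most `d ^ 2` points meets every component of `Z(f)`.

Let `f` be irreducible and fix a point `o`. Each component of `Z(f)` is closed, so it has a point
nearest to `o`, and there the gradient of `f` is parallel to the vector from `o`
(`exists_crit_mem_component`, resting on the inverse function theorem through `exists_closer`). Such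
points are common zeros of `f` and of `crit f o`, a polynomial of degree at most `d`. For a suitable
`o` it is not divisible by `f` (`exists_not_dvd_crit`), and Bézout's inequality
(`card_le_mul_totalDegree`, a dimension count in spaces of polynomials of bounded degree) leaves at
most `d ^ 2` of them. The general case follows by adding up over the prime factors of `f`
(`exists_finset`).
-/

open MvPolynomial

/-! ### Calculus of polynomial functions -/

theorem hasStrictFDerivAt_eval (f : MvPolynomial (Fin 2) ℝ) (p : EuclideanSpace ℝ (Fin 2)) :
    HasStrictFDerivAt (fun p : EuclideanSpace ℝ (Fin 2) => eval (fun i => p i) f)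
      (∑ i, eval (fun i => p i) (pderiv i f) • (EuclideanSpace.proj i : EuclideanSpace ℝ (Fin 2) →L[ℝ] ℝ)) p := by
  induction f using MvPolynomial.induction_on with
  | C a => simpa using hasStrictFDerivAt_const a p
  | add f g hf hg =>
    simp only [map_add, add_smul, Finset.sum_add_distrib]
    exact hf.add hg
  | mul_X f i hf =>
    have hX : HasStrictFDerivAt (fun p : EuclideanSpace ℝ (Fin 2) => p i)
        (EuclideanSpace.proj i : EuclideanSpace ℝ (Fin 2) →L[ℝ] ℝ) p :=
      (EuclideanSpace.proj i : EuclideanSpace ℝ (Fin 2) →L[ℝ] ℝ).hasStrictFDerivAt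
    have h := hf.mul hX
    simp only [map_mul, eval_X]
    refine h.congr_fderiv ?_
    ext v
    fin_cases i <;> simp [pderiv_X, Pi.single_apply, Fin.sum_univ_two] <;> ring

/-! ### Degrees of partial derivatives -/

theorem totalDegree_pderiv_lt {f : MvPolynomial (Fin 2) ℝ} (i : Fin 2) (h : pderiv i f ≠ 0) :
    (pderiv i f).totalDegree + 1 ≤ f.totalDegree := by
  obtain ⟨n, hn, hd⟩ := (pderiv i f).support.exists_mem_eq_sup
    (support_nonempty.mpr h) (fun s => s.sum fun _ e => e)
  have : (pderiv i f).totalDegree = n.sum fun _ e => e := hd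
  rw [this]
  have h2 : n + Finsupp.single i 1 ∈ f.support := by
    rw [mem_support_iff] at hn ⊢
    rw [coeff_pderiv] at hn
    exact fun h => hn (by simp [h])
  have := le_totalDegree h2
  rwa [Finsupp.sum_add_index' (fun _ => rfl) (fun _ _ _ => rfl), Finsupp.sum_single_index rfl] at this

theorem totalDegree_eq_zero_of_pderiv {f : MvPolynomial (Fin 2) ℝ} (h : ∀ i, pderiv i f = 0) :
    f.totalDegree = 0 := by
  rw [totalDegree_eq_zero_iff]
  intro m hm i
  by_contra hi
  have := congrArg (coeff (m - Finsupp.single i 1)) (h i)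
  rw [coeff_pderiv, tsub_add_cancel_of_le (by simpa [Nat.one_le_iff_ne_zero] using hi)] at this
  rw [mem_support_iff] at hm
  simp [hm] at this
  norm_cast at this

/-! ### Nearest points of components -/

/-- If the Jacobian of `(f, q)` does not vanish at a zero `p` of `f`, then `q` takes a smaller value
than `q p` on the connected component of `p` in `Z(f)`: by the inverse function theorem `(f, q)` is a
local chart at `p`, in which `Z(f)` is a vertical segment parametrised by the value of `q`. -/
theorem exists_closer {f q : MvPolynomial (Fin 2) ℝ} {p : EuclideanSpace ℝ (Fin 2)}
    (hp : eval (fun i => p i) f = 0)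
    (hJ : eval (fun i => p i) (pderiv 0 f * pderiv 1 q - pderiv 1 f * pderiv 0 q) ≠ 0) :
    ∃ p' ∈ connectedComponentIn {p : EuclideanSpace ℝ (Fin 2) | eval (fun i => p i) f = 0} p,
      eval (fun i => p' i) q < eval (fun i => p i) q := by
  set Z := {p : EuclideanSpace ℝ (Fin 2) | eval (fun i => p i) f = 0}
  -- The differential of `(f, q)` at `p`, with determinant the Jacobian of `hJ`.
  let L : EuclideanSpace ℝ (Fin 2) →L[ℝ] ℝ × ℝ :=
    (∑ i, eval (fun i => p i) (pderiv i f) • (EuclideanSpace.proj i : EuclideanSpace ℝ (Fin 2) →L[ℝ] ℝ)).prod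
    (∑ i, eval (fun i => p i) (pderiv i q) • (EuclideanSpace.proj i : EuclideanSpace ℝ (Fin 2) →L[ℝ] ℝ))
  have hL : Function.Injective L.toLinearMap := by
    rw [← LinearMap.ker_eq_bot, LinearMap.ker_eq_bot']
    intro v hv
    simp only [L, Fin.sum_univ_two, Prod.ext_iff] at hv
    simp at hv
    obtain ⟨h1, h2⟩ := hv
    simp only [map_sub, map_mul] at hJ
    ext i
    fin_cases i
    · refine (mul_eq_zero.mp ?_).resolve_left hJ
      change _ * v 0 = 0
      linear_combination (eval (fun i => p i) (pderiv 1 q)) * h1 - (eval (fun i => p i) (pderiv 1 f)) * h2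
    · refine (mul_eq_zero.mp ?_).resolve_left hJ
      change _ * v 1 = 0
      linear_combination (eval (fun i => p i) (pderiv 0 f)) * h2 - (eval (fun i => p i) (pderiv 0 q)) * h1
  let e := (LinearEquiv.ofInjectiveOfFinrankEq L.toLinearMap hL (by simp)).toContinuousLinearEquiv
  have hF : HasStrictFDerivAt (fun p : EuclideanSpace ℝ (Fin 2) => (eval (fun i => p i) f, eval (fun i => p i) q))
      (e : EuclideanSpace ℝ (Fin 2) →L[ℝ] ℝ × ℝ) p := by
    refine ((hasStrictFDerivAt_eval f p).prodMk (hasStrictFDerivAt_eval q p)).congr_fderiv ?_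
    ext v <;> rfl
  let φ := hF.toOpenPartialHomeomorph
  have hφ : ∀ x, φ x = (eval (fun i => x i) f, eval (fun i => x i) q) := fun x => rfl
  set b := eval (fun i => p i) q
  have hpt : ((0 : ℝ), b) ∈ φ.target := by
    have := hF.image_mem_toOpenPartialHomeomorph_target
    rwa [hp] at this
  obtain ⟨ε, hε, hball⟩ := Metric.isOpen_iff.mp φ.open_target _ hpt
  have hsub : ({0} : Set ℝ) ×ˢ Set.Icc (b - ε / 2) b ⊆ φ.target := by
    rintro ⟨x, y⟩ ⟨hx, hy1, hy2⟩
    apply hball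
    simp only [Set.mem_singleton_iff] at hx
    subst hx
    simp only [Metric.mem_ball, Prod.dist_eq, dist_self, Real.dist_eq]
    refine max_lt hε ?_
    rw [abs_lt]; constructor <;> simp only at hy1 hy2 <;> linarith
  -- The curve inside `Z(f)` along which `q` decreases from `q p = b`.
  have hconn : IsPreconnected (φ.symm '' (({0} : Set ℝ) ×ˢ Set.Icc (b - ε / 2) b)) :=
    (isPreconnected_singleton.prod isPreconnected_Icc).image _ (φ.continuousOn_symm.mono hsub)
  have hps : φ.symm (0, b) = p := by
    have h1 : φ p = (0, b) := by rw [hφ, hp]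
    rw [← h1]
    exact φ.left_inv hF.mem_toOpenPartialHomeomorph_source
  have hval : ∀ y ∈ Set.Icc (b - ε / 2) b, eval (fun i => φ.symm (0, y) i) f = 0 ∧
      eval (fun i => φ.symm (0, y) i) q = y := by
    intro y hy
    have := φ.right_inv (hsub (Set.mk_mem_prod (Set.mem_singleton _) hy : ((0 : ℝ), y) ∈ _))
    rw [hφ] at this
    exact Prod.ext_iff.mp this
  have hsubZ : φ.symm '' (({0} : Set ℝ) ×ˢ Set.Icc (b - ε / 2) b) ⊆ Z := by
    rintro _ ⟨⟨x, y⟩, ⟨hx, hy⟩, rfl⟩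
    simp only [Set.mem_singleton_iff] at hx
    subst hx
    exact (hval y hy).1
  have h1 : b ∈ Set.Icc (b - ε / 2) b := ⟨by linarith, le_rfl⟩
  have h2 : b - ε / 2 ∈ Set.Icc (b - ε / 2) b := ⟨le_rfl, by linarith⟩
  refine ⟨φ.symm (0, b - ε / 2), ?_, ?_⟩
  · exact hconn.subset_connectedComponentIn ⟨(0, b), Set.mk_mem_prod (Set.mem_singleton _) h1, hps⟩ hsubZ
      ⟨(0, b - ε / 2), Set.mk_mem_prod (Set.mem_singleton _) h2, rfl⟩
  · rw [(hval _ h2).2]; linarith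

theorem continuous_eval_euclidean (f : MvPolynomial (Fin 2) ℝ) :
    Continuous fun p : EuclideanSpace ℝ (Fin 2) => eval (fun i => p i) f :=
  continuous_iff_continuousAt.mpr fun p => (hasStrictFDerivAt_eval f p).hasFDerivAt.continuousAt

/-- The squared distance to the point `o`, as a polynomial in the coordinates. -/
noncomputable def sqDist (o : EuclideanSpace ℝ (Fin 2)) : MvPolynomial (Fin 2) ℝ :=
  (X 0 - C (o 0)) ^ 2 + (X 1 - C (o 1)) ^ 2

theorem eval_sqDist (o p : EuclideanSpace ℝ (Fin 2)) :
    eval (fun i => p i) (sqDist o) = dist o p ^ 2 := by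
  rw [EuclideanSpace.dist_eq, Real.sq_sqrt (by positivity)]
  simp [sqDist, Fin.sum_univ_two, Real.dist_eq]
  ring

/-- The polynomial `f_x (y - o₁) - f_y (x - o₀)`. It vanishes exactly where the gradient of `f` is
parallel to the vector from `o`, that is, where the distance to `o` satisfies the Lagrange condition
on the level sets of `f`. It is half of the Jacobian of `(f, sqDist o)`. -/
noncomputable def crit (f : MvPolynomial (Fin 2) ℝ) (o : EuclideanSpace ℝ (Fin 2)) :
    MvPolynomial (Fin 2) ℝ :=
  pderiv 0 f * (X 1 - C (o 1)) - pderiv 1 f * (X 0 - C (o 0))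

theorem jacobian_sqDist (f : MvPolynomial (Fin 2) ℝ) (o : EuclideanSpace ℝ (Fin 2)) :
    pderiv 0 f * pderiv 1 (sqDist o) - pderiv 1 f * pderiv 0 (sqDist o) = 2 * crit f o := by
  have h0 : pderiv 0 (sqDist o) = 2 * (X 0 - C (o 0)) := by
    simp [sqDist, pderiv_X]
  have h1 : pderiv 1 (sqDist o) = 2 * (X 1 - C (o 1)) := by
    simp [sqDist, pderiv_X]
  rw [crit, h0, h1]; ring

/-- The point of a connected component of `Z(f)` nearest to `o` is a zero of `crit f o`.
A nearest point exists even on unbounded components, as these are closed in a proper space. -/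
theorem exists_crit_mem_component (f : MvPolynomial (Fin 2) ℝ) (o p : EuclideanSpace ℝ (Fin 2))
    (hp : eval (fun i => p i) f = 0) :
    ∃ s ∈ connectedComponentIn {p : EuclideanSpace ℝ (Fin 2) | eval (fun i => p i) f = 0} p,
      eval (fun i => s i) f = 0 ∧ eval (fun i => s i) (crit f o) = 0 := by
  set Z := {p : EuclideanSpace ℝ (Fin 2) | eval (fun i => p i) f = 0} with hZ
  have hZc : IsClosed Z := isClosed_eq (continuous_eval_euclidean f) continuous_const
  have hcl : IsClosed (connectedComponentIn Z p) := by
    rw [connectedComponentIn_eq_image (show p ∈ Z from hp)]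
    exact hZc.isClosedEmbedding_subtypeVal.isClosedMap _ isClosed_connectedComponent
  obtain ⟨s, hs, hmin⟩ := hcl.exists_infDist_eq_dist ⟨p, mem_connectedComponentIn hp⟩ o
  have hsZ : eval (fun i => s i) f = 0 := connectedComponentIn_subset Z p hs
  refine ⟨s, hs, hsZ, ?_⟩
  by_contra hne
  obtain ⟨s', hs', hlt⟩ := exists_closer (q := sqDist o) hsZ (by
    rw [jacobian_sqDist, map_mul]
    simpa using hne)
  rw [← hZ, ← connectedComponentIn_eq hs] at hs'
  rw [eval_sqDist, eval_sqDist, ← hmin] at hlt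
  have := Metric.infDist_le_dist_of_mem (x := o) hs'
  have h0 : 0 ≤ Metric.infDist o (connectedComponentIn Z p) := Metric.infDist_nonneg
  nlinarith

/-! ### Bézout's inequality by dimension count -/

theorem finrank_restrictTotalDegree (D : ℕ) :
    2 * Module.finrank ℝ (restrictTotalDegree (Fin 2) ℝ D) = (D + 1) * (D + 2) := by
  -- The exponents of degree at most `D`, sliced by degree.
  let T : Finset (Fin 2 →₀ ℕ) := (Finset.range (D + 1)).biUnion fun k =>
    Finset.finsuppAntidiag Finset.univ k
  have hT : {n : Fin 2 →₀ ℕ | (n.sum fun _ e => e) ≤ D} = (T : Set _) := by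
    ext n
    simp [T, Finset.mem_finsuppAntidiag, Finsupp.sum_fintype]
  have h1 : Module.finrank ℝ (restrictTotalDegree (Fin 2) ℝ D) = T.card := by
    rw [restrictTotalDegree, hT,
      Module.finrank_eq_nat_card_basis (basisRestrictSupport ℝ (T : Set (Fin 2 →₀ ℕ)))]
    simp
  have h2 : T.card = ∑ k ∈ Finset.range (D + 1), (k + 1) := by
    rw [Finset.card_biUnion]
    · refine Finset.sum_congr rfl fun k _ => ?_
      rw [← Finset.Nat.card_antidiagonal k]
      refine Finset.card_bij (fun n _ => (n 0, n 1)) ?_ ?_ ?_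
      · intro n hn
        simpa [Finset.mem_finsuppAntidiag, Fin.sum_univ_two] using hn
      · intro n _ m _ h
        ext i
        fin_cases i
        · exact (Prod.ext_iff.mp h).1
        · exact (Prod.ext_iff.mp h).2
      · rintro ⟨a, b⟩ hab
        refine ⟨Finsupp.equivFunOnFinite.symm ![a, b], ?_, by simp⟩
        simpa [Finset.mem_finsuppAntidiag, Fin.sum_univ_two] using hab
    · intro a _ b _ hab
      rw [Function.onFun, Finset.disjoint_left]
      intro n ha hb
      rw [Finset.mem_finsuppAntidiag] at ha hb
      exact hab (ha.1.symm.trans hb.1)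
  rw [h1, h2]
  clear h1 h2 hT T
  induction D with
  | zero => simp
  | succ D ih => rw [Finset.sum_range_succ, mul_add, ih]; ring

/-- Lagrange interpolation: a product of affine forms is `1` at `p` and `0` on the rest of `T`. -/
theorem exists_separating {T : Finset (Fin 2 → ℝ)} {p : Fin 2 → ℝ} :
    ∃ g : MvPolynomial (Fin 2) ℝ, eval p g = 1 ∧ ∀ q ∈ T, q ≠ p → eval q g = 0 := by
  have key : ∀ q : Fin 2 → ℝ, ∃ l : MvPolynomial (Fin 2) ℝ, q ≠ p → eval p l = 1 ∧ eval q l = 0 := by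
    intro q
    by_cases h : q = p
    · exact ⟨0, fun h' => (h' h).elim⟩
    obtain ⟨i, hi⟩ := Function.ne_iff.mp h
    refine ⟨C ((p i - q i)⁻¹) * (X i - C (q i)), fun _ => ⟨?_, by simp⟩⟩
    have : p i - q i ≠ 0 := sub_ne_zero.mpr (Ne.symm hi)
    simp [this]
  choose l hl using key
  classical
  refine ⟨∏ q ∈ T.erase p, l q, ?_, ?_⟩
  · rw [map_prod]
    exact Finset.prod_eq_one fun q hq => (hl q (Finset.ne_of_mem_erase hq)).1
  · intro q hq hne
    rw [map_prod]
    exact Finset.prod_eq_zero (Finset.mem_erase.mpr ⟨hne, hq⟩) (hl q hne).2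

/-- Bézout's inequality for a prime `f` of degree `m` not dividing `g` of degree `n`. Let `P D` be the
space of polynomials of degree at most `D`. For large `k`, evaluation maps `P (m + n + k)` onto the
functions on `T`, and its kernel contains `f * P (n + k) + g * P (m + k)`. By coprimality, the
relations between the two summands come from `P k`. Comparing dimensions leaves `m * n`. -/
theorem card_le_mul_totalDegree {f g : MvPolynomial (Fin 2) ℝ} (hf : Prime f) (hfg : ¬ f ∣ g)
    (T : Finset (Fin 2 → ℝ)) (hTf : ∀ p ∈ T, eval p f = 0) (hTg : ∀ p ∈ T, eval p g = 0) :
    T.card ≤ f.totalDegree * g.totalDegree := by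
  classical
  have hf0 : f ≠ 0 := hf.ne_zero
  have hg0 : g ≠ 0 := by rintro rfl; exact hfg (dvd_zero f)
  choose s hs1 hs0 using fun p : Fin 2 → ℝ => exists_separating (T := T) (p := p)
  set m := f.totalDegree with hm
  set n := g.totalDegree with hn
  obtain ⟨k, hk⟩ : ∃ k, ∀ p ∈ T, (s p).totalDegree ≤ m + n + k :=
    ⟨T.sup fun p => (s p).totalDegree, fun p hp =>
      (Finset.le_sup (f := fun p => (s p).totalDegree) hp).trans (Nat.le_add_left _ _)⟩
  let P := restrictTotalDegree (Fin 2) ℝ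
  have hP : ∀ D q, q ∈ P D ↔ q.totalDegree ≤ D := fun D q => mem_restrictTotalDegree _ _ _
  have hfd : ∀ D, 2 * Module.finrank ℝ (P D) = (D + 1) * (D + 2) := finrank_restrictTotalDegree
  let ev : P (m + n + k) →ₗ[ℝ] (T → ℝ) :=
    (LinearMap.pi fun p : T => (aeval (R := ℝ) (p : Fin 2 → ℝ)).toLinearMap) ∘ₗ (P (m + n + k)).subtype
  have hev : ∀ q p, ev q p = eval (p : Fin 2 → ℝ) (q : MvPolynomial (Fin 2) ℝ) := by
    intro q p
    simp [ev, aeval_eq_eval]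
  have hsurj : Function.Surjective ev := by
    intro v
    refine ⟨∑ p : T, v p • ⟨s p, (hP _ _).mpr (hk p p.2)⟩, ?_⟩
    ext t
    rw [hev]
    simp only [Submodule.coe_sum, Submodule.coe_smul, map_sum, smul_eval]
    rw [Finset.sum_eq_single t]
    · simp [hs1]
    · intro p _ hp
      rw [hs0 p t t.2 (fun h => hp (Subtype.ext h.symm)), mul_zero]
    · simp
  -- `φ (a, b) = f * a + g * b`
  let φ : (P (n + k) × P (m + k)) →ₗ[ℝ] P (m + n + k) :=
    LinearMap.codRestrict _
      (((LinearMap.mulLeft ℝ f) ∘ₗ (P (n + k)).subtype).coprod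
        ((LinearMap.mulLeft ℝ g) ∘ₗ (P (m + k)).subtype)) (by
      rintro ⟨⟨a, ha⟩, ⟨b, hb⟩⟩
      rw [hP] at ha hb
      rw [hP]
      simp only [LinearMap.coprod_apply, LinearMap.comp_apply, Submodule.subtype_apply,
        LinearMap.mulLeft_apply]
      refine (totalDegree_add _ _).trans (max_le ?_ ?_)
      · exact (totalDegree_mul _ _).trans (by omega)
      · exact (totalDegree_mul _ _).trans (by omega))
  have hφ : ∀ x, ((φ x : P (m + n + k)) : MvPolynomial (Fin 2) ℝ) = f * x.1 + g * x.2 := fun x => rfl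
  -- `ψ c = (g * c, -f * c)` parametrises the kernel of `φ`.
  let ψ : P k →ₗ[ℝ] (P (n + k) × P (m + k)) :=
    LinearMap.prod
      (LinearMap.codRestrict _ ((LinearMap.mulLeft ℝ g) ∘ₗ (P k).subtype) (by
        rintro ⟨c, hc⟩
        rw [hP] at hc ⊢
        exact (totalDegree_mul _ _).trans (by simpa using by omega)))
      (LinearMap.codRestrict _ ((LinearMap.mulLeft ℝ (-f)) ∘ₗ (P k).subtype) (by
        rintro ⟨c, hc⟩
        rw [hP] at hc ⊢
        exact (totalDegree_mul _ _).trans (by simpa using by omega)))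
  have hker : LinearMap.ker φ ≤ LinearMap.range ψ := by
    rintro ⟨⟨a, ha⟩, ⟨b, hb⟩⟩ h
    have h : f * a + g * b = 0 := by
      rw [LinearMap.mem_ker] at h
      have := congrArg Subtype.val h
      rwa [hφ] at this
    have hdvd : f ∣ b := by
      refine (hf.dvd_or_dvd (?_ : f ∣ g * b)).resolve_left hfg
      exact ⟨-a, by linear_combination h⟩
    obtain ⟨c, rfl⟩ := hdvd
    have hac : a = g * -c := mul_left_cancel₀ hf0 (by linear_combination h)
    have hc : (-c).totalDegree ≤ k := by
      rw [totalDegree_neg]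
      by_cases hc0 : c = 0
      · simp [hc0]
      rw [hP, totalDegree_mul_of_isDomain hf0 hc0] at hb
      omega
    refine ⟨⟨-c, (hP _ _).mpr hc⟩, ?_⟩
    refine Prod.ext (Subtype.ext ?_) (Subtype.ext ?_)
    · exact hac.symm
    · change -f * -c = f * c
      ring
  have hrange : LinearMap.range φ ≤ LinearMap.ker ev := by
    rintro _ ⟨x, rfl⟩
    rw [LinearMap.mem_ker]
    ext t
    rw [hev, hφ]
    simp [hTf t t.2, hTg t t.2]
  have : ∀ D, Module.Finite ℝ (P D) := fun D => inferInstanceAs (Module.Finite ℝ (restrictTotalDegree (Fin 2) ℝ D))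
  have e1 := LinearMap.finrank_range_add_finrank_ker ev
  rw [LinearMap.range_eq_top.mpr hsurj, finrank_top, Module.finrank_fintype_fun_eq_card,
    Fintype.card_coe] at e1
  have e2 := LinearMap.finrank_range_add_finrank_ker φ
  rw [Module.finrank_prod] at e2
  have e3 := Submodule.finrank_mono hker
  have e4 := LinearMap.finrank_range_le ψ
  have e5 := Submodule.finrank_mono hrange
  have d1 := hfd (m + n + k)
  have d2 := hfd (n + k)
  have d3 := hfd (m + k)
  have d4 := hfd k
  nlinarith

/-! ### Points meeting every component -/

theorem totalDegree_crit_le (f : MvPolynomial (Fin 2) ℝ) (o : EuclideanSpace ℝ (Fin 2)) :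
    (crit f o).totalDegree ≤ f.totalDegree := by
  have key : ∀ i j : Fin 2, (pderiv i f * (X j - C (o j))).totalDegree ≤ f.totalDegree := by
    intro i j
    by_cases h : pderiv i f = 0
    · simp [h]
    · refine (totalDegree_mul _ _).trans (le_trans ?_ (totalDegree_pderiv_lt i h))
      gcongr
      refine (totalDegree_sub_C_le _ _).trans ?_
      simp
  exact (totalDegree_sub _ _).trans (max_le (key 0 1) (key 1 0))

/-- If `f` divided `crit f o` for three non-collinear points `o`, it would divide both of its partial
derivatives, which have smaller degree; then these vanish and `f` is constant. -/
theorem exists_not_dvd_crit {f : MvPolynomial (Fin 2) ℝ} (hf : Prime f) :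
    ∃ o, ¬ f ∣ crit f o := by
  by_contra! h
  have hdeg : f.totalDegree ≠ 0 := by
    intro h0
    rw [totalDegree_eq_zero_iff_eq_C] at h0
    have hc : coeff 0 f ≠ 0 := fun hc => hf.ne_zero (by rw [h0, hc, C_0])
    exact hf.not_isUnit (h0 ▸ (IsUnit.mk0 _ hc).map C)
  have hzero : ∀ i, f ∣ pderiv i f → pderiv i f = 0 := by
    intro i hi
    by_contra hne
    obtain ⟨c, hc⟩ := hi
    have hc0 : c ≠ 0 := by rintro rfl; exact hne (by simpa using hc)
    have h1 := totalDegree_pderiv_lt i hne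
    rw [hc, totalDegree_mul_of_isDomain hf.ne_zero hc0] at h1
    omega
  refine hdeg (totalDegree_eq_zero_of_pderiv fun i => hzero i ?_)
  -- Moving `o` by a unit vector changes `crit f o` by a partial derivative, up to sign.
  fin_cases i
  · convert dvd_sub (h !₂[0, 0]) (h !₂[0, 1]) using 1
    simp [crit]; ring
  · convert dvd_sub (h !₂[1, 0]) (h !₂[0, 0]) using 1
    simp [crit]; ring

theorem exists_finset_of_prime {f : MvPolynomial (Fin 2) ℝ} (hf : Prime f) :
    ∃ S : Finset (EuclideanSpace ℝ (Fin 2)), S.card ≤ f.totalDegree ^ 2 ∧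
      ∀ p : EuclideanSpace ℝ (Fin 2), eval (fun i => p i) f = 0 → ∃ s ∈ S,
        s ∈ connectedComponentIn {p : EuclideanSpace ℝ (Fin 2) | eval (fun i => p i) f = 0} p := by
  classical
  obtain ⟨o, ho⟩ := exists_not_dvd_crit hf
  let A : Set (EuclideanSpace ℝ (Fin 2)) :=
    {s | eval (fun i => s i) f = 0 ∧ eval (fun i => s i) (crit f o) = 0}
  have hA : ∀ T : Finset (EuclideanSpace ℝ (Fin 2)), (T : Set _) ⊆ A →
      T.card ≤ f.totalDegree ^ 2 := by
    intro T hT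
    have hinj : Function.Injective
        (fun (p : EuclideanSpace ℝ (Fin 2)) (i : Fin 2) => p i) := fun p q h => by
      ext i; exact congrFun h i
    rw [← Finset.card_image_of_injective T hinj]
    refine (card_le_mul_totalDegree hf ho _ ?_ ?_).trans ?_
    · intro _ hq
      obtain ⟨p, hp, rfl⟩ := Finset.mem_image.mp hq
      exact (hT hp).1
    · intro _ hq
      obtain ⟨p, hp, rfl⟩ := Finset.mem_image.mp hq
      exact (hT hp).2
    · rw [sq]
      exact Nat.mul_le_mul_left _ (totalDegree_crit_le f o)
  have hfin : A.Finite := by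
    by_contra hinf
    obtain ⟨T, hT, hc⟩ := Set.Infinite.exists_subset_card_eq hinf (f.totalDegree ^ 2 + 1)
    have := hA T hT
    omega
  refine ⟨hfin.toFinset, hA _ (by simp), fun p hp => ?_⟩
  obtain ⟨s, hs, h1, h2⟩ := exists_crit_mem_component f o p hp
  exact ⟨s, hfin.mem_toFinset.mpr ⟨h1, h2⟩, hs⟩

/-- A nonzero `f` of degree `d` has at most `d ^ 2` points meeting every component of `Z(f)`. For a
product, `Z(f g) = Z(f) ∪ Z(g)`, components only grow with the set, and `a ^ 2 + b ^ 2 ≤ (a + b) ^ 2`. -/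
theorem exists_finset (f : MvPolynomial (Fin 2) ℝ) : f ≠ 0 →
    ∃ S : Finset (EuclideanSpace ℝ (Fin 2)), S.card ≤ f.totalDegree ^ 2 ∧
      ∀ p : EuclideanSpace ℝ (Fin 2), eval (fun i => p i) f = 0 → ∃ s ∈ S,
        s ∈ connectedComponentIn {p : EuclideanSpace ℝ (Fin 2) | eval (fun i => p i) f = 0} p := by
  classical
  induction f using UniqueFactorizationMonoid.induction_on_prime with
  | h₁ => exact fun h => (h rfl).elim
  | h₂ f hf =>
    refine fun _ => ⟨∅, by simp, fun p hp => ?_⟩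
    exact ((hf.map (eval fun i => p i)).ne_zero hp).elim
  | h₃ f g hf hg ih =>
    intro _
    obtain ⟨S, hS, hS'⟩ := ih hf
    obtain ⟨T, hT, hT'⟩ := exists_finset_of_prime hg
    refine ⟨T ∪ S, ?_, fun p hp => ?_⟩
    · rw [totalDegree_mul_of_isDomain hg.ne_zero hf]
      have := Finset.card_union_le T S
      nlinarith [Nat.zero_le (g.totalDegree * f.totalDegree)]
    · rw [map_mul, mul_eq_zero] at hp
      rcases hp with hp | hp
      · obtain ⟨s, hs, hsp⟩ := hT' p hp
        refine ⟨s, Finset.mem_union_left _ hs, connectedComponentIn_mono p ?_ hsp⟩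
        intro q (hq : _ = _)
        change _ = _
        rw [map_mul, hq, zero_mul]
      · obtain ⟨s, hs, hsp⟩ := hS' p hp
        refine ⟨s, Finset.mem_union_right _ hs, connectedComponentIn_mono p ?_ hsp⟩
        intro q (hq : _ = _)
        change _ = _
        rw [map_mul, hq, mul_zero]

theorem card_components_le {α : Type*} [TopologicalSpace α] {Z : Set α} (S : Finset α)
    (h : ∀ p ∈ Z, ∃ s ∈ S, s ∈ connectedComponentIn Z p) :
    Finite (ConnectedComponents Z) ∧ Nat.card (ConnectedComponents Z) ≤ S.card := by
  classical
  have hex : ∀ c : ConnectedComponents Z, ∃ s : S, ∃ hs : (s : α) ∈ Z,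
      ConnectedComponents.mk (⟨s, hs⟩ : Z) = c := by
    intro c
    obtain ⟨p, rfl⟩ := ConnectedComponents.surjective_coe c
    obtain ⟨s, hs, hsp⟩ := h p p.2
    refine ⟨⟨s, hs⟩, connectedComponentIn_subset _ _ hsp, ?_⟩
    rw [connectedComponentIn_eq_image p.2] at hsp
    obtain ⟨t, ht, hts⟩ := hsp
    subst hts
    exact ConnectedComponents.coe_eq_coe'.mpr ht
  choose σ hσ hσ' using hex
  have hinj : Function.Injective σ := by
    intro a b hab
    rw [← hσ' a, ← hσ' b]
    simp only [hab]
  refine ⟨Finite.of_injective σ hinj, ?_⟩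
  simpa using Nat.card_le_card_of_injective σ hinj

theorem harnack_type_components_bound :
    ∃ C : ℝ, 0 < C ∧
      ∀ (f : MvPolynomial (Fin 2) ℝ) (d : ℕ),
        f ≠ 0 → f.totalDegree = d → 1 ≤ d →
        Finite (ConnectedComponents
          ↥{p : EuclideanSpace ℝ (Fin 2) | MvPolynomial.eval (fun i => p i) f = 0}) ∧
        (Nat.card (ConnectedComponents
          ↥{p : EuclideanSpace ℝ (Fin 2) | MvPolynomial.eval (fun i => p i) f = 0}) : ℝ)
          ≤ C * (d : ℝ) ^ 2 := by
  refine ⟨1, one_pos, fun f d hf hd _ => ?_⟩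
  obtain ⟨S, hS, h⟩ := exists_finset f hf
  obtain ⟨hfin, hcard⟩ := card_components_le S h
  refine ⟨hfin, ?_⟩
  rw [one_mul, ← hd]
  exact_mod_cast hcard.trans hS
end

section
/- There exists an absolute constant C > 0 such that the following holds. Let f ∈ ℝ[x,y,z] be a polynomial of total degree D ≥ 1, let a ∈ ℝ³, and let σ = {x ∈ ℝ³ : ‖x − a‖ = 1} be the unit sphere centered at a, and suppose σ is not contained in Z(f). Then the number of connected components of ℝ³ \ Z(f) that have nonempty intersection with σ is at most C · D². -/
/-!
Inverse stereographic projection pulls `f` back, after clearing denominators, to a plane polynomial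
`g` of degree at most `2 D` (`exists_pullback`). The cells of `f` that meet the sphere pull back to
disjoint open subsets of the plane on whose boundaries `g` vanishes; only the cell containing the
pole may be lost. It remains to bound the number of such plane regions
(`card_le_of_separated`).

Following Milnor and Thom, consider `F = ε (x ^ m + y ^ m) - g ^ 2` with `m = 4 D + 2` and `ε > 0`
small. It tends to infinity at infinity, is nonnegative on the boundary of each region and negative
at a chosen point of each region, so its minimum over the closure of a region is an interior
critical point. At a critical point, `x ^ (m - 1)` and `y ^ (m - 1)` are equal to polynomials of
degree less than `m - 1`; hence polynomial functions on any finite set of critical points are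
spanned by `(m - 1) ^ 2` monomials, and there are at most `(m - 1) ^ 2 = (4 D + 1) ^ 2` critical
points (`card_le_sq_of_reduction`). In total there are at most `(4 D + 1) ^ 2 + 1 ≤ 26 D ^ 2` cells.
-/

/-! ### Zeros of systems in reduced form -/

open MvPolynomial in
/-- An elementary Bézout bound. On a finite set `S` of solutions of `x_i ^ k = B_i (x)`, where
`deg B_i < k`, every polynomial function agrees with a combination of the `k ^ 2` monomials with
both exponents below `k`, since `x_i ^ k` can be rewritten as the lower-degree `B_i`. As polynomials
represent all functions on a finite set, `S` has at most `k ^ 2` points. -/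
theorem card_le_sq_of_reduction {k : ℕ} (B : Fin 2 → MvPolynomial (Fin 2) ℝ)
    (hB : ∀ i, (B i).totalDegree < k) (S : Finset (Fin 2 → ℝ))
    (hS : ∀ s ∈ S, ∀ i, s i ^ k = eval s (B i)) : S.card ≤ k ^ 2 := by
  classical
  set W : Submodule ℝ (S → ℝ) := Submodule.span ℝ
    (Set.range (fun (e : Fin 2 → Fin k) => fun s : S => ∏ i, s.1 i ^ (e i : ℕ))) with hW
  have key : ∀ n, ∀ p : MvPolynomial (Fin 2) ℝ, p.totalDegree < n →
      (fun s : S => eval s.1 p) ∈ W := by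
    intro n
    induction n with
    | zero => intro p hp; omega
    | succ n ih =>
      intro p hp
      have hsum : (fun s : S => eval s.1 p)
          = ∑ v ∈ p.support, coeff v p • (fun s : S => ∏ i, s.1 i ^ v i) := by
        funext s
        simp [eval_eq', Finset.sum_apply]
      rw [hsum]
      refine Submodule.sum_mem _ fun v hv => Submodule.smul_mem _ _ ?_
      have hvd : v 0 + v 1 ≤ n := by
        have := le_totalDegree hv
        rw [Finsupp.sum_fintype _ _ (by simp)] at this
        simp only [Fin.sum_univ_two] at this
        omega
      by_cases hlt : ∀ i, v i < k
      · exact Submodule.subset_span ⟨fun i => ⟨v i, hlt i⟩, rfl⟩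
      · push Not at hlt
        obtain ⟨i, hi⟩ := hlt
        have hle : Finsupp.single i k ≤ v := by simpa using hi
        -- On `S`, the factor `x_i ^ k` of this monomial may be replaced by `B i`.
        have hdeg : (monomial (v - Finsupp.single i k) (1 : ℝ) * B i).totalDegree < n := by
          refine lt_of_le_of_lt (totalDegree_mul _ _) ?_
          have h1 := totalDegree_monomial_le (v - Finsupp.single i k) (1 : ℝ)
          rw [Finsupp.sum_fintype _ _ (by simp)] at h1
          have h2 := hB i
          fin_cases i <;> simp [Fin.sum_univ_two] at h1 h2 hi <;> simp <;> omega
        convert ih _ hdeg using 1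
        funext s
        rw [map_mul, ← hS s.1 s.2 i, eval_monomial, Finsupp.prod_fintype _ _ (by simp)]
        have hv : ∀ j, s.1 j ^ v j
            = s.1 j ^ ((v - Finsupp.single i k) j) * s.1 j ^ (Finsupp.single i k j) := by
          intro j
          rw [← pow_add]
          congr 1
          have := hle j
          simp only [Finsupp.coe_tsub, Pi.sub_apply]
          omega
        simp only [hv, Finset.prod_mul_distrib, one_mul]
        congr 1
        rw [Finset.prod_eq_single i] <;> simp +contextual [eq_comm]
  have htop : W = ⊤ := by
    have hsingle : ∀ s : S, (Pi.single s 1 : S → ℝ) ∈ W := by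
      intro s
      -- This polynomial vanishes at every point of `S` except `s`.
      set p : MvPolynomial (Fin 2) ℝ :=
        ∏ t ∈ S.erase s.1, ∑ i, (X i - C (t i)) ^ 2 with hp
      have hps : eval s.1 p ≠ 0 := by
        rw [hp, map_prod, Finset.prod_ne_zero_iff]
        intro t ht h0
        simp only [map_sum, map_pow, map_sub, eval_X, eval_C] at h0
        rw [Finset.sum_eq_zero_iff_of_nonneg (fun i _ => sq_nonneg _)] at h0
        apply (Finset.mem_erase.1 ht).1
        funext i
        have := h0 i (Finset.mem_univ i)
        have := pow_eq_zero_iff (two_ne_zero) |>.1 this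
        linarith
      have : (Pi.single s 1 : S → ℝ) = (eval s.1 p)⁻¹ • (fun t : S => eval t.1 p) := by
        funext t
        by_cases hts : t = s
        · subst hts; simp [hps]
        · have : eval t.1 p = 0 := by
            rw [hp, map_prod]
            refine Finset.prod_eq_zero (i := t.1) ?_ (by simp)
            exact Finset.mem_erase.2 ⟨fun h => hts (Subtype.ext h), t.2⟩
          simp [hts, this]
      rw [this]
      exact Submodule.smul_mem _ _ (key _ p (Nat.lt_succ_self _))
    rw [eq_top_iff]
    intro φ _
    rw [pi_eq_sum_univ' φ]
    exact Submodule.sum_mem _ fun s _ => Submodule.smul_mem _ _ (by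
      convert hsingle s using 1)
  have hcard := finrank_range_le_card (R := ℝ)
    (fun (e : Fin 2 → Fin k) => fun s : S => ∏ i, s.1 i ^ (e i : ℕ))
  rw [Set.finrank, ← hW, htop, finrank_top] at hcard
  simpa using hcard

/-! ### Critical points and plane regions -/

open MvPolynomial in
theorem hasDerivAt_eval_line (p : MvPolynomial (Fin 2) ℝ) (x : Fin 2 → ℝ) (i : Fin 2) :
    HasDerivAt (fun t : ℝ => eval (x + t • Pi.single i 1) p) (eval x (pderiv i p)) 0 := by
  induction p using MvPolynomial.induction_on with
  | C a => simpa using hasDerivAt_const (0 : ℝ) a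
  | add p q hp hq => simpa using hp.fun_add hq
  | mul_X p j hp =>
    have hX : HasDerivAt (fun t : ℝ => x j + t * (Pi.single i 1 : Fin 2 → ℝ) j)
        ((Pi.single i 1 : Fin 2 → ℝ) j) 0 := by
      simpa using ((hasDerivAt_id (0 : ℝ)).mul_const ((Pi.single i 1 : Fin 2 → ℝ) j)).const_add (x j)
    simp only [map_mul, eval_X, Derivation.leibniz, map_add, pderiv_X, smul_eq_mul]
    refine (hp.fun_mul hX).congr_deriv ?_
    have h : eval x ((Pi.single i 1 : Fin 2 → MvPolynomial (Fin 2) ℝ) j)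
        = (Pi.single i 1 : Fin 2 → ℝ) j := by
      by_cases hij : j = i
      · subst hij; simp
      · simp [hij]
    simp only [zero_smul, add_zero, zero_mul]
    rw [h]
    ring

open MvPolynomial in
theorem totalDegree_pderiv_le' (p : MvPolynomial (Fin 2) ℝ) (i : Fin 2) :
    (pderiv i p).totalDegree ≤ p.totalDegree := by
  conv_lhs => rw [p.as_sum, map_sum]
  refine totalDegree_finsetSum_le fun v hv => ?_
  rw [pderiv_monomial]
  refine (totalDegree_monomial_le _ _).trans ((le_totalDegree hv).trans' ?_)
  rw [Finsupp.sum_fintype _ _ (by simp), Finsupp.sum_fintype _ _ (by simp)]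
  exact Finset.sum_le_sum fun j _ => by simp

open MvPolynomial in
theorem abs_eval_le (p : MvPolynomial (Fin 2) ℝ) {n : ℕ} (hp : p.totalDegree ≤ n) :
    ∃ K : ℝ, 0 ≤ K ∧ ∀ x : Fin 2 → ℝ, 1 ≤ ‖x‖ → |eval x p| ≤ K * ‖x‖ ^ n := by
  refine ⟨∑ v ∈ p.support, |coeff v p|, Finset.sum_nonneg fun _ _ => abs_nonneg _, ?_⟩
  intro x hx
  rw [eval_eq', Finset.sum_mul]
  refine (Finset.abs_sum_le_sum_abs _ _).trans (Finset.sum_le_sum fun v hv => ?_)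
  rw [abs_mul]
  refine mul_le_mul_of_nonneg_left ?_ (abs_nonneg _)
  rw [Finset.abs_prod]
  calc ∏ i, |x i ^ v i| ≤ ∏ i, ‖x‖ ^ v i := by
        refine Finset.prod_le_prod (fun _ _ => abs_nonneg _) fun i _ => ?_
        rw [abs_pow]
        exact pow_le_pow_left₀ (abs_nonneg _) (norm_le_pi_norm x i) _
    _ = ‖x‖ ^ (∑ i, v i) := Finset.prod_pow_eq_pow_sum _ _ _
    _ ≤ ‖x‖ ^ n := by
        refine pow_le_pow_right₀ hx (hp.trans' ?_)
        have := le_totalDegree hv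
        rwa [Finsupp.sum_fintype _ _ (by simp)] at this

open MvPolynomial in
/-- A polynomial `g` of degree at most `n` on the plane has at most `(2 n + 1) ^ 2` nodal regions:
disjoint open sets, on each of which `g` is not identically zero, and on whose boundaries `g`
vanishes. The function `ε (x ^ (2 n + 2) + y ^ (2 n + 2)) - g ^ 2` with small `ε > 0` is
coercive, negative somewhere in each region and nonnegative on its boundary, so it has a critical
point in each region; the critical equations have the shape `x_i ^ (2 n + 1) = B_i (x)` with
`deg B_i ≤ 2 n`. -/
theorem card_le_of_separated (g : MvPolynomial (Fin 2) ℝ) {n : ℕ} (hg : g.totalDegree ≤ n)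
    {ι : Type*} [Fintype ι] (V : ι → Set (Fin 2 → ℝ)) (hopen : ∀ i, IsOpen (V i))
    (hdisj : ∀ i j x, x ∈ V i → x ∈ V j → i = j)
    (hne : ∀ i, ∃ x ∈ V i, eval x g ≠ 0)
    (hbd : ∀ i, ∀ x ∈ closure (V i), x ∉ V i → eval x g = 0) :
    Fintype.card ι ≤ (2 * n + 1) ^ 2 := by
  classical
  choose p hpV hpg using hne
  obtain ⟨ε, hεp, hε⟩ : ∃ ε : ℝ, (∀ i, ε * (∑ j, p i j ^ (2 * n + 2)) < eval (p i) g ^ 2)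
      ∧ 0 < ε := by
    have h1 : ∀ i, ∀ᶠ ε : ℝ in nhdsWithin 0 (Set.Ioi 0),
        ε * (∑ j, p i j ^ (2 * n + 2)) < eval (p i) g ^ 2 := by
      intro i
      refine Filter.Eventually.filter_mono nhdsWithin_le_nhds ?_
      have hc : ContinuousAt (fun ε : ℝ => ε * (∑ j, p i j ^ (2 * n + 2))) 0 := by fun_prop
      refine hc.eventually_lt continuousAt_const ?_
      simpa using sq_pos_of_ne_zero (hpg i)
    exact ((Filter.eventually_all.2 h1).and self_mem_nhdsWithin).exists
  set P : MvPolynomial (Fin 2) ℝ := C ε * ∑ j, X j ^ (2 * n + 2) - g ^ 2 with hP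
  have hPe : ∀ x, eval x P = ε * (∑ j, x j ^ (2 * n + 2)) - eval x g ^ 2 := by
    intro x; simp [hP]
  have hPcont : Continuous fun x => eval x P := MvPolynomial.continuous_eval P
  -- The leading term dominates `g ^ 2`, so `P` is positive outside a large ball.
  obtain ⟨R, hR⟩ : ∃ R : ℝ, ∀ x : Fin 2 → ℝ, R ≤ ‖x‖ → 0 < eval x P := by
    obtain ⟨K, hK, hKb⟩ := abs_eval_le g hg
    refine ⟨max 1 (K ^ 2 / ε + 1), fun x hx => ?_⟩
    have hx1 : 1 ≤ ‖x‖ := (le_max_left _ _).trans hx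
    have hx2 : K ^ 2 / ε + 1 ≤ ‖x‖ := (le_max_right _ _).trans hx
    have hg2 : eval x g ^ 2 ≤ K ^ 2 * ‖x‖ ^ (2 * n) := by
      rw [← sq_abs]
      calc |eval x g| ^ 2 ≤ (K * ‖x‖ ^ n) ^ 2 := pow_le_pow_left₀ (abs_nonneg _) (hKb x hx1) 2
        _ = _ := by ring
    have hs : ‖x‖ ^ (2 * n + 2) ≤ ∑ j, x j ^ (2 * n + 2) := by
      have hev : Even (2 * n + 2) := ⟨n + 1, by ring⟩
      obtain ⟨j, hj⟩ : ∃ j, ‖x‖ = |x j| := by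
        by_contra! h
        have : ‖x‖ < ‖x‖ := (pi_norm_lt_iff (by linarith)).2
          fun i => lt_of_le_of_ne (norm_le_pi_norm x i) (by simpa using (h i).symm)
        exact lt_irrefl _ this
      rw [hj, hev.pow_abs]
      exact Finset.single_le_sum (f := fun j => x j ^ (2 * n + 2))
        (fun i _ => hev.pow_nonneg _) (Finset.mem_univ j)
    have hKε : K ^ 2 < ε * ‖x‖ ^ 2 := by
      have h1 : K ^ 2 / ε < ‖x‖ := by linarith
      rw [div_lt_iff₀ hε] at h1
      nlinarith
    rw [hPe]
    have hpos : 0 < ‖x‖ ^ (2 * n) := by positivity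
    have := mul_lt_mul_of_pos_right hKε hpos
    have := mul_le_mul_of_nonneg_left hs hε.le
    have : ε * ‖x‖ ^ (2 * n + 2) = ε * ‖x‖ ^ 2 * ‖x‖ ^ (2 * n) := by ring
    linarith
  have hcrit : ∀ i, ∃ q ∈ V i, ∀ j, eval q (pderiv j P) = 0 := by
    intro i
    have hpneg : eval (p i) P < 0 := by rw [hPe]; linarith [hεp i]
    have hpball : p i ∈ Metric.closedBall (0 : Fin 2 → ℝ) R := by
      rw [mem_closedBall_zero_iff]
      by_contra! h
      exact lt_asymm hpneg (hR _ h.le)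
    obtain ⟨q, ⟨hqc, hqb⟩, hqmin⟩ := ((isCompact_closedBall (0 : Fin 2 → ℝ) R).inter_left
      (isClosed_closure (s := V i))).exists_isMinOn ⟨p i, subset_closure (hpV i), hpball⟩
      hPcont.continuousOn
    have hqneg : eval q P < 0 :=
      lt_of_le_of_lt (hqmin ⟨subset_closure (hpV i), hpball⟩) hpneg
    have hqV : q ∈ V i := by
      by_contra h
      have h0 := hbd i q hqc h
      rw [hPe, h0] at hqneg
      have : 0 ≤ ∑ j, q j ^ (2 * n + 2) :=
        Finset.sum_nonneg fun j _ => Even.pow_nonneg ⟨n + 1, by ring⟩ _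
      nlinarith
    have hloc : IsLocalMin (fun x => eval x P) q := by
      have h1 : V i ∩ Metric.ball 0 R ∈ nhds q := by
        refine ((hopen i).inter Metric.isOpen_ball).mem_nhds ⟨hqV, ?_⟩
        rw [mem_ball_zero_iff]
        by_contra! h
        exact lt_asymm hqneg (hR _ h)
      filter_upwards [h1] with y hy
      exact hqmin ⟨subset_closure hy.1, Metric.ball_subset_closedBall hy.2⟩
    refine ⟨q, hqV, fun j => ?_⟩
    have hcomp : IsLocalMin (fun t : ℝ => eval (q + t • Pi.single j 1) P) 0 := by
      have hc : ContinuousAt (fun t : ℝ => q + t • (Pi.single j 1 : Fin 2 → ℝ)) 0 := by fun_prop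
      have ht : Filter.Tendsto (fun t : ℝ => q + t • (Pi.single j 1 : Fin 2 → ℝ))
          (nhds 0) (nhds q) := by
        have h := hc.tendsto
        simpa using h
      filter_upwards [ht.eventually hloc] with t h
      simpa using h
    exact hcomp.hasDerivAt_eq_zero (hasDerivAt_eval_line P q j)
  choose q hqV hq using hcrit
  have hinj : Function.Injective q := fun i j h => hdisj i j (q i) (hqV i) (h ▸ hqV j)
  have hc : ε * (2 * n + 2 : ℝ) ≠ 0 := by positivity
  have := card_le_sq_of_reduction (k := 2 * n + 1)
    (fun j => C (ε * (2 * n + 2 : ℝ))⁻¹ * pderiv j (g ^ 2)) (fun j => by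
      refine Nat.lt_succ_of_le ((totalDegree_mul _ _).trans ?_)
      rw [totalDegree_C, zero_add]
      refine (totalDegree_pderiv_le' _ _).trans ((totalDegree_pow _ _).trans ?_)
      omega) (Finset.univ.image q) (fun s hs j => by
      obtain ⟨i, -, rfl⟩ := Finset.mem_image.1 hs
      have h := hq i j
      have hd : eval (q i) (pderiv j P)
          = ε * (2 * n + 2) * q i j ^ (2 * n + 1) - eval (q i) (pderiv j (g ^ 2)) := by
        rw [hP, map_sub, map_sub, pderiv_C_mul, map_sum, Finset.sum_eq_single j]
        · simp [Derivation.leibniz_pow]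
          ring
        · intro b _ hb
          simp [Derivation.leibniz_pow, pderiv_X_of_ne hb]
        · simp
      rw [hd] at h
      rw [map_mul, eval_C]
      field_simp
      linarith)
  rwa [Finset.card_image_of_injective _ hinj, Finset.card_univ] at this

/-! ### Stereographic projection -/

/-- Inverse stereographic projection of the plane onto the unit sphere centered at `a`, from the
pole `a + (0, 0, 1)`. -/
noncomputable def stereoInv (a : Fin 3 → ℝ) (x : Fin 2 → ℝ) : EuclideanSpace ℝ (Fin 3) :=
  WithLp.toLp 2 ![a 0 + 2 * x 0 / (1 + x 0 ^ 2 + x 1 ^ 2),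
    a 1 + 2 * x 1 / (1 + x 0 ^ 2 + x 1 ^ 2),
    a 2 + (x 0 ^ 2 + x 1 ^ 2 - 1) / (1 + x 0 ^ 2 + x 1 ^ 2)]

open MvPolynomial in
/-- Clearing denominators in `f ∘ stereoInv a` yields a polynomial of degree at most `2 deg f`:
each coordinate of `stereoInv a x` is a quadratic polynomial divided by `1 + x_0 ^ 2 + x_1 ^ 2`. -/
theorem exists_pullback (f : MvPolynomial (Fin 3) ℝ) (a : Fin 3 → ℝ) :
    ∃ g : MvPolynomial (Fin 2) ℝ, g.totalDegree ≤ 2 * f.totalDegree ∧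
      ∀ x, eval x g = (1 + x 0 ^ 2 + x 1 ^ 2) ^ f.totalDegree
        * eval (fun i => stereoInv a x i) f := by
  set s : MvPolynomial (Fin 2) ℝ := 1 + X 0 ^ 2 + X 1 ^ 2 with hs
  set L : Fin 3 → MvPolynomial (Fin 2) ℝ :=
    ![C (a 0) * s + 2 * X 0, C (a 1) * s + 2 * X 1, C (a 2) * s + (X 0 ^ 2 + X 1 ^ 2 - 1)] with hL
  have hX : ∀ i : Fin 2, (X i ^ 2 : MvPolynomial (Fin 2) ℝ).totalDegree ≤ 2 := fun i => by
    rw [totalDegree_X_pow]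
  have hsd : s.totalDegree ≤ 2 := by
    refine (totalDegree_add _ _).trans (max_le ((totalDegree_add _ _).trans
      (max_le (by simp) (hX 0))) (hX 1))
  have hCs : ∀ c : ℝ, (C c * s).totalDegree ≤ 2 := fun c =>
    (totalDegree_mul _ _).trans (by rw [totalDegree_C]; omega)
  have h2X : ∀ i : Fin 2, (2 * X i : MvPolynomial (Fin 2) ℝ).totalDegree ≤ 2 := fun i => by
    refine (totalDegree_mul _ _).trans ?_
    have : (2 : MvPolynomial (Fin 2) ℝ) = C 2 := (map_ofNat C 2).symm
    rw [this, totalDegree_C, totalDegree_X]; omega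
  have hLd : ∀ i, (L i).totalDegree ≤ 2 := by
    intro i
    fin_cases i
    · exact (totalDegree_add _ _).trans (max_le (hCs _) (h2X 0))
    · exact (totalDegree_add _ _).trans (max_le (hCs _) (h2X 1))
    · refine (totalDegree_add _ _).trans (max_le (hCs _) ((totalDegree_sub _ _).trans
        (max_le ((totalDegree_add _ _).trans (max_le (hX 0) (hX 1))) (by simp))))
  have hse : ∀ x, eval x s = 1 + x 0 ^ 2 + x 1 ^ 2 := fun x => by simp [hs]
  have hs0 : ∀ x : Fin 2 → ℝ, 1 + x 0 ^ 2 + x 1 ^ 2 ≠ 0 := fun x => by positivity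
  have hLe : ∀ x i, eval x (L i) = (1 + x 0 ^ 2 + x 1 ^ 2) * stereoInv a x i := by
    intro x i
    have := hs0 x
    fin_cases i <;> simp [hL, hs, stereoInv] <;> field_simp
  have hsum : ∀ m ∈ f.support, ∑ i, m i ≤ f.totalDegree := by
    intro m hm
    have := le_totalDegree hm
    rwa [Finsupp.sum_fintype _ _ (by simp)] at this
  refine ⟨∑ m ∈ f.support, C (coeff m f) * ((∏ i, L i ^ m i) * s ^ (f.totalDegree - ∑ i, m i)),
    totalDegree_finsetSum_le fun m hm => ?_, fun x => ?_⟩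
  · refine (totalDegree_mul _ _).trans ?_
    rw [totalDegree_C, zero_add]
    have h1 : (∏ i, L i ^ m i).totalDegree ≤ ∑ i, m i * 2 :=
      (totalDegree_finsetProd _ _).trans (Finset.sum_le_sum fun i _ =>
        (totalDegree_pow _ _).trans (Nat.mul_le_mul_left _ (hLd i)))
    have h2 := (totalDegree_pow s (f.totalDegree - ∑ i, m i)).trans (Nat.mul_le_mul_left _ hsd)
    have h3 := hsum m hm
    rw [← Finset.sum_mul] at h1
    refine (totalDegree_mul _ _).trans ?_
    omega
  · rw [eval_eq' _ f, map_sum, Finset.mul_sum]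
    refine Finset.sum_congr rfl fun m hm => ?_
    simp only [map_mul, eval_C, map_prod, map_pow, hse, hLe, mul_pow, Finset.prod_mul_distrib]
    rw [Finset.prod_pow_eq_pow_sum]
    have : (1 + x 0 ^ 2 + x 1 ^ 2) ^ f.totalDegree = (1 + x 0 ^ 2 + x 1 ^ 2) ^ (∑ i, m i) *
        (1 + x 0 ^ 2 + x 1 ^ 2) ^ (f.totalDegree - ∑ i, m i) := by
      rw [← pow_add, Nat.add_sub_cancel' (hsum m hm)]
    rw [this]; ring

theorem continuous_stereoInv (a : Fin 3 → ℝ) : Continuous (stereoInv a) := by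
  have h : ∀ x : Fin 2 → ℝ, 1 + x 0 ^ 2 + x 1 ^ 2 ≠ 0 := fun x => by positivity
  unfold stereoInv
  refine (PiLp.continuous_toLp 2 _).comp (continuous_pi fun i => ?_)
  fin_cases i <;> simp <;> fun_prop (disch := exact h _)

theorem exists_stereoInv_eq {a y : EuclideanSpace ℝ (Fin 3)} (hy : ‖y - a‖ = 1)
    (hne : y ≠ a + EuclideanSpace.single 2 1) : ∃ x, stereoInv a x = y := by
  have hsq : (y 0 - a 0) ^ 2 + (y 1 - a 1) ^ 2 + (y 2 - a 2) ^ 2 = 1 := by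
    have := EuclideanSpace.norm_sq_eq (y - a)
    rw [hy] at this
    simp [Fin.sum_univ_three] at this
    linarith
  have hr : 1 - (y 2 - a 2) ≠ 0 := by
    intro h
    have h2 : y 2 - a 2 = 1 := by linarith
    rw [h2] at hsq
    have h0 : y 0 - a 0 = 0 := by nlinarith [sq_nonneg (y 0 - a 0), sq_nonneg (y 1 - a 1)]
    have h1 : y 1 - a 1 = 0 := by nlinarith [sq_nonneg (y 0 - a 0), sq_nonneg (y 1 - a 1)]
    apply hne
    ext i
    fin_cases i <;> simp <;> linarith
  refine ⟨![(y 0 - a 0) / (1 - (y 2 - a 2)), (y 1 - a 1) / (1 - (y 2 - a 2))], ?_⟩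
  have hs : 1 + ((y 0 - a 0) / (1 - (y 2 - a 2))) ^ 2 + ((y 1 - a 1) / (1 - (y 2 - a 2))) ^ 2
      = 2 / (1 - (y 2 - a 2)) := by
    field_simp
    linarith
  have hs' : ((y 0 - a 0) / (1 - (y 2 - a 2))) ^ 2 + ((y 1 - a 1) / (1 - (y 2 - a 2))) ^ 2
      = 2 / (1 - (y 2 - a 2)) - 1 := by linarith
  ext i
  fin_cases i <;> simp [stereoInv, hs, hs'] <;> field_simp <;> ring

/-! ### Cells meeting the sphere -/

theorem sphere_crosses_few_cells :
    ∃ C : ℝ, 0 < C ∧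
      ∀ (f : MvPolynomial (Fin 3) ℝ) (D : ℕ) (a : EuclideanSpace ℝ (Fin 3)),
        f.totalDegree = D → 1 ≤ D →
        ¬ ({x : EuclideanSpace ℝ (Fin 3) | ‖x - a‖ = 1}
            ⊆ {p : EuclideanSpace ℝ (Fin 3) | MvPolynomial.eval (fun i => p i) f = 0}) →
        {U : Set (EuclideanSpace ℝ (Fin 3)) |
            (∃ x : EuclideanSpace ℝ (Fin 3), MvPolynomial.eval (fun i => x i) f ≠ 0 ∧
              U = connectedComponentIn
                {p : EuclideanSpace ℝ (Fin 3) | MvPolynomial.eval (fun i => p i) f ≠ 0} x) ∧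
            (U ∩ {x : EuclideanSpace ℝ (Fin 3) | ‖x - a‖ = 1}).Nonempty}.Finite ∧
        ({U : Set (EuclideanSpace ℝ (Fin 3)) |
            (∃ x : EuclideanSpace ℝ (Fin 3), MvPolynomial.eval (fun i => x i) f ≠ 0 ∧
              U = connectedComponentIn
                {p : EuclideanSpace ℝ (Fin 3) | MvPolynomial.eval (fun i => p i) f ≠ 0} x) ∧
            (U ∩ {x : EuclideanSpace ℝ (Fin 3) | ‖x - a‖ = 1}).Nonempty}.ncard : ℝ)
          ≤ C * (D : ℝ) ^ 2 := by
  classical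
  refine ⟨26, by norm_num, ?_⟩
  intro f D a hD hD1 _
  set O : Set (EuclideanSpace ℝ (Fin 3)) :=
    {p : EuclideanSpace ℝ (Fin 3) | MvPolynomial.eval (fun i => p i) f ≠ 0} with hO
  set 𝒰 : Set (Set (EuclideanSpace ℝ (Fin 3))) := {U |
    (∃ x : EuclideanSpace ℝ (Fin 3), MvPolynomial.eval (fun i => x i) f ≠ 0 ∧
      U = connectedComponentIn O x) ∧
    (U ∩ {x : EuclideanSpace ℝ (Fin 3) | ‖x - a‖ = 1}).Nonempty} with h𝒰
  have hOo : IsOpen O := by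
    refine isOpen_ne.preimage (f := fun p : EuclideanSpace ℝ (Fin 3) =>
      MvPolynomial.eval (fun i => p i) f) ?_
    exact (MvPolynomial.continuous_eval f).comp (by fun_prop)
  obtain ⟨g, hgd, hge⟩ := exists_pullback f a
  rw [hD] at hgd hge
  have hg0 : ∀ x, MvPolynomial.eval x g = 0 ↔ stereoInv a x ∉ O := by
    intro x
    have : (1 + x 0 ^ 2 + x 1 ^ 2) ^ D ≠ 0 := by positivity
    rw [hge, mul_eq_zero_iff_left this]
    simp [hO]
  set pole : EuclideanSpace ℝ (Fin 3) := a + EuclideanSpace.single 2 1 with hpole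
  have hbound : ∀ T : Finset (Set (EuclideanSpace ℝ (Fin 3))), (T : Set _) ⊆ 𝒰 →
      T.card ≤ 26 * D ^ 2 := by
    intro T hT
    -- At most one cell contains the pole, which the parametrization misses; drop that cell.
    set T' := T.erase (connectedComponentIn O pole) with hT'
    have hT'𝒰 : ∀ U ∈ T', U ∈ 𝒰 := fun U hU => hT (Finset.mem_of_mem_erase hU)
    have hcomp : ∀ U ∈ 𝒰, ∀ y ∈ U, U = connectedComponentIn O y := by
      rintro U ⟨⟨x, -, rfl⟩, -⟩ y hy
      exact connectedComponentIn_eq hy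
    have hsub : ∀ U ∈ 𝒰, U ⊆ O := by
      rintro U ⟨⟨x, -, rfl⟩, -⟩
      exact connectedComponentIn_subset _ _
    have hUo : ∀ U ∈ 𝒰, IsOpen U := by
      rintro U ⟨⟨x, -, rfl⟩, -⟩
      exact hOo.connectedComponentIn
    have hcard : Fintype.card T' ≤ (2 * (2 * D) + 1) ^ 2 := by
      refine card_le_of_separated g hgd (fun U : T' => stereoInv a ⁻¹' U.1)
        (fun U => (hUo _ (hT'𝒰 _ U.2)).preimage (continuous_stereoInv a)) ?_ ?_ ?_
      · intro U U' x hx hx'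
        apply Subtype.ext
        rw [hcomp _ (hT'𝒰 _ U.2) _ hx, hcomp _ (hT'𝒰 _ U'.2) _ hx']
      · intro U
        obtain ⟨y, hyU, hy⟩ := (hT'𝒰 _ U.2).2
        have hne : y ≠ pole := by
          rintro rfl
          exact (Finset.mem_erase.1 U.2).1 (hcomp _ (hT'𝒰 _ U.2) _ hyU)
        obtain ⟨x, rfl⟩ := exists_stereoInv_eq hy hne
        exact ⟨x, hyU, fun h => (hg0 x).1 h (hsub _ (hT'𝒰 _ U.2) hyU)⟩
      · intro U x hx hxU
        rw [hg0]
        intro hxO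
        -- The component of the limit point is an open set meeting `U`, hence equals `U`.
        have hnhd : stereoInv a ⁻¹' connectedComponentIn O (stereoInv a x) ∈ nhds x :=
          (hOo.connectedComponentIn.preimage (continuous_stereoInv a)).mem_nhds
            (mem_connectedComponentIn hxO)
        obtain ⟨z, hz, hzU⟩ := mem_closure_iff_nhds.1 hx _ hnhd
        apply hxU
        rw [Set.mem_preimage, hcomp _ (hT'𝒰 _ U.2) _ hzU, ← connectedComponentIn_eq hz]
        exact mem_connectedComponentIn hxO
    rw [Fintype.card_coe] at hcard
    have h1 : T.card ≤ T'.card + 1 := by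
      have := Finset.pred_card_le_card_erase (s := T) (a := connectedComponentIn O pole)
      rw [hT']
      omega
    nlinarith
  have hfin : 𝒰.Finite := by
    by_contra h
    obtain ⟨T, hT, hTc⟩ := Set.Infinite.exists_subset_card_eq h (26 * D ^ 2 + 1)
    have := hbound T hT
    omega
  refine ⟨hfin, ?_⟩
  have := hbound hfin.toFinset (by simp)
  rw [Set.ncard_eq_toFinset_card _ hfin]
  exact_mod_cast this
end
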